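/- Let G be a graph in the class 𝒞, let C be a minimal separator of G of size at least 2 that is an independent set, and let A and B be components of G∖C that are full to C. Then there exist two vertices x, y in C and chordless paths P_A from x to y with interior in A and P_B from x to y with interior in B such that every vertex of C∖{x,y} has neighbors in the interior of both P_A and P_B, V(P_A) ∪ V(P_B) induces a hole H, and (H, C∖{x,y}) is a (|C|−2)-span-wheel. -/

import Mathlib

open SimpleGraph

variable {V : Type} [Fintype V] [DecidableEq V]

/-- `p` is a chordless (induced) path in `G`: a path such that the only edges of `G`
between its vertices are the edges of the path. -/
def IsInducedPathW (G : SimpleGraph V) {a b : V} (p : G.Walk a b) : Prop :=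
  p.IsPath ∧ ∀ u v : V, u ∈ p.support → v ∈ p.support → G.Adj u v → p.toSubgraph.Adj u v

/-- A hole of length `n` in `G`: an induced (chordless) cycle of length `n ≥ 4`,
given by an injection of `ZMod n` into `G` whose adjacencies are exactly the consecutive ones. -/
def IsHoleEmb (G : SimpleGraph V) (n : ℕ) (f : ZMod n → V) : Prop :=
  4 ≤ n ∧ Function.Injective f ∧
    ∀ i j : ZMod n, G.Adj (f i) (f j) ↔ (j = i + 1 ∨ i = j + 1)

/-- `G` contains an even hole (induced even cycle of length at least 4). -/
def ContainsEvenHole (G : SimpleGraph V) : Prop :=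
  ∃ (n : ℕ) (f : ZMod n → V), IsHoleEmb G n f ∧ Even n

/-- `G` contains a square (hole of length 4). -/
def ContainsSquare (G : SimpleGraph V) : Prop :=
  ∃ f : ZMod 4 → V, IsHoleEmb G 4 f

/-- `G` contains a theta as an induced subgraph: three internally vertex-disjoint chordless
paths from `a` to `b`, each of length at least 2, with no edges between the paths other than
those incident to `a` or `b` specified by the paths. -/
def ContainsTheta (G : SimpleGraph V) : Prop :=
  ∃ (a b : V) (p₁ p₂ p₃ : G.Walk a b),
    (IsInducedPathW G p₁ ∧ IsInducedPathW G p₂ ∧ IsInducedPathW G p₃) ∧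
    (2 ≤ p₁.length ∧ 2 ≤ p₂.length ∧ 2 ≤ p₃.length) ∧
    (∀ w : V, ((w ∈ p₁.support ∧ w ∈ p₂.support) ∨ (w ∈ p₁.support ∧ w ∈ p₃.support) ∨
          (w ∈ p₂.support ∧ w ∈ p₃.support)) → (w = a ∨ w = b)) ∧
    (∀ u w : V, u ≠ a → u ≠ b → w ≠ a → w ≠ b →
      ((u ∈ p₁.support ∧ w ∈ p₂.support) ∨ (u ∈ p₁.support ∧ w ∈ p₃.support) ∨
       (u ∈ p₂.support ∧ w ∈ p₃.support)) → ¬G.Adj u w)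

/-- `G` contains a prism as an induced subgraph. -/
def ContainsPrism (G : SimpleGraph V) : Prop :=
  ∃ (a₁ b₁ a₂ b₂ a₃ b₃ : V) (p₁ : G.Walk a₁ b₁) (p₂ : G.Walk a₂ b₂) (p₃ : G.Walk a₃ b₃),
    (IsInducedPathW G p₁ ∧ IsInducedPathW G p₂ ∧ IsInducedPathW G p₃) ∧
    (1 ≤ p₁.length ∧ 1 ≤ p₂.length ∧ 1 ≤ p₃.length) ∧
    (G.Adj a₁ a₂ ∧ G.Adj a₂ a₃ ∧ G.Adj a₁ a₃) ∧
    (G.Adj b₁ b₂ ∧ G.Adj b₂ b₃ ∧ G.Adj b₁ b₃) ∧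
    (∀ w : V, ¬(w ∈ p₁.support ∧ w ∈ p₂.support) ∧ ¬(w ∈ p₁.support ∧ w ∈ p₃.support) ∧
          ¬(w ∈ p₂.support ∧ w ∈ p₃.support)) ∧
    (∀ u w : V, u ∈ p₁.support → w ∈ p₂.support → G.Adj u w →
      (u = a₁ ∧ w = a₂) ∨ (u = b₁ ∧ w = b₂)) ∧
    (∀ u w : V, u ∈ p₁.support → w ∈ p₃.support → G.Adj u w →
      (u = a₁ ∧ w = a₃) ∨ (u = b₁ ∧ w = b₃)) ∧
    (∀ u w : V, u ∈ p₂.support → w ∈ p₃.support → G.Adj u w →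
      (u = a₂ ∧ w = a₃) ∨ (u = b₂ ∧ w = b₃))

/-- `G` contains a pyramid as an induced subgraph. -/
def ContainsPyramid (G : SimpleGraph V) : Prop :=
  ∃ (a b₁ b₂ b₃ : V) (p₁ : G.Walk a b₁) (p₂ : G.Walk a b₂) (p₃ : G.Walk a b₃),
    (IsInducedPathW G p₁ ∧ IsInducedPathW G p₂ ∧ IsInducedPathW G p₃) ∧
    (1 ≤ p₁.length ∧ 1 ≤ p₂.length ∧ 1 ≤ p₃.length) ∧
    ((2 ≤ p₁.length ∧ 2 ≤ p₂.length) ∨ (2 ≤ p₁.length ∧ 2 ≤ p₃.length) ∨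
     (2 ≤ p₂.length ∧ 2 ≤ p₃.length)) ∧
    (G.Adj b₁ b₂ ∧ G.Adj b₂ b₃ ∧ G.Adj b₁ b₃) ∧
    (∀ w : V, ((w ∈ p₁.support ∧ w ∈ p₂.support) ∨ (w ∈ p₁.support ∧ w ∈ p₃.support) ∨
          (w ∈ p₂.support ∧ w ∈ p₃.support)) → w = a) ∧
    (∀ u w : V, u ∈ p₁.support → w ∈ p₂.support → u ≠ a → w ≠ a → G.Adj u w →
      u = b₁ ∧ w = b₂) ∧
    (∀ u w : V, u ∈ p₁.support → w ∈ p₃.support → u ≠ a → w ≠ a → G.Adj u w →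
      u = b₁ ∧ w = b₃) ∧
    (∀ u w : V, u ∈ p₂.support → w ∈ p₃.support → u ≠ a → w ≠ a → G.Adj u w →
      u = b₂ ∧ w = b₃)

/-- `G` contains the cube as an induced subgraph: a hole of length 6 together with
two non-adjacent vertices `u, v` outside it, `u` adjacent to the even positions and
`v` adjacent to the odd positions. -/
def ContainsCube (G : SimpleGraph V) : Prop :=
  ∃ (f : ZMod 6 → V) (u v : V), IsHoleEmb G 6 f ∧
    u ∉ Set.range f ∧ v ∉ Set.range f ∧ ¬G.Adj u v ∧
    (∀ m : ZMod 6, G.Adj u (f m) ↔ (m = 0 ∨ m = 2 ∨ m = 4)) ∧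
    (∀ m : ZMod 6, G.Adj v (f m) ↔ (m = 1 ∨ m = 3 ∨ m = 5))

/-- `G` contains an even wheel: a hole plus a vertex outside it having at least 3 and
an even number of neighbors on the hole. -/
def ContainsEvenWheel (G : SimpleGraph V) : Prop :=
  ∃ (n : ℕ) (f : ZMod n → V) (u : V), IsHoleEmb G n f ∧ u ∉ Set.range f ∧
    3 ≤ {m : ZMod n | G.Adj u (f m)}.ncard ∧ Even {m : ZMod n | G.Adj u (f m)}.ncard

/-- `G` contains a butterfly: a wheel `(H,v)` with `N_H(v) = {a,b,c,d}`,
`ab, cd ∈ E(G)` and `bc, da ∉ E(G)`. -/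
def ContainsButterfly (G : SimpleGraph V) : Prop :=
  ∃ (n : ℕ) (f : ZMod n → V) (u : V), IsHoleEmb G n f ∧ u ∉ Set.range f ∧
    ∃ i j : ZMod n, i ≠ j ∧ i ≠ j + 1 ∧ i + 1 ≠ j ∧ i + 1 ≠ j + 1 ∧
      ¬G.Adj (f (i + 1)) (f j) ∧ ¬G.Adj (f (j + 1)) (f i) ∧
      (∀ m : ZMod n, G.Adj u (f m) ↔ (m = i ∨ m = i + 1 ∨ m = j ∨ m = j + 1))

/-- A 2-wheel in `G`: a hole `f` together with two distinct centers `u, v` outside the hole,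
each having at least three neighbors on the hole. -/
def Is2WheelCfg (G : SimpleGraph V) (n : ℕ) (f : ZMod n → V) (u v : V) : Prop :=
  IsHoleEmb G n f ∧ u ≠ v ∧ u ∉ Set.range f ∧ v ∉ Set.range f ∧
  3 ≤ {m : ZMod n | G.Adj u (f m)}.ncard ∧ 3 ≤ {m : ZMod n | G.Adj v (f m)}.ncard

/-- The 2-wheel `(f, {u,v})` is nested: the hole splits at `f i` and `f (i+d)` into two arcs,
with all neighbors of `u` on one arc and all neighbors of `v` on the other. -/
def NestedCfg (G : SimpleGraph V) (n : ℕ) (f : ZMod n → V) (u v : V) : Prop :=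
  ∃ (i : ZMod n) (d : ℕ), 1 ≤ d ∧ d < n ∧
    (∀ m : ZMod n, G.Adj u (f m) → ∃ e : ℕ, e ≤ d ∧ m = i + (e : ZMod n)) ∧
    (∀ m : ZMod n, G.Adj v (f m) → ∃ e : ℕ, e ≤ n - d ∧ m = i + (d : ZMod n) + (e : ZMod n))

/-- The 2-wheel `(f, {u,v})` is the cube. -/
def CubeCfg (G : SimpleGraph V) (n : ℕ) (f : ZMod n → V) (u v : V) : Prop :=
  n = 6 ∧ ∃ i : ZMod n,
    (∀ m : ZMod n, G.Adj u (f m) ↔ (m = i ∨ m = i + 2 ∨ m = i + 4)) ∧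
    (∀ m : ZMod n, G.Adj v (f m) ↔ (m = i + 1 ∨ m = i + 3 ∨ m = i + 5))

/-- The 2-wheel `(f, {u,v})` is a cousin wheel: `N_H(u) = {h₁,h₂,h₃}` and
`N_H(v) = {h₂,h₃,h₄}` for four consecutive vertices of the hole (or with `u, v` swapped). -/
def CousinCfg (G : SimpleGraph V) (n : ℕ) (f : ZMod n → V) (u v : V) : Prop :=
  (∃ i : ZMod n,
    (∀ m : ZMod n, G.Adj u (f m) ↔ (m = i ∨ m = i + 1 ∨ m = i + 2)) ∧
    (∀ m : ZMod n, G.Adj v (f m) ↔ (m = i + 1 ∨ m = i + 2 ∨ m = i + 3))) ∨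
  (∃ i : ZMod n,
    (∀ m : ZMod n, G.Adj v (f m) ↔ (m = i ∨ m = i + 1 ∨ m = i + 2)) ∧
    (∀ m : ZMod n, G.Adj u (f m) ↔ (m = i + 1 ∨ m = i + 2 ∨ m = i + 3)))

/-- A `u`-sector of the hole `f`: a subpath from `f i` to `f (i+d)` (`1 ≤ d < n`)
whose two ends are adjacent to `u` and whose internal vertices are not. -/
def IsSector (G : SimpleGraph V) (n : ℕ) (f : ZMod n → V) (u : V) (i : ZMod n) (d : ℕ) : Prop :=
  1 ≤ d ∧ d < n ∧ G.Adj u (f i) ∧ G.Adj u (f (i + (d : ZMod n))) ∧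
    ∀ m : ℕ, 0 < m → m < d → ¬G.Adj u (f (i + (m : ZMod n)))

/-- The class 𝒞: (theta, prism, pyramid, butterfly)-free graphs in which every 2-wheel
with non-adjacent centers is a nested wheel or a cousin wheel. -/
def InClassC (G : SimpleGraph V) : Prop :=
  ¬ContainsTheta G ∧ ¬ContainsPrism G ∧ ¬ContainsPyramid G ∧ ¬ContainsButterfly G ∧
  ∀ (n : ℕ) (f : ZMod n → V) (u v : V), Is2WheelCfg G n f u v → ¬G.Adj u v →
    (NestedCfg G n f u v ∨ CousinCfg G n f u v)

/-- `G` contains `S_{k,k,k}` as an induced subgraph: a root `r` and three legs of `k` edges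
each, with no other adjacencies among these vertices. -/
def ContainsSpider (G : SimpleGraph V) (k : ℕ) : Prop :=
  ∃ (r : V) (f : Fin 3 → Fin k → V),
    (∀ (j : Fin 3) (m : Fin k), f j m ≠ r) ∧
    (∀ (j₁ : Fin 3) (m₁ : Fin k) (j₂ : Fin 3) (m₂ : Fin k),
      f j₁ m₁ = f j₂ m₂ → j₁ = j₂ ∧ m₁ = m₂) ∧
    (∀ (j : Fin 3) (m : Fin k), G.Adj r (f j m) ↔ (m : ℕ) = 0) ∧
    (∀ (j₁ : Fin 3) (m₁ : Fin k) (j₂ : Fin 3) (m₂ : Fin k),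
      G.Adj (f j₁ m₁) (f j₂ m₂) ↔
        (j₁ = j₂ ∧ ((m₁ : ℕ) + 1 = (m₂ : ℕ) ∨ (m₂ : ℕ) + 1 = (m₁ : ℕ))))

/-- A `k`-span-wheel in `G`: a hole `f` of length `n`, with `x = f 0` and `y = f p`
non-adjacent, the two paths `P_A = f 0, f 1, …, f p` and `P_B = f 0, f (n-1), …, f p`,
and centers `c 0, …, c (k-1)` outside the hole such that `{c i} ∪ {x,y}` is independent,
every center has at least three neighbors on the hole and neighbors in the interiors of
both `P_A` and `P_B`, and the neighbors of the centers appear along both `P_A` and `P_B`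
(from `x` to `y`) in the order of the centers. -/
def IsSpanWheel (G : SimpleGraph V) (k n p : ℕ) (f : ZMod n → V) (c : Fin k → V) : Prop :=
  IsHoleEmb G n f ∧
  2 ≤ p ∧ p ≤ n - 2 ∧
  ¬G.Adj (f 0) (f (p : ZMod n)) ∧
  Function.Injective c ∧
  (∀ i : Fin k, c i ∉ Set.range f) ∧
  (∀ i j : Fin k, i ≠ j → ¬G.Adj (c i) (c j)) ∧
  (∀ i : Fin k, ¬G.Adj (c i) (f 0)) ∧
  (∀ i : Fin k, ¬G.Adj (c i) (f (p : ZMod n))) ∧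
  (∀ i : Fin k, 3 ≤ {m : ZMod n | G.Adj (c i) (f m)}.ncard) ∧
  (∀ i : Fin k, ∃ a : ℕ, 0 < a ∧ a < p ∧ G.Adj (c i) (f (a : ZMod n))) ∧
  (∀ i : Fin k, ∃ b : ℕ, p < b ∧ b < n ∧ G.Adj (c i) (f (b : ZMod n))) ∧
  (∀ i j : Fin k, i < j → ∀ a₁ a₂ : ℕ, a₁ ≤ p → a₂ ≤ p →
    G.Adj (c i) (f (a₁ : ZMod n)) → G.Adj (c j) (f (a₂ : ZMod n)) → a₁ ≤ a₂) ∧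
  (∀ i j : Fin k, i < j → ∀ b₁ b₂ : ℕ, p ≤ b₁ → b₁ ≤ n → p ≤ b₂ → b₂ ≤ n →
    G.Adj (c i) (f (b₁ : ZMod n)) → G.Adj (c j) (f (b₂ : ZMod n)) → b₂ ≤ b₁)

/-- `X` separates `s` from `t` in `G`: neither is in `X` and every walk from `s` to `t`
meets `X`. -/
def Separates (G : SimpleGraph V) (X : Set V) (s t : V) : Prop :=
  s ∉ X ∧ t ∉ X ∧ ∀ p : G.Walk s t, ∃ w ∈ p.support, w ∈ X

/-- `X` is a minimal separator of `G`: for some pair `s, t` it is an inclusion-wise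
minimal `st`-separator. -/
def MinSeparator (G : SimpleGraph V) (X : Set V) : Prop :=
  ∃ s t : V, Separates G X s t ∧ ∀ Y ⊆ X, Separates G Y s t → Y = X

/-- `A` is a connected component of `G ∖ C` that is full to `C`. -/
def IsFullComponent (G : SimpleGraph V) (C A : Set V) : Prop :=
  A.Nonempty ∧ Disjoint A C ∧ (G.induce A).Connected ∧
  (∀ a ∈ A, ∀ w : V, G.Adj a w → w ∈ A ∪ C) ∧
  (∀ x ∈ C, ∃ a ∈ A, G.Adj x a)

/-- A tree decomposition of `G` with tree `T` and bags `B`. -/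
def IsTreeDecomp (G : SimpleGraph V) {ι : Type} (T : SimpleGraph ι) (B : ι → Finset V) : Prop :=
  T.IsTree ∧
  (∀ v : V, ∃ i, v ∈ B i) ∧
  (∀ u v : V, G.Adj u v → ∃ i, u ∈ B i ∧ v ∈ B i) ∧
  (∀ (v : V) (i j : ι), v ∈ B i → v ∈ B j →
    ∀ (p : T.Walk i j), p.IsPath → ∀ x ∈ p.support, v ∈ B x)

/-- The treewidth of a finite graph: the least `w` such that `G` has a tree decomposition
all of whose bags have size at most `w + 1`. -/
noncomputable def treewidth (G : SimpleGraph V) : ℕ :=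
  sInf {w : ℕ | ∃ (m : ℕ) (T : SimpleGraph (Fin m)) (B : Fin m → Finset V),
    IsTreeDecomp G T B ∧ ∀ i, (B i).card ≤ w + 1}

/-- A graph is chordal iff it has no hole. -/
def IsChordal (G : SimpleGraph V) : Prop :=
  ¬∃ (n : ℕ) (f : ZMod n → V), IsHoleEmb G n f

/-- `H` is obtained from `G` by a minimal fill-in (minimal chordal completion). -/
def IsMinimalChordalCompletion (G H : SimpleGraph V) : Prop :=
  G ≤ H ∧ IsChordal H ∧ ∀ H' : SimpleGraph V, G ≤ H' → H' ≤ H → IsChordal H' → H' = H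

/-- `Ω` is a potential maximal clique of `G`: a maximal clique of some minimal chordal
completion of `G`. -/
def IsPMC (G : SimpleGraph V) (Ω : Set V) : Prop :=
  ∃ H : SimpleGraph V, IsMinimalChordalCompletion G H ∧ H.IsClique Ω ∧
    ∀ Ω' : Set V, H.IsClique Ω' → Ω ⊆ Ω' → Ω' = Ω

/-- `n` satisfies the Ramsey property for `(t, k)`: every graph on `n` vertices has a
clique of size `t` or an independent set of size `k`. -/
def RamseyProp (n t k : ℕ) : Prop :=
  ∀ G : SimpleGraph (Fin n),
    (∃ S : Finset (Fin n), G.IsNClique t S) ∨ (∃ S : Finset (Fin n), Gᶜ.IsNClique k S)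

/-- The Ramsey number `R(t, k)`. -/
noncomputable def ramseyNumber (t k : ℕ) : ℕ := sInf {n : ℕ | RamseyProp n t k}

/-!
Shrink the two full components to minimal connected sets `A` and `B` in which every vertex of `C`
still has a neighbor. Any three vertices of `C` are the feet of a tripod in `A`, that is, a
subdivided claw or three paths attached to a triangle, and likewise in `B`. Two tripods with the
same feet form a theta, a pyramid or a prism, unless they share a corner or have single, adjacent
corners. This forces each of `A` and `B` to be a single vertex or an induced path whose two ends are
the only neighbors there of two vertices of `C`, and the condition on 2-wheels lets the same two
vertices `x`, `y` serve on both sides. Then `A` and `B` are the interiors of two paths from `x` to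
`y` that form a hole, every other vertex of `C` is the center of a wheel over this hole, and any two
of these centers, being nested, are attached one after the other along both paths.
-/

variable {α : Type} {G : SimpleGraph α}

/-! ### Induced paths -/

/-- `p 0, …, p n` is an induced path of `G`; the values of `p` beyond `n` are irrelevant. -/
structure IsInducedPathSeq (G : SimpleGraph α) (n : ℕ) (p : ℕ → α) : Prop where
  inj : ∀ i ≤ n, ∀ j ≤ n, p i = p j → i = j
  consecutive : ∀ i ≤ n, ∀ j ≤ n, G.Adj (p i) (p j) → j = i + 1 ∨ i = j + 1
  adj_succ : ∀ i < n, G.Adj (p i) (p (i + 1))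

/-- `S` is the vertex set of an induced path of `G` from `a` to `b`. Working with vertex sets
lets paths be cut and glued by set operations. -/
def IsInducedPathSet (G : SimpleGraph α) (a b : α) (S : Set α) : Prop :=
  ∃ (n : ℕ) (p : ℕ → α), IsInducedPathSeq G n p ∧ p 0 = a ∧ p n = b ∧ S = p '' Set.Iic n

namespace IsInducedPathSeq

variable {n m : ℕ} {p q : ℕ → α}

lemma shift (hp : IsInducedPathSeq G n p) {i k : ℕ} (hik : i + k ≤ n) :
    IsInducedPathSeq G k fun j => p (i + j) where
  inj a ha b hb hab := by
    have := hp.inj (i + a) (by omega) (i + b) (by omega) hab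
    omega
  consecutive a ha b hb hab := by
    have := hp.consecutive (i + a) (by omega) (i + b) (by omega) hab
    omega
  adj_succ a ha := hp.adj_succ (i + a) (by omega)

lemma reverse (hp : IsInducedPathSeq G n p) : IsInducedPathSeq G n fun k => p (n - k) where
  inj a ha b hb hab := by
    have := hp.inj (n - a) (by omega) (n - b) (by omega) hab
    omega
  consecutive a ha b hb hab := by
    have := hp.consecutive (n - a) (by omega) (n - b) (by omega) hab
    omega
  adj_succ a ha := by
    have := hp.adj_succ (n - (a + 1)) (by omega)
    rw [show n - (a + 1) + 1 = n - a by omega] at this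
    exact this.symm

lemma concat (hp : IsInducedPathSeq G n p) (hq : IsInducedPathSeq G m q) (hpq : p n = q 0)
    (hne : ∀ i < n, ∀ j ≤ m, 0 < j → p i ≠ q j)
    (hadj : ∀ i < n, ∀ j ≤ m, 0 < j → ¬ G.Adj (p i) (q j)) :
    IsInducedPathSeq G (n + m) fun k => if k ≤ n then p k else q (k - n) := by
  have hne' : ∀ i ≤ n, ∀ j ≤ m, 0 < j → p i ≠ q j := by
    intro i hi j hj hj0 heq
    rcases hi.lt_or_eq with hi | rfl
    · exact hne i hi j hj hj0 heq
    · exact hj0.ne (hq.inj 0 (Nat.zero_le _) j hj (hpq ▸ heq))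
  have hadj' : ∀ i ≤ n, ∀ j ≤ m, 0 < j → G.Adj (p i) (q j) → i = n ∧ j = 1 := by
    intro i hi j hj hj0 hij
    rcases hi.lt_or_eq with hi | rfl
    · exact absurd hij (hadj i hi j hj hj0)
    · have := hq.consecutive 0 (Nat.zero_le _) j hj (hpq ▸ hij)
      omega
  refine ⟨fun i hi j hj hij => ?_, fun i hi j hj hij => ?_, fun i hi => ?_⟩
  · rcases le_or_gt i n with hin | hin <;> rcases le_or_gt j n with hjn | hjn <;>
      simp only [hin, hjn, not_le.2, if_true, if_false] at hij
    · exact hp.inj i hin j hjn hij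
    · exact absurd hij (hne' i hin _ (by omega) (by omega))
    · exact absurd hij.symm (hne' j hjn _ (by omega) (by omega))
    · have := hq.inj _ (by omega) _ (by omega) hij
      omega
  · rcases le_or_gt i n with hin | hin <;> rcases le_or_gt j n with hjn | hjn <;>
      simp only [hin, hjn, not_le.2, if_true, if_false] at hij
    · exact hp.consecutive i hin j hjn hij
    · have := hadj' i hin _ (by omega) (by omega) hij
      omega
    · have := hadj' j hjn _ (by omega) (by omega) hij.symm
      omega
    · have := hq.consecutive _ (by omega) _ (by omega) hij
      omega
  · rcases lt_trichotomy i n with hin | rfl | hin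
    · simpa only [hin.le, Nat.succ_le_of_lt hin, if_true] using hp.adj_succ i hin
    · simpa [hpq] using hq.adj_succ 0 (by omega)
    · have := hq.adj_succ (i - n) (by omega)
      rw [← Nat.sub_add_comm hin.le] at this
      simpa only [show ¬ i ≤ n by omega, show ¬ i + 1 ≤ n by omega, if_false] using this

lemma isInducedPathSet_Icc (hp : IsInducedPathSeq G n p) {i j : ℕ} (hij : i ≤ j) (hj : j ≤ n) :
    IsInducedPathSet G (p i) (p j) (p '' Set.Icc i j) := by
  refine ⟨j - i, _, hp.shift (i := i) (by omega), rfl, by simp [Nat.add_sub_cancel' hij], ?_⟩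
  ext v
  constructor
  · rintro ⟨k, ⟨hik, hkj⟩, rfl⟩
    exact ⟨k - i, Nat.sub_le_sub_right hkj i, by simp [Nat.add_sub_cancel' hik]⟩
  · rintro ⟨k, hk, rfl⟩
    have := Set.mem_Iic.1 hk
    exact ⟨i + k, ⟨by omega, by omega⟩, rfl⟩

lemma exists_walk (h : ∀ i < n, G.Adj (p i) (p (i + 1))) :
    ∃ w : G.Walk (p 0) (p n), w.length = n ∧ ∀ i ≤ n, w.getVert i = p i := by
  induction n generalizing p with
  | zero => exact ⟨Walk.nil, rfl, fun i hi => by rw [Nat.le_zero.1 hi, Walk.getVert_zero]⟩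
  | succ n ih =>
    obtain ⟨w, hlen, hw⟩ := ih (p := fun k => p (k + 1)) fun i hi => h (i + 1) (by omega)
    refine ⟨Walk.cons (h 0 n.succ_pos) w, by simp [hlen], fun i hi => ?_⟩
    cases i with
    | zero => simp
    | succ i => simpa using hw i (by omega)

lemma exists_isInducedPathW (hp : IsInducedPathSeq G n p) :
    ∃ w : G.Walk (p 0) (p n), IsInducedPathW G w ∧ ∀ v, v ∈ w.support ↔ v ∈ p '' Set.Iic n := by
  obtain ⟨w, hlen, hw⟩ := exists_walk hp.adj_succ
  have hsupp : ∀ v, v ∈ w.support ↔ v ∈ p '' Set.Iic n := fun v => by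
    rw [Walk.mem_support_iff_exists_getVert, hlen]
    exact ⟨fun ⟨i, hv, hi⟩ => ⟨i, hi, hw i hi ▸ hv⟩, fun ⟨i, hi, hv⟩ => ⟨i, hw i hi ▸ hv, hi⟩⟩
  have hsub : ∀ i < n, w.toSubgraph.Adj (p i) (p (i + 1)) := fun i hi => by
    rw [← hw i hi.le, ← hw (i + 1) hi]
    exact w.toSubgraph_adj_getVert (hlen.symm ▸ hi)
  refine ⟨w, ⟨?_, fun u v hu hv huv => ?_⟩, hsupp⟩
  · rw [← Walk.IsPath.getVert_injOn_iff, hlen]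
    intro i hi j hj hij
    exact hp.inj i hi j hj (by rwa [← hw i hi, ← hw j hj])
  · obtain ⟨i, hi, rfl⟩ := (hsupp u).1 hu
    obtain ⟨j, hj, rfl⟩ := (hsupp v).1 hv
    rcases hp.consecutive i hi j hj huv with rfl | rfl
    · exact hsub i hj
    · exact (hsub j hi).symm

end IsInducedPathSeq

namespace IsInducedPathSet

variable {a b c : α} {S T : Set α}

lemma left_mem (h : IsInducedPathSet G a b S) : a ∈ S := by
  obtain ⟨n, p, -, rfl, -, rfl⟩ := h
  exact ⟨0, n.zero_le, rfl⟩

lemma symm (h : IsInducedPathSet G a b S) : IsInducedPathSet G b a S := by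
  obtain ⟨n, p, hp, rfl, rfl, rfl⟩ := h
  refine ⟨n, _, hp.reverse, rfl, by simp, ?_⟩
  ext v
  constructor
  · rintro ⟨k, hk, rfl⟩
    exact ⟨n - k, Nat.sub_le n k, by simp [Nat.sub_sub_self hk]⟩
  · rintro ⟨k, -, rfl⟩
    exact ⟨n - k, Nat.sub_le n k, rfl⟩

lemma right_mem (h : IsInducedPathSet G a b S) : b ∈ S := h.symm.left_mem

lemma singleton (a : α) : IsInducedPathSet G a a {a} :=
  ⟨0, fun _ => a, ⟨fun _ _ _ _ _ => by omega, fun _ _ _ _ h => absurd h G.irrefl,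
    fun _ hi => absurd hi (Nat.not_lt_zero _)⟩, rfl, rfl,
    (Set.nonempty_Iic.image_const a).symm⟩

lemma append (hS : IsInducedPathSet G a b S) (hT : IsInducedPathSet G b c T)
    (hmeet : ∀ v ∈ S, v ∈ T → v = b)
    (hadj : ∀ u ∈ S, ∀ v ∈ T, u ≠ b → v ≠ b → ¬ G.Adj u v) :
    IsInducedPathSet G a c (S ∪ T) := by
  obtain ⟨n, p, hp, rfl, hpn, rfl⟩ := hS
  obtain ⟨m, q, hq, rfl, rfl, rfl⟩ := hT
  have hpb : ∀ i < n, p i ≠ q 0 := fun i hi h => hi.ne (hp.inj i hi.le n le_rfl (h.trans hpn.symm))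
  have hqb : ∀ j ≤ m, 0 < j → q j ≠ q 0 := fun j hj hj0 h => hj0.ne' (hq.inj j hj 0 m.zero_le h)
  refine ⟨n + m, _, hp.concat hq hpn ?_ ?_, by simp, ?_, ?_⟩
  · exact fun i hi j hj _ h => hpb i hi (hmeet _ ⟨i, hi.le, rfl⟩ ⟨j, hj, h.symm⟩)
  · exact fun i hi j hj hj0 => hadj _ ⟨i, hi.le, rfl⟩ _ ⟨j, hj, rfl⟩ (hpb i hi) (hqb j hj hj0)
  · rcases m.eq_zero_or_pos with rfl | hm
    · simpa using hpn
    · simp [hm.ne']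
  · ext v
    constructor
    · rintro (⟨i, hi, rfl⟩ | ⟨j, hj, rfl⟩)
      · exact ⟨i, Nat.le_add_right_of_le hi, if_pos hi⟩
      · refine ⟨n + j, Nat.add_le_add_left hj n, ?_⟩
        rcases j.eq_zero_or_pos with rfl | hj0
        · simpa using hpn
        · simp [hj0.ne']
    · rintro ⟨i, hi, rfl⟩
      have := Set.mem_Iic.1 hi
      rcases le_or_gt i n with hin | hin
      · exact Or.inl ⟨i, hin, (if_pos hin).symm⟩
      · exact Or.inr ⟨i - n, Set.mem_Iic.2 (by omega), (if_neg hin.not_ge).symm⟩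

lemma pair (h : G.Adj a b) : IsInducedPathSet G a b {a, b} := by
  refine ⟨1, fun k => if k = 0 then a else b, ⟨fun i hi j hj hij => ?_, fun i hi j hj hij => ?_,
    fun i hi => ?_⟩, rfl, rfl, ?_⟩
  · have := h.ne
    grind
  · have := G.irrefl (v := a)
    have := G.irrefl (v := b)
    grind
  · simpa [Nat.lt_one_iff.1 hi] using h
  · ext v
    simp [Nat.le_one_iff_eq_zero_or_eq_one, or_and_right, exists_or, eq_comm]

lemma cons (h : IsInducedPathSet G b c S) (hab : G.Adj a b) (ha : a ∉ S)
    (hadj : ∀ v ∈ S, v ≠ b → ¬ G.Adj a v) : IsInducedPathSet G a c (insert a S) := by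
  have hunion : ({a, b} ∪ S : Set α) = insert a S := by
    rw [Set.insert_union, Set.singleton_union, Set.insert_eq_of_mem h.left_mem]
  rw [← hunion]
  refine (pair hab).append h ?_ ?_
  · rintro v (rfl | rfl) hv
    exacts [absurd hv ha, rfl]
  · rintro u (rfl | rfl) v hv hu hvb
    exacts [hadj v hv hvb, absurd rfl hu]

lemma exists_isInducedPathW (h : IsInducedPathSet G a b S) :
    ∃ w : G.Walk a b, IsInducedPathW G w ∧ ∀ v, v ∈ w.support ↔ v ∈ S := by
  obtain ⟨n, p, hp, rfl, rfl, rfl⟩ := h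
  exact hp.exists_isInducedPathW

lemma exists_adj_left (h : IsInducedPathSet G a b S) (hab : a ≠ b) : ∃ u ∈ S, G.Adj a u := by
  obtain ⟨n, p, hp, rfl, rfl, rfl⟩ := h
  have hn : 0 < n := Nat.pos_of_ne_zero fun hn => hab (by rw [hn])
  exact ⟨p 1, ⟨1, hn, rfl⟩, hp.adj_succ 0 hn⟩

end IsInducedPathSet

lemma one_le_length_of_ne {a b : α} (w : G.Walk a b) (hab : a ≠ b) : 1 ≤ w.length :=
  Nat.one_le_iff_ne_zero.2 fun h => hab (Walk.eq_of_length_eq_zero h)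

lemma two_le_length_of_not_adj {a b : α} (w : G.Walk a b) (hab : a ≠ b) (hadj : ¬ G.Adj a b) :
    2 ≤ w.length :=
  lt_of_le_of_ne (one_le_length_of_ne w hab) fun h => hadj (Walk.adj_of_length_eq_one h.symm)

/-! ### Three-path configurations -/

/-- The pair `(u, v)`, with `u` on a path starting at `a` and `v` on a path starting at `a'`, may be
an edge because of these starting points: either `(u, v) = (a, a')`, or the paths start at the same
vertex and `u` or `v` is that vertex. -/
def IsEndPair (a a' u v : α) : Prop :=
  (u = a ∧ v = a') ∨ (a = a' ∧ (u = a ∨ v = a'))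

/-- Three induced paths `P i` from `a i` to `b i` that meet, and are joined by edges, only at their
ends. Thetas, pyramids and prisms are the cases where each of `a`, `b` is constant or a triangle. -/
structure IsThreePathConfig (G : SimpleGraph α) (a b : Fin 3 → α) (P : Fin 3 → Set α) : Prop where
  path : ∀ i, IsInducedPathSet G (a i) (b i) (P i)
  meet : Pairwise fun i j => ∀ v ∈ P i, v ∈ P j → (v = a i ∧ v = a j) ∨ (v = b i ∧ v = b j)
  edge : Pairwise fun i j => ∀ u ∈ P i, ∀ v ∈ P j, G.Adj u v →
    IsEndPair (a i) (a j) u v ∨ IsEndPair (b i) (b j) u v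

lemma pairwise_fin_three {r : Fin 3 → Fin 3 → Prop} (hr : ∀ i j, r i j → r j i)
    (h01 : r 0 1) (h02 : r 0 2) (h12 : r 1 2) : Pairwise r := by
  intro i j hij
  fin_cases i <;> fin_cases j <;> first | exact absurd rfl hij | assumption | (apply hr; assumption)

lemma IsEndPair.symm {a a' u v : α} (h : IsEndPair a a' u v) : IsEndPair a' a v u := by
  rcases h with ⟨rfl, rfl⟩ | ⟨rfl, h⟩
  exacts [Or.inl ⟨rfl, rfl⟩, Or.inr ⟨rfl, h.symm⟩]

lemma isEndPair_self_iff {a u v : α} : IsEndPair a a u v ↔ u = a ∨ v = a := by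
  unfold IsEndPair; tauto

lemma isEndPair_iff_of_ne {a a' u v : α} (h : a ≠ a') : IsEndPair a a' u v ↔ u = a ∧ v = a' := by
  unfold IsEndPair; tauto

namespace IsThreePathConfig

variable {x y : α} {a b : Fin 3 → α} {P : Fin 3 → Set α}

lemma containsTheta (h : IsThreePathConfig G (fun _ => x) (fun _ => y) P) (hxy : x ≠ y)
    (hadj : ¬ G.Adj x y) : ContainsTheta G := by
  choose w hw hsupp using fun i => (h.path i).exists_isInducedPathW
  have hmeet : ∀ i j, i ≠ j → ∀ v ∈ P i, v ∈ P j → v = x ∨ v = y := fun i j hij v hi hj =>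
    (h.meet hij v hi hj).imp And.left And.left
  have hedge : ∀ i j, i ≠ j → ∀ u ∈ P i, ∀ v ∈ P j, u ≠ x → u ≠ y → v ≠ x → v ≠ y →
      ¬ G.Adj u v := by
    intro i j hij u hu v hv hux huy hvx hvy huv
    have := h.edge hij u hu v hv huv
    simp only [isEndPair_self_iff] at this
    tauto
  refine ⟨x, y, w 0, w 1, w 2, ⟨hw 0, hw 1, hw 2⟩, ⟨two_le_length_of_not_adj _ hxy hadj,
    two_le_length_of_not_adj _ hxy hadj, two_le_length_of_not_adj _ hxy hadj⟩, ?_, ?_⟩ <;>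
    simp only [hsupp]
  · rintro v (⟨hi, hj⟩ | ⟨hi, hj⟩ | ⟨hi, hj⟩) <;> exact hmeet _ _ (by decide) v hi hj
  · rintro u v hux huy hvx hvy (⟨hi, hj⟩ | ⟨hi, hj⟩ | ⟨hi, hj⟩) <;>
      exact hedge _ _ (by decide) u hi v hj hux huy hvx hvy

lemma containsPyramid (h : IsThreePathConfig G (fun _ => x) b P) (hne : ∀ i, x ≠ b i)
    (hb : Pairwise fun i j => G.Adj (b i) (b j))
    (hadj : Pairwise fun i j => G.Adj x (b i) → ¬ G.Adj x (b j)) : ContainsPyramid G := by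
  choose w hw hsupp using fun i => (h.path i).exists_isInducedPathW
  have hmeet : ∀ i j, i ≠ j → ∀ v ∈ P i, v ∈ P j → v = x := fun i j hij v hi hj =>
    (h.meet hij v hi hj).elim And.left fun hv => absurd (hv.1.symm.trans hv.2) (hb hij).ne
  have hedge : ∀ i j, i ≠ j → ∀ u ∈ P i, ∀ v ∈ P j, u ≠ x → v ≠ x → G.Adj u v →
      u = b i ∧ v = b j := by
    intro i j hij u hu v hv hux hvx huv
    have := h.edge hij u hu v hv huv
    rw [isEndPair_self_iff, isEndPair_iff_of_ne (hb hij).ne] at this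
    tauto
  have hlen : ∀ i j, i ≠ j → 2 ≤ (w i).length ∨ 2 ≤ (w j).length := fun i j hij => by
    by_cases hi : G.Adj x (b i)
    · exact Or.inr (two_le_length_of_not_adj _ (hne j) (hadj hij hi))
    · exact Or.inl (two_le_length_of_not_adj _ (hne i) hi)
  have h01 := hlen 0 1 (by decide)
  have h02 := hlen 0 2 (by decide)
  have h12 := hlen 1 2 (by decide)
  refine ⟨x, b 0, b 1, b 2, w 0, w 1, w 2, ⟨hw 0, hw 1, hw 2⟩, ⟨one_le_length_of_ne _ (hne 0),
    one_le_length_of_ne _ (hne 1), one_le_length_of_ne _ (hne 2)⟩, by tauto, ⟨hb (by decide),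
    hb (by decide), hb (by decide)⟩, ?_, ?_, ?_, ?_⟩ <;> simp only [hsupp]
  · rintro v (⟨hi, hj⟩ | ⟨hi, hj⟩ | ⟨hi, hj⟩) <;> exact hmeet _ _ (by decide) v hi hj
  all_goals exact fun u v hu hv => hedge _ _ (by decide) u hu v hv

lemma containsPrism (h : IsThreePathConfig G a b P) (hne : ∀ i, a i ≠ b i)
    (ha : Pairwise fun i j => G.Adj (a i) (a j)) (hb : Pairwise fun i j => G.Adj (b i) (b j)) :
    ContainsPrism G := by
  choose w hw hsupp using fun i => (h.path i).exists_isInducedPathW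
  have hmeet : ∀ i j, i ≠ j → ∀ v, ¬ (v ∈ P i ∧ v ∈ P j) := fun i j hij v ⟨hi, hj⟩ =>
    (h.meet hij v hi hj).elim (fun hv => (ha hij).ne (hv.1.symm.trans hv.2))
      fun hv => (hb hij).ne (hv.1.symm.trans hv.2)
  have hedge : ∀ i j, i ≠ j → ∀ u ∈ P i, ∀ v ∈ P j, G.Adj u v →
      (u = a i ∧ v = a j) ∨ (u = b i ∧ v = b j) := by
    intro i j hij u hu v hv huv
    have := h.edge hij u hu v hv huv
    rwa [isEndPair_iff_of_ne (ha hij).ne, isEndPair_iff_of_ne (hb hij).ne] at this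
  refine ⟨a 0, b 0, a 1, b 1, a 2, b 2, w 0, w 1, w 2, ⟨hw 0, hw 1, hw 2⟩,
    ⟨one_le_length_of_ne _ (hne 0), one_le_length_of_ne _ (hne 1), one_le_length_of_ne _ (hne 2)⟩,
    ⟨ha (by decide), ha (by decide), ha (by decide)⟩,
    ⟨hb (by decide), hb (by decide), hb (by decide)⟩, fun v => ?_, ?_, ?_, ?_⟩ <;>
    simp only [hsupp]
  · exact ⟨hmeet 0 1 (by decide) v, hmeet 0 2 (by decide) v, hmeet 1 2 (by decide) v⟩
  all_goals exact fun u v hu hv => hedge _ _ (by decide) u hu v hv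

end IsThreePathConfig

/-! ### Tripods -/

/-- Three induced paths (legs) `leg i` from the corners `a i` to the feet `t i`, with interior in
`D`, that meet and are joined by edges only at the corners. The corners either coincide, so that
the legs form a subdivided claw, or are the vertices of a triangle. A common corner may be one of
the feet. -/
structure IsTripod (G : SimpleGraph α) (D : Set α) (a t : Fin 3 → α) (leg : Fin 3 → Set α) :
    Prop where
  path : ∀ i, IsInducedPathSet G (a i) (t i) (leg i)
  subset : ∀ i, ∀ v ∈ leg i, v = a i ∨ v ∈ D ∨ v = t i
  corner : ∀ i, a i ∈ D ∨ ∃ j, a i = a j ∧ a i = t j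
  corners : (∀ i j, a i = a j) ∨ Pairwise fun i j => G.Adj (a i) (a j)
  meet : Pairwise fun i j => ∀ v ∈ leg i, v ∈ leg j → v = a i ∧ v = a j
  edge : Pairwise fun i j => ∀ u ∈ leg i, ∀ v ∈ leg j, G.Adj u v → IsEndPair (a i) (a j) u v

/-- `G` has a tripod with corners `a`, feet `t` and interior in `D`. -/
def HasTripod (G : SimpleGraph α) (D : Set α) (a t : Fin 3 → α) : Prop :=
  ∃ leg, IsTripod G D a t leg

/-- `C` is independent, and `A` and `B` are disjoint sets outside `C` with no edge between them. -/
structure IndepSeparation (G : SimpleGraph α) (C A B : Set α) : Prop where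
  indep : ∀ x ∈ C, ∀ y ∈ C, ¬ G.Adj x y
  left_not_mem : ∀ v ∈ A, v ∉ C
  right_not_mem : ∀ v ∈ B, v ∉ C
  disjoint : ∀ v ∈ A, v ∉ B
  not_adj : ∀ u ∈ A, ∀ v ∈ B, ¬ G.Adj u v

/-- `G` contains no theta, prism or pyramid. -/
structure ThreePathFree (G : SimpleGraph α) : Prop where
  theta : ¬ ContainsTheta G
  prism : ¬ ContainsPrism G
  pyramid : ¬ ContainsPyramid G

lemma IndepSeparation.symm {C A B : Set α} (h : IndepSeparation G C A B) :
    IndepSeparation G C B A :=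
  ⟨h.indep, h.right_not_mem, h.left_not_mem, fun v hB hA => h.disjoint v hA hB,
    fun u hu v hv huv => h.not_adj v hv u hu huv.symm⟩

lemma IndepSeparation.mono {C A B A' B' : Set α} (h : IndepSeparation G C A B) (hA : A' ⊆ A)
    (hB : B' ⊆ B) : IndepSeparation G C A' B' :=
  ⟨h.indep, fun v hv => h.left_not_mem v (hA hv), fun v hv => h.right_not_mem v (hB hv),
    fun v hv hv' => h.disjoint v (hA hv) (hB hv'), fun u hu v hv => h.not_adj u (hA hu) v (hB hv)⟩

namespace IsTripod

variable {D : Set α} {a t : Fin 3 → α} {leg : Fin 3 → Set α}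

lemma corners_eq_of_eq (h : IsTripod G D a t leg) {i j : Fin 3} (hij : i ≠ j) (haij : a i = a j)
    (k l : Fin 3) : a k = a l :=
  h.corners.elim (fun hc => hc k l) fun hc => absurd haij (hc hij).ne

lemma mem_or_of_ne_foot (h : IsTripod G D a t leg) {i : Fin 3} {v : α} (hv : v ∈ leg i)
    (hvt : v ≠ t i) : v ∈ D ∨ v = a i ∧ (∀ j k, a j = a k) ∧ ∃ j ≠ i, v = t j := by
  rcases h.subset i v hv with rfl | hvD | rfl
  · refine (h.corner i).imp_right fun ⟨j, haj, hat⟩ => ?_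
    have hij : i ≠ j := fun hij => hvt (hij ▸ hat)
    exact ⟨rfl, h.corners_eq_of_eq hij haj, j, hij.symm, hat⟩
  · exact Or.inl hvD
  · exact absurd rfl hvt

lemma foot_mem (h : IsTripod G D a t leg) (i : Fin 3) : t i ∈ leg i := (h.path i).right_mem

lemma perm (h : IsTripod G D a t leg) (σ : Equiv.Perm (Fin 3)) :
    IsTripod G D (a ∘ σ) (t ∘ σ) (leg ∘ σ) where
  path i := h.path (σ i)
  subset i := h.subset (σ i)
  corner i := (h.corner (σ i)).imp_right fun ⟨j, hj⟩ => ⟨σ.symm j, by simpa using hj⟩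
  corners := h.corners.imp (fun hc i j => hc (σ i) (σ j))
    fun hc _ _ hij => hc (σ.injective.ne hij)
  meet _ _ hij := h.meet (σ.injective.ne hij)
  edge _ _ hij := h.edge (σ.injective.ne hij)

variable {C A B : Set α} {b : Fin 3 → α} {X Y : Fin 3 → Set α}

lemma union_path (hX : IsTripod G A a t X) (hY : IsTripod G B b t Y) (h : IndepSeparation G C A B)
    (ht : ∀ i, t i ∈ C) (hab : ∀ i j, a i ≠ b j)
    (hadj : (∀ i j, a i = a j) → (∀ i j, b i = b j) → ¬ G.Adj (a 0) (b 0)) (i : Fin 3) :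
    IsInducedPathSet G (a i) (b i) (X i ∪ Y i) := by
  refine (hX.path i).append (hY.path i).symm (fun v hv hv' => ?_) fun u hu v hv hut hvt huv => ?_
  · by_contra hvt
    rcases hX.mem_or_of_ne_foot hv hvt with hvA | ⟨hva, -, j, -, hj⟩ <;>
      rcases hY.mem_or_of_ne_foot hv' hvt with hvB | ⟨hvb, -, k, -, hk⟩
    · exact h.disjoint v hvA hvB
    · exact h.left_not_mem v hvA (hk ▸ ht k)
    · exact h.right_not_mem v hvB (hj ▸ ht j)
    · exact hab i i (hva.symm.trans hvb)
  · rcases hX.mem_or_of_ne_foot hu hut with huA | ⟨hua, ha, j, hji, hj⟩ <;>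
      rcases hY.mem_or_of_ne_foot hv hvt with hvB | ⟨hvb, hb, k, hki, hk⟩
    · exact h.not_adj u huA v hvB huv
    · have := hX.edge hki.symm u hu v (hk ▸ hX.foot_mem k) huv
      have := hX.corners_eq_of_eq hki.symm
      grind [IsEndPair]
    · have := hY.edge hji.symm v hv u (hj ▸ hY.foot_mem j) huv.symm
      have := hY.corners_eq_of_eq hji.symm
      grind [IsEndPair]
    · exact h.indep u (hj ▸ ht j) v (hk ▸ ht k) huv

lemma meet_of_mem_of_mem (hX : IsTripod G A a t X) (hY : IsTripod G B b t Y)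
    (h : IndepSeparation G C A B) (ht : ∀ i, t i ∈ C) (hab : ∀ i j, a i ≠ b j) {i j : Fin 3}
    (hij : i ≠ j) {v : α} (hvX : v ∈ X i) (hvY : v ∈ Y j) :
    (v = a i ∧ v = a j) ∨ (v = b i ∧ v = b j) := by
  by_cases hvi : v = t i
  · exact Or.inr (hY.meet hij v (hvi ▸ hY.foot_mem i) hvY)
  by_cases hvj : v = t j
  · exact Or.inl (hX.meet hij v hvX (hvj ▸ hX.foot_mem j))
  exfalso
  rcases hX.mem_or_of_ne_foot hvX hvi with hvA | ⟨hva, -, k, -, hk⟩ <;>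
    rcases hY.mem_or_of_ne_foot hvY hvj with hvB | ⟨hvb, -, l, -, hl⟩
  · exact h.disjoint v hvA hvB
  · exact h.left_not_mem v hvA (hl ▸ ht l)
  · exact h.right_not_mem v hvB (hk ▸ ht k)
  · exact hab i j (hva.symm.trans hvb)

lemma isEndPair_of_adj (hX : IsTripod G A a t X) (hY : IsTripod G B b t Y)
    (h : IndepSeparation G C A B) {i j : Fin 3} (hij : i ≠ j) {u v : α} (hu : u ∈ X i)
    (hv : v ∈ Y j) (huv : G.Adj u v) :
    IsEndPair (a i) (a j) u v ∨ IsEndPair (b i) (b j) u v := by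
  by_cases hut : u = t i
  · exact Or.inr (hY.edge hij u (hut ▸ hY.foot_mem i) v hv huv)
  by_cases hvt : v = t j
  · exact Or.inl (hX.edge hij u hu v (hvt ▸ hX.foot_mem j) huv)
  rcases hX.mem_or_of_ne_foot hu hut with huA | ⟨hua, ha, -⟩
  · rcases hY.mem_or_of_ne_foot hv hvt with hvB | ⟨hvb, hb, -⟩
    · exact absurd huv (h.not_adj u huA v hvB)
    · exact Or.inr (Or.inr ⟨hb i j, Or.inr hvb⟩)
  · exact Or.inl (Or.inr ⟨ha i j, Or.inl hua⟩)

lemma union (hX : IsTripod G A a t X) (hY : IsTripod G B b t Y) (h : IndepSeparation G C A B)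
    (ht : ∀ i, t i ∈ C) (hab : ∀ i j, a i ≠ b j)
    (hadj : (∀ i j, a i = a j) → (∀ i j, b i = b j) → ¬ G.Adj (a 0) (b 0)) :
    IsThreePathConfig G a b fun i => X i ∪ Y i where
  path := hX.union_path hY h ht hab hadj
  meet i j hij v := by
    rintro (hi | hi) (hj | hj)
    · exact Or.inl (hX.meet hij v hi hj)
    · exact hX.meet_of_mem_of_mem hY h ht hab hij hi hj
    · exact (hX.meet_of_mem_of_mem hY h ht hab hij.symm hj hi).imp And.symm And.symm
    · exact Or.inr (hY.meet hij v hi hj)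
  edge i j hij u hu v hv huv := by
    rcases hu with hu | hu <;> rcases hv with hv | hv
    · exact Or.inl (hX.edge hij u hu v hv huv)
    · exact hX.isEndPair_of_adj hY h hij hu hv huv
    · exact (hX.isEndPair_of_adj hY h hij.symm hv hu huv.symm).imp .symm .symm
    · exact Or.inr (hY.edge hij u hu v hv huv)

lemma not_adj_corner_of_adj_corner (hX : IsTripod G A a t X) (hY : IsTripod G B b t Y)
    (h : IndepSeparation G C A B) (ht : ∀ i, t i ∈ C) (hab : ∀ i j, a i ≠ b j)
    (hb : Pairwise fun i j => G.Adj (b i) (b j)) :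
    Pairwise fun i j => G.Adj (a 0) (b i) → ¬ G.Adj (a 0) (b j) := by
  have hbB : ∀ i, b i ∈ B ∨ b i = t i := fun i => (hY.corner i).imp_right fun ⟨j, hij, hbt⟩ => by
    by_contra hne
    exact (hb (fun hij' => hne (hij' ▸ hbt) : i ≠ j)).ne hij
  have hcases : ∀ i, G.Adj (a 0) (b i) → b i = t i ∨ a 0 = t i := by
    intro i hadj
    refine (hbB i).symm.imp_right fun hi => ?_
    rcases hX.corner 0 with h0 | ⟨j, -, hj⟩
    · exact absurd hadj (h.not_adj _ h0 _ hi)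
    · by_contra hne
      have hij : j ≠ i := fun hij => hne (hij ▸ hj)
      have := hY.edge hij (a 0) (hj ▸ hY.foot_mem j) (b i) (hY.path i).left_mem hadj
      rw [isEndPair_iff_of_ne (hb hij).ne] at this
      exact hab 0 j this.1
  intro i j hij hi hj
  have hbij := hb hij
  have hti := ht i
  have htj := ht j
  have hmeet := hY.meet hij (t i) (hY.foot_mem i)
  have hfoot := hY.foot_mem j
  grind [h.indep]

end IsTripod

lemma HasTripod.corner_eq_or_adj {C A B : Set α} {a b t : Fin 3 → α} (hG : ThreePathFree G)
    (h : IndepSeparation G C A B) (ht : ∀ i, t i ∈ C) (hA : HasTripod G A a t)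
    (hB : HasTripod G B b t) :
    (∃ i j, a i = b j) ∨ ((∀ i j, a i = a j) ∧ (∀ i j, b i = b j) ∧ G.Adj (a 0) (b 0)) := by
  obtain ⟨X, hX⟩ := hA
  obtain ⟨Y, hY⟩ := hB
  by_contra! hcon
  obtain ⟨hab, hadj⟩ := hcon
  have hXY := hX.union hY h ht hab hadj
  rcases hX.corners with ha | ha <;> rcases hY.corners with hb | hb
  · obtain ⟨x, rfl⟩ : ∃ x, a = fun _ => x := ⟨a 0, funext fun i => ha i 0⟩
    obtain ⟨y, rfl⟩ : ∃ y, b = fun _ => y := ⟨b 0, funext fun i => hb i 0⟩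
    exact hG.theta (hXY.containsTheta (hab 0 0) (hadj ha hb))
  · have hpair := hX.not_adj_corner_of_adj_corner hY h ht hab hb
    obtain ⟨x, rfl⟩ : ∃ x, a = fun _ => x := ⟨a 0, funext fun i => ha i 0⟩
    exact hG.pyramid (hXY.containsPyramid (hab 0) hb hpair)
  · have hYX := hY.union hX h.symm ht (fun i j => (hab j i).symm) fun hb' ha' =>
      fun hba => hadj ha' hb' hba.symm
    have hpair := hY.not_adj_corner_of_adj_corner hX h.symm ht (fun i j => (hab j i).symm) ha
    obtain ⟨y, rfl⟩ : ∃ y, b = fun _ => y := ⟨b 0, funext fun i => hb i 0⟩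
    exact hG.pyramid (hYX.containsPyramid (fun i => (hab i 0).symm) ha hpair)
  · exact hG.prism (hXY.containsPrism (fun i => hab i i) ha hb)

/-! ### Paths and tripods in connected sets -/

/-- `p 0, …, p n` is an induced path of length at least `2` with all its interior vertices in
`D`. -/
structure IsInteriorPath (G : SimpleGraph α) (D : Set α) (n : ℕ) (p : ℕ → α) : Prop
    extends IsInducedPathSeq G n p where
  two_le : 2 ≤ n
  mem : ∀ i, 0 < i → i < n → p i ∈ D

/-- `R` is an induced path from `s` to `z`, contained in `D` except possibly for `z`, that avoids
the path `p 0, …, p n` and has no edge to it except from `s`. -/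
structure IsPendantPath (G : SimpleGraph α) (D : Set α) (n : ℕ) (p : ℕ → α) (s z : α) (R : Set α) :
    Prop where
  path : IsInducedPathSet G s z R
  subset : ∀ v ∈ R, v ∈ D ∨ v = z
  ne : ∀ v ∈ R, ∀ i ≤ n, v ≠ p i
  not_adj : ∀ v ∈ R, v ≠ s → ∀ i ≤ n, ¬ G.Adj v (p i)

lemma connected_induce_insert {D : Set α} {x a : α} (h : (G.induce D).Connected) (ha : a ∈ D)
    (hxa : G.Adj x a) : (G.induce (insert x D)).Connected := by
  have hunion : ({x, a} ∪ D : Set α) = insert x D := by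
    rw [Set.insert_union, Set.singleton_union, Set.insert_eq_of_mem ha]
  rw [← hunion]
  exact induce_union_connected (induce_pair_connected_of_adj hxa).preconnected h.preconnected
    ⟨a, by simp, ha⟩

lemma exists_isInducedPathSet_of_adj {D S : Set α} {a b c : α} (hS : IsInducedPathSet G b c S)
    (hSD : S ⊆ D) (ha : a ∈ D) (hab : G.Adj a b) : ∃ T ⊆ D, IsInducedPathSet G a c T := by
  classical
  obtain ⟨n, p, hp, rfl, rfl, rfl⟩ := hS
  have hIcc : ∀ i, p '' Set.Icc i n ⊆ p '' Set.Iic n := fun i =>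
    Set.image_mono fun _ hk => hk.2
  by_cases haS : a ∈ p '' Set.Iic n
  · obtain ⟨i, hi, rfl⟩ := haS
    exact ⟨_, (hIcc i).trans hSD, hp.isInducedPathSet_Icc hi le_rfl⟩
  · set k := Nat.findGreatest (fun k => G.Adj a (p k)) n
    have hkn : k ≤ n := Nat.findGreatest_le n
    have hak : G.Adj a (p k) := Nat.findGreatest_spec (P := fun k => G.Adj a (p k)) n.zero_le hab
    refine ⟨_, Set.insert_subset ha ((hIcc k).trans hSD),
      (hp.isInducedPathSet_Icc hkn le_rfl).cons hak (fun h => haS (hIcc k h)) ?_⟩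
    rintro _ ⟨j, hj, rfl⟩ hne
    exact Nat.findGreatest_is_greatest (lt_of_le_of_ne hj.1 fun h => hne (h ▸ rfl)) hj.2

lemma exists_isInducedPathSet_subset {D : Set α} (h : (G.induce D).Connected) {a b : α}
    (ha : a ∈ D) (hb : b ∈ D) : ∃ S ⊆ D, IsInducedPathSet G a b S := by
  have key : ∀ (u v : D), (G.induce D).Walk u v → ∃ S ⊆ D, IsInducedPathSet G (u : α) v S := by
    intro u v w
    induction w with
    | nil => exact ⟨_, Set.singleton_subset_iff.2 (Subtype.prop _), .singleton _⟩
    | cons huv _ ih =>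
      obtain ⟨S, hSD, hS⟩ := ih
      exact exists_isInducedPathSet_of_adj hS hSD (Subtype.prop _) huv
  obtain ⟨w⟩ := h.preconnected ⟨a, ha⟩ ⟨b, hb⟩
  exact key _ _ w

lemma IsInducedPathSet.exists_prefix {z w : α} {T S : Set α} (h : IsInducedPathSet G z w T)
    (hz : z ∉ S) (hw : w ∈ S) :
    ∃ t R, IsInducedPathSet G z t R ∧ R ⊆ T ∧ (∀ v ∈ R, v ∉ S) ∧ (∃ s ∈ S, G.Adj t s) ∧
      ∀ v ∈ R, v ≠ t → ∀ s ∈ S, ¬ G.Adj v s := by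
  classical
  obtain ⟨n, p, hp, rfl, rfl, rfl⟩ := h
  have hn : 0 < n := Nat.pos_of_ne_zero fun hn => hz (by rwa [hn] at hw)
  have hex : ∃ k, k < n ∧ ∃ s ∈ S, G.Adj (p k) s := by
    refine ⟨n - 1, by omega, p n, hw, ?_⟩
    simpa only [Nat.sub_add_cancel hn] using hp.adj_succ (n - 1) (by omega)
  obtain ⟨hkn, hks⟩ := Nat.find_spec hex
  have hmin : ∀ i < Nat.find hex, ∀ s ∈ S, ¬ G.Adj (p i) s := fun i hi s hs hadj =>
    Nat.find_min hex hi ⟨by omega, s, hs, hadj⟩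
  set k := Nat.find hex
  refine ⟨p k, p '' Set.Icc 0 k, hp.isInducedPathSet_Icc k.zero_le hkn.le, ?_, ?_, hks, ?_⟩
  · exact Set.image_mono fun i hi => hi.2.trans hkn.le
  · rintro _ ⟨i, hi, rfl⟩ hS
    have := hi.2
    cases i with
    | zero => exact hz hS
    | succ i => exact hmin i (by omega) _ hS (hp.adj_succ i (by omega))
  · rintro _ ⟨i, hi, rfl⟩ hne s hs
    exact hmin i (lt_of_le_of_ne hi.2 fun h => hne (h ▸ rfl)) s hs

lemma exists_first_last {P : ℕ → Prop} {n : ℕ} (h : ∃ i ≤ n, P i) :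
    ∃ i j, i ≤ j ∧ j ≤ n ∧ P i ∧ P j ∧ ∀ k ≤ n, P k → i ≤ k ∧ k ≤ j := by
  classical
  obtain ⟨i, hi, hPi⟩ := h
  have hex : ∃ k, P k := ⟨i, hPi⟩
  have hlast : P (Nat.findGreatest P n) := Nat.findGreatest_spec hi hPi
  exact ⟨Nat.find hex, Nat.findGreatest P n, Nat.find_min' hex hlast, Nat.findGreatest_le n,
    Nat.find_spec hex, hlast, fun k hk hPk => ⟨Nat.find_min' hex hPk, Nat.le_findGreatest hk hPk⟩⟩

namespace IsInducedPathSeq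

variable {n : ℕ} {p : ℕ → α} {i j : ℕ}

lemma eq_of_mem_of_mem (hp : IsInducedPathSeq G n p) (hij : i ≤ j) {v : α}
    (hi : v ∈ p '' Set.Icc 0 i) (hj : v ∈ p '' Set.Icc j n) : i = j ∧ v = p i := by
  obtain ⟨k, ⟨-, hk⟩, rfl⟩ := hi
  obtain ⟨l, ⟨hl, hln⟩, hlk⟩ := hj
  have := hp.inj l hln k (by omega) hlk
  exact ⟨by omega, congrArg p (by omega)⟩

lemma isEndPair_of_adj (hp : IsInducedPathSeq G n p) (hij : i ≤ j) {u v : α}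
    (hu : u ∈ p '' Set.Icc 0 i) (hv : v ∈ p '' Set.Icc j n) (huv : G.Adj u v) :
    j ≤ i + 1 ∧ IsEndPair (p i) (p j) u v := by
  obtain ⟨k, ⟨-, hk⟩, rfl⟩ := hu
  obtain ⟨l, ⟨hl, hln⟩, rfl⟩ := hv
  have := hp.consecutive k (by omega) l hln huv
  refine ⟨by omega, ?_⟩
  rcases (by omega : (k = i ∧ l = j) ∨ (i = j ∧ (k = i ∨ l = j))) with ⟨rfl, rfl⟩ | ⟨rfl, hkl⟩
  · exact Or.inl ⟨rfl, rfl⟩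
  · exact Or.inr ⟨rfl, hkl.imp (congrArg p) (congrArg p)⟩

lemma insert_left (hp : IsInducedPathSeq G n p) {s : α} (hsp : ∀ k ≤ n, s ≠ p k) (hi : i ≤ n)
    (hsi : G.Adj s (p i)) (hs : ∀ k ≤ n, G.Adj s (p k) → i ≤ k) :
    IsInducedPathSet G s (p 0) (insert s (p '' Set.Icc 0 i)) := by
  refine (hp.isInducedPathSet_Icc i.zero_le hi).symm.cons hsi ?_ ?_
  · rintro ⟨k, hk, hks⟩
    exact hsp k (hk.2.trans hi) hks.symm
  · rintro _ ⟨k, hk, rfl⟩ hne hadj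
    exact hne (congrArg p (hk.2.antisymm (hs k (hk.2.trans hi) hadj)))

lemma insert_right (hp : IsInducedPathSeq G n p) {s : α} (hsp : ∀ k ≤ n, s ≠ p k) (hj : j ≤ n)
    (hsj : G.Adj s (p j)) (hs : ∀ k ≤ n, G.Adj s (p k) → k ≤ j) :
    IsInducedPathSet G s (p n) (insert s (p '' Set.Icc j n)) := by
  refine (hp.isInducedPathSet_Icc hj le_rfl).cons hsj ?_ ?_
  · rintro ⟨k, hk, hks⟩
    exact hsp k hk.2 hks.symm
  · rintro _ ⟨k, hk, rfl⟩ hne hadj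
    exact hne (congrArg p ((hs k hk.2 hadj).antisymm hk.1))

end IsInducedPathSeq

lemma HasTripod.of_legs {D X Y Z : Set α} {a t : Fin 3 → α}
    (hX : IsInducedPathSet G (a 0) (t 0) X) (hY : IsInducedPathSet G (a 1) (t 1) Y)
    (hZ : IsInducedPathSet G (a 2) (t 2) Z)
    (hXD : ∀ v ∈ X, v = a 0 ∨ v ∈ D ∨ v = t 0) (hYD : ∀ v ∈ Y, v = a 1 ∨ v ∈ D ∨ v = t 1)
    (hZD : ∀ v ∈ Z, v = a 2 ∨ v ∈ D ∨ v = t 2)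
    (hcorner : ∀ i, a i ∈ D ∨ ∃ j, a i = a j ∧ a i = t j)
    (hcorners : (∀ i j, a i = a j) ∨ Pairwise fun i j => G.Adj (a i) (a j))
    (hXY : ∀ v ∈ X, v ∈ Y → v = a 0 ∧ v = a 1) (hXZ : ∀ v ∈ X, v ∈ Z → v = a 0 ∧ v = a 2)
    (hYZ : ∀ v ∈ Y, v ∈ Z → v = a 1 ∧ v = a 2)
    (eXY : ∀ u ∈ X, ∀ v ∈ Y, G.Adj u v → IsEndPair (a 0) (a 1) u v)
    (eXZ : ∀ u ∈ X, ∀ v ∈ Z, G.Adj u v → IsEndPair (a 0) (a 2) u v)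
    (eYZ : ∀ u ∈ Y, ∀ v ∈ Z, G.Adj u v → IsEndPair (a 1) (a 2) u v) : HasTripod G D a t := by
  refine ⟨![X, Y, Z], ?_, ?_, hcorner, hcorners,
    pairwise_fin_three (fun _ _ h v hj hi => (h v hi hj).symm) hXY hXZ hYZ,
    pairwise_fin_three (fun _ _ h u hu v hv huv => (h v hv u hu huv.symm).symm) eXY eXZ eYZ⟩
  · intro i; fin_cases i; exacts [hX, hY, hZ]
  · intro i; fin_cases i; exacts [hXD, hYD, hZD]

lemma IsPendantPath.cons {D R : Set α} {n : ℕ} {p : ℕ → α} {q s z : α}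
    (hR : IsPendantPath G D n p s z R) (hqs : G.Adj q s) (hqD : q ∈ D) (hqR : q ∉ R)
    (hadj : ∀ v ∈ R, v ≠ s → ¬ G.Adj q v) (hqp : ∀ i ≤ n, q ≠ p i)
    (hs : ∀ i ≤ n, ¬ G.Adj s (p i)) : IsPendantPath G D n p q z (insert q R) where
  path := hR.path.cons hqs hqR hadj
  subset := Set.forall_mem_insert.2 ⟨.inl hqD, hR.subset⟩
  ne := Set.forall_mem_insert.2 ⟨hqp, hR.ne⟩
  not_adj := Set.forall_mem_insert.2 ⟨fun h => absurd rfl h, fun v hv _ => by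
    by_cases hvs : v = s
    exacts [hvs ▸ hs, hR.not_adj v hv hvs]⟩

lemma IsPendantPath.eq_of_adj {D R : Set α} {n : ℕ} {p : ℕ → α} {s z v : α} {k : ℕ}
    (hR : IsPendantPath G D n p s z R) (hv : v ∈ R) (hk : k ≤ n) (hadj : G.Adj (p k) v) :
    v = s := by
  by_contra hne
  exact hR.not_adj v hv hne k hk hadj.symm

namespace IsInteriorPath

variable {D R : Set α} {n : ℕ} {p : ℕ → α} {s z : α} {i j : ℕ}

lemma mem_of_mem_left (hp : IsInteriorPath G D n p) (hi : i ≤ n) {v : α}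
    (hv : v ∈ p '' Set.Icc 0 i) : v = p i ∨ v ∈ D ∨ v = p 0 := by
  obtain ⟨k, ⟨-, hk⟩, rfl⟩ := hv
  rcases (by omega : k = i ∨ k = 0 ∨ (0 < k ∧ k < n)) with rfl | rfl | hk'
  exacts [Or.inl rfl, Or.inr (Or.inr rfl), Or.inr (Or.inl (hp.mem k hk'.1 hk'.2))]

lemma mem_of_mem_right (hp : IsInteriorPath G D n p) {v : α}
    (hv : v ∈ p '' Set.Icc j n) : v = p j ∨ v ∈ D ∨ v = p n := by
  obtain ⟨k, ⟨hjk, hk⟩, rfl⟩ := hv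
  rcases (by omega : k = j ∨ k = n ∨ (0 < k ∧ k < n)) with rfl | rfl | hk'
  exacts [Or.inl rfl, Or.inr (Or.inr rfl), Or.inr (Or.inl (hp.mem k hk'.1 hk'.2))]

lemma hasTripod_of_unique_adj (hp : IsInteriorPath G D n p) (hR : IsPendantPath G D n p s z R)
    (hi : i ≤ n) (hsi : G.Adj s (p i)) (hs : ∀ k ≤ n, G.Adj s (p k) → k = i) :
    HasTripod G D (fun _ => p i) ![p 0, p n, z] := by
  have hleg : IsInducedPathSet G (p i) z (insert (p i) R) :=
    hR.path.cons hsi.symm (fun h => hR.ne _ h i hi rfl)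
      fun v hv hne hadj => hR.not_adj v hv hne i hi hadj.symm
  have hmeet : ∀ k ≤ n, p k ∈ insert (p i) R → p k = p i := fun k hk h =>
    h.resolve_right fun h => hR.ne _ h k hk rfl
  have hedge : ∀ k ≤ n, ∀ v ∈ insert (p i) R, G.Adj (p k) v → IsEndPair (p i) (p i) (p k) v := by
    rintro k hk v (rfl | hv) hadj
    · exact isEndPair_self_iff.2 (Or.inr rfl)
    · obtain rfl := hR.eq_of_adj hv hk hadj
      exact isEndPair_self_iff.2 (Or.inl (congrArg p (hs k hk hadj.symm)))
  refine .of_legs (hp.isInducedPathSet_Icc i.zero_le hi).symm (hp.isInducedPathSet_Icc hi le_rfl)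
    hleg (fun v => hp.mem_of_mem_left hi) (fun v => hp.mem_of_mem_right) ?_ ?_
    (Or.inl fun _ _ => rfl) ?_ ?_ ?_ ?_ ?_ ?_
  · rintro v (rfl | hv)
    exacts [Or.inl rfl, Or.inr (hR.subset v hv)]
  · intro _
    rcases (by omega : i = 0 ∨ i = n ∨ (0 < i ∧ i < n)) with rfl | rfl | hi'
    exacts [Or.inr ⟨0, rfl, rfl⟩, Or.inr ⟨1, rfl, rfl⟩, Or.inl (hp.mem i hi'.1 hi'.2)]
  · exact fun v hX hY => (and_self_iff).2 (hp.eq_of_mem_of_mem le_rfl hX hY).2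
  · rintro _ ⟨k, hk, rfl⟩ hZ
    exact (and_self_iff).2 (hmeet k (hk.2.trans hi) hZ)
  · rintro _ ⟨k, hk, rfl⟩ hZ
    exact (and_self_iff).2 (hmeet k hk.2 hZ)
  · exact fun u hu v hv huv => (hp.isEndPair_of_adj le_rfl hu hv huv).2
  · rintro _ ⟨k, hk, rfl⟩
    exact hedge k (hk.2.trans hi)
  · rintro _ ⟨k, hk, rfl⟩
    exact hedge k hk.2

lemma hasTripod_of_two_adj (hp : IsInteriorPath G D n p) (hR : IsPendantPath G D n p s z R)
    (hi : i < n) (hsi : G.Adj s (p i)) (hsi' : G.Adj s (p (i + 1)))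
    (hs : ∀ k ≤ n, G.Adj s (p k) → i ≤ k ∧ k ≤ i + 1) :
    HasTripod G D ![p i, p (i + 1), s] ![p 0, p n, z] := by
  have hii : G.Adj (p i) (p (i + 1)) := hp.adj_succ i hi
  refine .of_legs (hp.isInducedPathSet_Icc i.zero_le hi.le).symm
    (hp.isInducedPathSet_Icc hi le_rfl) hR.path (fun v => hp.mem_of_mem_left hi.le)
    (fun v => hp.mem_of_mem_right) (fun v hv => Or.inr (hR.subset v hv)) ?_
    (Or.inr (pairwise_fin_three (fun _ _ => Adj.symm) hii hsi.symm hsi'.symm)) ?_ ?_ ?_ ?_ ?_ ?_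
  · intro k
    fin_cases k
    · rcases Nat.eq_zero_or_pos i with rfl | hi0
      exacts [Or.inr ⟨0, rfl, rfl⟩, Or.inl (hp.mem i hi0 hi)]
    · rcases (by omega : i + 1 = n ∨ i + 1 < n) with rfl | hin
      exacts [Or.inr ⟨1, rfl, rfl⟩, Or.inl (hp.mem _ i.succ_pos hin)]
    · exact (hR.subset s hR.path.left_mem).imp_right fun h => ⟨2, rfl, h⟩
  · intro v hX hY
    exact absurd (hp.eq_of_mem_of_mem i.le_succ hX hY).1 i.succ_ne_self.symm
  · rintro _ ⟨k, hk, rfl⟩ hZ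
    exact absurd rfl (hR.ne _ hZ k (hk.2.trans hi.le))
  · rintro _ ⟨k, hk, rfl⟩ hZ
    exact absurd rfl (hR.ne _ hZ k hk.2)
  · exact fun u hu v hv huv => (hp.isEndPair_of_adj i.le_succ hu hv huv).2
  · rintro _ ⟨k, hk, rfl⟩ v hv hadj
    obtain rfl := hR.eq_of_adj hv (hk.2.trans hi.le) hadj
    exact Or.inl ⟨congrArg p (hk.2.antisymm (hs k (hk.2.trans hi.le) hadj.symm).1), rfl⟩
  · rintro _ ⟨k, hk, rfl⟩ v hv hadj
    obtain rfl := hR.eq_of_adj hv hk.2 hadj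
    exact Or.inl ⟨congrArg p ((hs k hk.2 hadj.symm).2.antisymm hk.1), rfl⟩

lemma hasTripod_of_distant_adj (hp : IsInteriorPath G D n p) (hR : IsPendantPath G D n p s z R)
    (hij : i + 2 ≤ j) (hj : j ≤ n) (hsi : G.Adj s (p i)) (hsj : G.Adj s (p j))
    (hs : ∀ k ≤ n, G.Adj s (p k) → i ≤ k ∧ k ≤ j) :
    HasTripod G D (fun _ => s) ![p 0, p n, z] := by
  have hsp : ∀ k ≤ n, s ≠ p k := hR.ne s hR.path.left_mem
  have hi : i ≤ n := by omega
  refine .of_legs (hp.insert_left hsp hi hsi fun k hk hadj => (hs k hk hadj).1)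
    (hp.insert_right hsp hj hsj fun k hk hadj => (hs k hk hadj).2) hR.path ?_ ?_
    (fun v hv => Or.inr (hR.subset v hv)) ?_
    (Or.inl fun _ _ => rfl) ?_ ?_ ?_ ?_ ?_ ?_
  · rintro v (rfl | ⟨k, hk, rfl⟩)
    · exact Or.inl rfl
    · rcases k.eq_zero_or_pos with rfl | hk0
      exacts [Or.inr (Or.inr rfl), Or.inr (Or.inl (hp.mem k hk0 (by grind)))]
  · rintro v (rfl | ⟨k, hk, rfl⟩)
    · exact Or.inl rfl
    · rcases hk.2.eq_or_lt with rfl | hkn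
      exacts [Or.inr (Or.inr rfl), Or.inr (Or.inl (hp.mem k (by grind) hkn))]
  · exact fun _ => (hR.subset s hR.path.left_mem).imp_right fun h => ⟨2, rfl, h⟩
  · rintro v (rfl | hv) (hv' | hv')
    any_goals exact ⟨rfl, rfl⟩
    · exact ⟨hv', hv'⟩
    · exact absurd (hp.eq_of_mem_of_mem (by omega) hv hv').1 (by omega)
  · rintro v (rfl | ⟨k, hk, rfl⟩) hv
    exacts [⟨rfl, rfl⟩, absurd rfl (hR.ne _ hv k (hk.2.trans hi))]
  · rintro v (rfl | ⟨k, hk, rfl⟩) hv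
    exacts [⟨rfl, rfl⟩, absurd rfl (hR.ne _ hv k hk.2)]
  · rintro u (rfl | hu) v (rfl | hv) huv
    any_goals exact isEndPair_self_iff.2 (Or.inl rfl)
    · exact isEndPair_self_iff.2 (Or.inr rfl)
    · exact absurd (hp.isEndPair_of_adj (by omega) hu hv huv).1 (by omega)
  · rintro u (rfl | ⟨k, hk, rfl⟩) v hv huv
    exacts [isEndPair_self_iff.2 (Or.inl rfl),
      isEndPair_self_iff.2 (Or.inr (hR.eq_of_adj hv (hk.2.trans hi) huv))]
  · rintro u (rfl | ⟨k, hk, rfl⟩) v hv huv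
    exacts [isEndPair_self_iff.2 (Or.inl rfl),
      isEndPair_self_iff.2 (Or.inr (hR.eq_of_adj hv hk.2 huv))]

lemma exists_hasTripod (hp : IsInteriorPath G D n p) (hR : IsPendantPath G D n p s z R)
    (hs : ∃ i ≤ n, G.Adj s (p i)) : ∃ a, HasTripod G D a ![p 0, p n, z] := by
  obtain ⟨i, j, hij, hj, hsi, hsj, hs⟩ := exists_first_last hs
  rcases (by omega : i = j ∨ j = i + 1 ∨ i + 2 ≤ j) with rfl | rfl | hij
  · exact ⟨_, hp.hasTripod_of_unique_adj hR hj hsi fun k hk h =>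
      (hs k hk h).2.antisymm (hs k hk h).1⟩
  · exact ⟨_, hp.hasTripod_of_two_adj hR hj hsi hsj hs⟩
  · exact ⟨_, hp.hasTripod_of_distant_adj hR hij hj hsi hsj hs⟩

end IsInteriorPath

lemma IsInducedPathSet.exists_isInteriorPath {D S : Set α} {x y : α}
    (hS : IsInducedPathSet G x y S) (hxy : x ≠ y) (hadj : ¬ G.Adj x y)
    (hSD : ∀ v ∈ S, v = x ∨ v = y ∨ v ∈ D) :
    ∃ n p, IsInteriorPath G D n p ∧ p 0 = x ∧ p n = y ∧ S = p '' Set.Iic n := by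
  obtain ⟨n, p, hp, rfl, rfl, rfl⟩ := hS
  have hn : 2 ≤ n := by
    rcases (by omega : n = 0 ∨ n = 1 ∨ 2 ≤ n) with rfl | rfl | hn
    exacts [absurd rfl hxy, absurd (hp.adj_succ 0 one_pos) hadj, hn]
  refine ⟨n, p, ⟨hp, hn, fun i hi0 hin => ?_⟩, rfl, rfl, rfl⟩
  rcases hSD _ ⟨i, hin.le, rfl⟩ with h0 | hn | hD
  · exact absurd (hp.inj i hin.le 0 n.zero_le h0) hi0.ne'
  · exact absurd (hp.inj i hin.le n le_rfl hn) hin.ne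
  · exact hD

lemma exists_isInteriorPath {D : Set α} {x y : α} (h : (G.induce D).Connected) (hxy : x ≠ y)
    (hadj : ¬ G.Adj x y) (hx : ∃ a ∈ D, G.Adj x a) (hy : ∃ a ∈ D, G.Adj y a) :
    ∃ n p, IsInteriorPath G D n p ∧ p 0 = x ∧ p n = y := by
  obtain ⟨a, ha, hxa⟩ := hx
  obtain ⟨b, hb, hyb⟩ := hy
  have hconn : (G.induce (insert x (insert y D))).Connected :=
    connected_induce_insert (connected_induce_insert h hb hyb) (Set.mem_insert_of_mem y ha) hxa
  obtain ⟨S, hS, hpath⟩ := exists_isInducedPathSet_subset hconn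
    (Set.mem_insert x _) (Set.mem_insert_of_mem x (Set.mem_insert y D))
  obtain ⟨n, p, hp, h0, hn, -⟩ := hpath.exists_isInteriorPath hxy hadj fun v hv => hS hv
  exact ⟨n, p, hp, h0, hn⟩

lemma exists_hasTripod_of_connected {D : Set α} {x y z : α} (h : (G.induce D).Connected)
    (hxy : x ≠ y) (hxz : x ≠ z) (hyz : y ≠ z) (hadj : ¬ G.Adj x y) (hz : z ∉ D)
    (hx : ∃ a ∈ D, G.Adj x a) (hy : ∃ a ∈ D, G.Adj y a) (hz' : ∃ a ∈ D, G.Adj z a) :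
    ∃ a, HasTripod G D a ![x, y, z] := by
  obtain ⟨n, p, hp, rfl, rfl⟩ := exists_isInteriorPath h hxy hadj hx hy
  obtain ⟨b, hb, hzb⟩ := hz'
  have hn := hp.two_le
  have hzp : z ∉ p '' Set.Iic n := by
    rintro ⟨i, hi, rfl⟩
    rcases (by grind : i = 0 ∨ i = n ∨ (0 < i ∧ i < n)) with rfl | rfl | hi'
    exacts [hxz rfl, hyz rfl, hz (hp.mem i hi'.1 hi'.2)]
  obtain ⟨T, hTD, hT⟩ := exists_isInducedPathSet_subset (connected_induce_insert h hb hzb)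
    (Set.mem_insert z D) (Set.mem_insert_of_mem z (hp.mem 1 one_pos hn))
  obtain ⟨s, R, hR, hRT, hRp, ⟨_, ⟨i, hi, rfl⟩, hsi⟩, hRadj⟩ :=
    hT.exists_prefix hzp ⟨1, by grind, rfl⟩
  refine hp.exists_hasTripod ⟨hR.symm, fun v hv => (hTD (hRT hv)).symm, ?_, ?_⟩ ⟨i, hi, hsi⟩
  · rintro v hv k hk rfl
    exact hRp _ hv ⟨k, hk, rfl⟩
  · exact fun v hv hne k hk => hRadj v hv hne _ ⟨k, hk, rfl⟩

/-! ### Private neighbors and non-cut vertices -/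

/-- `v` is the only neighbor of `c` in `A`. -/
structure IsPrivateNbr (G : SimpleGraph α) (A : Set α) (c v : α) : Prop where
  mem : v ∈ A
  adj : G.Adj c v
  eq : ∀ a ∈ A, G.Adj c a → a = v

/-- `v` belongs to `A` and the rest of `A` is (nonempty and) connected. -/
structure IsNonCut (G : SimpleGraph α) (A : Set α) (v : α) : Prop where
  mem : v ∈ A
  connected : (G.induce (A \ {v})).Connected

/-- `D` is connected and every vertex of `C` has a neighbor in `D`. -/
structure IsConnFull (G : SimpleGraph α) (C D : Set α) : Prop where
  connected : (G.induce D).Connected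
  full : ∀ c ∈ C, ∃ a ∈ D, G.Adj c a

lemma IsPrivateNbr.ne {A : Set α} {c d u v : α} (hc : IsPrivateNbr G A c u)
    (hd : IsPrivateNbr G A d v) (huv : u ≠ v) : c ≠ d := by
  rintro rfl
  exact huv (hd.eq u hc.mem hc.adj)

lemma exists_isPrivateNbr_of_minimal {C A : Set α} (h : Minimal (IsConnFull G C) A) {v : α}
    (hv : IsNonCut G A v) : ∃ c ∈ C, IsPrivateNbr G A c v := by
  by_contra! hno
  have hfull : IsConnFull G C (A \ {v}) := by
    refine ⟨hv.connected, fun c hc => ?_⟩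
    obtain ⟨a, ha, hca⟩ := h.prop.full c hc
    by_contra! hnone
    have heq : ∀ b ∈ A, G.Adj c b → b = v := fun b hb hcb => by
      by_contra hbv
      exact hnone b ⟨hb, hbv⟩ hcb
    exact hno c hc ⟨hv.mem, heq a ha hca ▸ hca, heq⟩
  exact (h.le_of_le hfull Set.sdiff_subset hv.mem).2 rfl

lemma exists_adj_of_connected {A Q : Set α} (hA : (G.induce A).Connected) (hQ : (Q ∩ A).Nonempty)
    (hAQ : ¬ A ⊆ Q) : ∃ u ∈ Q, ∃ v ∈ A, v ∉ Q ∧ G.Adj u v := by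
  obtain ⟨a, haQ, haA⟩ := hQ
  obtain ⟨b, hbA, hbQ⟩ := Set.not_subset.1 hAQ
  obtain ⟨w⟩ := hA.preconnected ⟨a, haA⟩ ⟨b, hbA⟩
  obtain ⟨d, -, hd, hd'⟩ := w.exists_boundary_dart (Subtype.val ⁻¹' Q) haQ hbQ
  exact ⟨d.fst, hd, d.snd, d.snd.2, hd', d.adj⟩

lemma exists_isNonCut_of_connected_ssubset {A P : Set α} (hfin : A.Finite)
    (hA : (G.induce A).Connected) (hP : (G.induce P).Connected) (hPA : P ⊂ A) :
    ∃ q ∉ P, IsNonCut G A q := by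
  have hfinite : {Q | Q ⊂ A ∧ (G.induce Q).Connected}.Finite :=
    hfin.finite_subsets.subset fun Q hQ => hQ.1.subset
  obtain ⟨Q, hPQ, hQ⟩ := hfinite.exists_le_maximal ⟨hPA, hP⟩
  obtain ⟨hQA, hQconn⟩ := hQ.prop
  obtain ⟨⟨x, hx⟩⟩ := hQconn.nonempty
  obtain ⟨u, hu, v, hvA, hvQ, huv⟩ :=
    exists_adj_of_connected hA ⟨x, hx, hQA.subset hx⟩ hQA.not_subset
  have hinsert : insert v Q = A := by
    by_contra hne
    exact hvQ (hQ.le_of_ge ⟨(Set.insert_subset hvA hQA.subset).ssubset_of_ne hne,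
      connected_induce_insert hQconn hu huv.symm⟩ (Set.subset_insert _ _) (Set.mem_insert _ _))
  refine ⟨v, fun h => hvQ (hPQ h), hvA, ?_⟩
  rwa [← hinsert, Set.insert_sdiff_self_of_notMem hvQ]

lemma IsInducedPathSet.connected_induce {a b : α} {S : Set α} (h : IsInducedPathSet G a b S) :
    (G.induce S).Connected := by
  obtain ⟨w, -, hw⟩ := h.exists_isInducedPathW
  rw [← (Set.ext hw : {v | v ∈ w.support} = S)]
  exact w.connected_induce_support

/-! ### Tripods whose feet have private neighbors -/

namespace IsTripod

variable {D : Set α} {a t : Fin 3 → α} {leg : Fin 3 → Set α} {j k : Fin 3}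

lemma exists_adj_foot (h : IsTripod G D a t leg) (ht : t.Injective)
    (hadj : ∀ i j, ¬ G.Adj (t i) (t j)) (hj : a j = t j) (hkj : k ≠ j) :
    ∃ w ∈ leg k, w ∈ D ∧ G.Adj (t j) w := by
  rcases h.corners with hall | htri
  · have hk : a k = t j := (hall k j).trans hj
    obtain ⟨w, hw, haw⟩ := (h.path k).exists_adj_left (hk ▸ fun hjk => hkj (ht hjk).symm)
    rcases h.subset k w hw with rfl | hwD | rfl
    · exact absurd rfl haw.ne
    · exact ⟨w, hw, hwD, hk ▸ haw⟩
    · exact absurd (hk ▸ haw) (hadj j k)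
  · refine ⟨a k, (h.path k).left_mem, ?_, hj ▸ htri hkj.symm⟩
    rcases h.corner k with hk | ⟨l, hkl, htl⟩
    · exact hk
    · obtain rfl : k = l := by_contra fun hne => (htri hne).ne hkl
      exact absurd (hj ▸ htl ▸ htri hkj.symm) (hadj j k)

lemma corner_ne_foot (h : IsTripod G D a t leg) (ht : t.Injective)
    (hadj : ∀ i j, ¬ G.Adj (t i) (t j)) {v : α} (hv : IsPrivateNbr G D (t j) v) : a j ≠ t j := by
  intro hj
  obtain ⟨k, l, hkj, hlj, hkl⟩ : ∃ k l, k ≠ j ∧ l ≠ j ∧ k ≠ l :=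
    (by decide : ∀ j : Fin 3, ∃ k l, k ≠ j ∧ l ≠ j ∧ k ≠ l) j
  obtain ⟨w, hw, hwD, hjw⟩ := h.exists_adj_foot ht hadj hj hkj
  obtain ⟨w', hw', hwD', hjw'⟩ := h.exists_adj_foot ht hadj hj hlj
  obtain rfl : w = w' := (hv.eq w hwD hjw).trans (hv.eq w' hwD' hjw').symm
  obtain ⟨hk, hl⟩ := h.meet hkl w hw hw'
  have hwj : w = t j := (hk.trans (h.corners_eq_of_eq hkl (hk.symm.trans hl) k j)).trans hj
  exact hjw.ne hwj.symm

lemma corner_mem (h : IsTripod G D a t leg) (ht : t.Injective)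
    (hadj : ∀ i j, ¬ G.Adj (t i) (t j)) {v : Fin 3 → α} (hv : ∀ i, IsPrivateNbr G D (t i) (v i))
    (i : Fin 3) : a i ∈ D := by
  rcases h.corner i with hi | ⟨j, hij, hj⟩
  · exact hi
  · exact absurd (hij.symm.trans hj) (h.corner_ne_foot ht hadj (hv j))

lemma exists_isInducedPathSet (h : IsTripod G D a t leg) (hjk : j ≠ k) (hajk : a j = a k) :
    ∃ T, IsInducedPathSet G (t j) (t k) T ∧ a j ∈ T ∧
      ∀ v ∈ T, v = a j ∨ v ∈ D ∨ v = t j ∨ v = t k := by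
  refine ⟨leg j ∪ leg k, (h.path j).symm.append (hajk ▸ h.path k)
    (fun v hj hk => (h.meet hjk v hj hk).1) ?_, Or.inl (h.path j).left_mem, ?_⟩
  · intro u hu v hv hne hne' huv
    have := h.edge hjk u hu v hv huv
    rw [← hajk, isEndPair_self_iff] at this
    tauto
  · rintro v (hv | hv)
    · have := h.subset j v hv; tauto
    · have := h.subset k v hv; rw [← hajk] at this; tauto

end IsTripod

lemma exists_hasTripod_of_isConnFull {C A B : Set α} (h : IndepSeparation G C A B)
    (hB : IsConnFull G C B) {t : Fin 3 → α} (ht : ∀ i, t i ∈ C) (hinj : t.Injective) :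
    ∃ b, HasTripod G B b t := by
  have hvec : t = ![t 0, t 1, t 2] := by ext i; fin_cases i <;> rfl
  rw [hvec]
  exact exists_hasTripod_of_connected hB.connected (hinj.ne (by decide)) (hinj.ne (by decide))
    (hinj.ne (by decide)) (h.indep _ (ht 0) _ (ht 1)) (fun h2 => h.right_not_mem _ h2 (ht 2))
    (hB.full _ (ht 0)) (hB.full _ (ht 1)) (hB.full _ (ht 2))

lemma exists_forall_hasTripod_corner_eq {C A B : Set α} (hG : ThreePathFree G)
    (h : IndepSeparation G C A B) (hB : IsConnFull G C B) {t v : Fin 3 → α} (ht : ∀ i, t i ∈ C)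
    (hv : ∀ i, IsPrivateNbr G A (t i) (v i)) (hinj : v.Injective) :
    ∃ k, ∀ a, HasTripod G A a t → ∀ i, a i = v k := by
  have htinj : t.Injective := fun i j hij => hinj <| (hv j).eq _ (hv i).mem (hij ▸ (hv i).adj)
  obtain ⟨b, hb⟩ := exists_hasTripod_of_isConnFull h hB ht htinj
  obtain ⟨legB, hlegB⟩ := id hb
  have hcornerB : ∀ i, b i ∈ B ∨ ∃ j, b i = t j := fun i =>
    (hlegB.corner i).imp_right fun ⟨j, hj⟩ => ⟨j, hj.2⟩
  have key : ∀ a, HasTripod G A a t → (∀ i j, a i = a j) ∧ a 0 ∈ A ∧ G.Adj (a 0) (b 0) := by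
    rintro a ha
    obtain ⟨legA, hlegA⟩ := id ha
    have hmem := hlegA.corner_mem htinj (fun i j => h.indep _ (ht i) _ (ht j)) hv
    rcases HasTripod.corner_eq_or_adj hG h ht ha hb with ⟨i, j, hij⟩ | ⟨haa, -, hadj⟩
    · rcases hcornerB j with hj | ⟨k, hk⟩
      · exact absurd (hij ▸ hj) (h.disjoint _ (hmem i))
      · exact absurd (hij.trans hk ▸ ht k) (h.left_not_mem _ (hmem i))
    · exact ⟨haa, hmem 0, hadj⟩
  rcases hcornerB 0 with h0 | ⟨k, hk⟩
  · exact ⟨0, fun a ha => absurd (key a ha).2.2 (h.not_adj _ (key a ha).2.1 _ h0)⟩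
  · refine ⟨k, fun a ha i => ?_⟩
    obtain ⟨haa, hmem, hadj⟩ := key a ha
    exact (haa i 0).trans ((hv k).eq _ hmem (hk ▸ hadj.symm))

/-! ### Holes made of two paths -/

/-- Two induced paths `p 0, …, p n` and `q 0, …, q m` with the same ends whose union is a hole. -/
structure IsHolePair (G : SimpleGraph α) (n m : ℕ) (p q : ℕ → α) : Prop where
  left : IsInducedPathSeq G n p
  right : IsInducedPathSeq G m q
  two_le_left : 2 ≤ n
  two_le_right : 2 ≤ m
  zero : p 0 = q 0
  last : p n = q m
  ne : ∀ i j, 0 < i → i < n → 0 < j → j < m → p i ≠ q j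
  not_adj : ∀ i j, 0 < i → i < n → 0 < j → j < m → ¬ G.Adj (p i) (q j)

lemma IsInteriorPath.isHolePair {C A B : Set α} {n m : ℕ} {p q : ℕ → α}
    (hp : IsInteriorPath G A n p) (hq : IsInteriorPath G B m q) (h : IndepSeparation G C A B)
    (h0 : p 0 = q 0) (hnm : p n = q m) : IsHolePair G n m p q where
  left := hp.toIsInducedPathSeq
  right := hq.toIsInducedPathSeq
  two_le_left := hp.two_le
  two_le_right := hq.two_le
  zero := h0
  last := hnm
  ne i j hi hin hj hjm hij := h.disjoint _ (hp.mem i hi hin) (hij ▸ hq.mem j hj hjm)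
  not_adj i j hi hin hj hjm := h.not_adj _ (hp.mem i hi hin) _ (hq.mem j hj hjm)

namespace IsHolePair

variable {n m : ℕ} {p q : ℕ → α} {i j k : ℕ}

lemma symm (h : IsHolePair G n m p q) : IsHolePair G m n q p where
  left := h.right
  right := h.left
  two_le_left := h.two_le_right
  two_le_right := h.two_le_left
  zero := h.zero.symm
  last := h.last.symm
  ne i j hi him hj hjn hij := h.ne j i hj hjn hi him hij.symm
  not_adj i j hi him hj hjn hij := h.not_adj j i hj hjn hi him hij.symm

lemma left_not_mem (h : IsHolePair G n m p q) (hk : 0 < k) (hkn : k < n) :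
    p k ∉ q '' Set.Iic m := by
  rintro ⟨l, hl, hkl⟩
  rcases (by grind : l = 0 ∨ l = m ∨ (0 < l ∧ l < m)) with rfl | rfl | hl'
  · exact hk.ne (h.left.inj 0 n.zero_le k hkn.le (h.zero.trans hkl))
  · exact hkn.ne' (h.left.inj n le_rfl k hkn.le (h.last.trans hkl))
  · exact h.ne k l hk hkn hl'.1 hl'.2 hkl.symm

lemma eq_of_adj_right (h : IsHolePair G n m p q) (hk : 0 < k) (hkn : k < n) {w : α}
    (hw : w ∈ q '' Set.Iic m) (hadj : G.Adj (p k) w) :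
    (k = 1 ∧ w = p 0) ∨ (k + 1 = n ∧ w = p n) := by
  obtain ⟨l, hl, rfl⟩ := hw
  rcases (by grind : l = 0 ∨ l = m ∨ (0 < l ∧ l < m)) with rfl | rfl | hl'
  · rw [← h.zero] at hadj ⊢
    exact Or.inl ⟨by have := h.left.consecutive k hkn.le 0 n.zero_le hadj; omega, rfl⟩
  · rw [← h.last] at hadj ⊢
    exact Or.inr ⟨by have := h.left.consecutive k hkn.le n le_rfl hadj; omega, rfl⟩
  · exact absurd hadj (h.not_adj k l hk hkn hl'.1 hl'.2)

lemma isInducedPathSet_arc (h : IsHolePair G n m p q) (hi : 0 < i) (hij : i + 2 ≤ j) (hj : j < n) :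
    IsInducedPathSet G (p i) (p j) (p '' Set.Icc 0 i ∪ q '' Set.Iic m ∪ p '' Set.Icc j n) := by
  have hq : IsInducedPathSet G (p 0) (p n) (q '' Set.Iic m) :=
    ⟨m, q, h.right, h.zero.symm, h.last.symm, rfl⟩
  have hleft := (h.left.isInducedPathSet_Icc i.zero_le (by omega)).symm
  have hright := (h.left.isInducedPathSet_Icc hj.le le_rfl).symm
  refine (hleft.append hq ?_ ?_).append hright ?_ ?_
  · rintro _ ⟨k, hk, rfl⟩ hkq
    rcases Nat.eq_zero_or_pos k with rfl | hk0
    · rfl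
    · exact absurd hkq (h.left_not_mem hk0 (by grind))
  · rintro _ ⟨k, hk, rfl⟩ w hw hk0 hw0 hadj
    rcases Nat.eq_zero_or_pos k with rfl | hk'
    · exact hk0 rfl
    · grind [h.eq_of_adj_right hk' (by grind) hw hadj]
  · rintro v (hv | hv) hvj
    · grind [h.left.eq_of_mem_of_mem (by omega) hv hvj]
    · obtain ⟨k, hk, rfl⟩ := hvj
      rcases (by grind : k = n ∨ (0 < k ∧ k < n)) with rfl | hk'
      · rfl
      · exact absurd hv (h.left_not_mem hk'.1 hk'.2)
  · rintro v hv _ ⟨k, hk, rfl⟩ hvn hkn hadj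
    rcases hv with hv | hv
    · grind [h.left.isEndPair_of_adj (by omega) hv ⟨k, hk, rfl⟩ hadj]
    · rcases (by grind : k = n ∨ (0 < k ∧ k < n)) with rfl | hk'
      · exact hkn rfl
      · grind [h.eq_of_adj_right hk'.1 hk'.2 hv hadj.symm]

lemma eq_of_mem_arc (h : IsHolePair G n m p q) (hi : 0 < i) (hj : j < n) (hik : i ≤ k) (hkj : k ≤ j)
    (hk : p k ∈ p '' Set.Icc 0 i ∪ q '' Set.Iic m ∪ p '' Set.Icc j n) : k = i ∨ k = j := by
  rcases hk with (⟨l, hl, hlk⟩ | hkq) | ⟨l, hl, hlk⟩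
  · grind [h.left.inj l (by grind) k (by omega) hlk]
  · exact absurd hkq (h.left_not_mem (by omega) (by omega))
  · grind [h.left.inj l (by grind) k (by omega) hlk]

lemma eq_of_adj_arc (h : IsHolePair G n m p q) (hi : 0 < i) (hj : j < n) (hik : i ≤ k) (hkj : k ≤ j)
    {w : α} (hw : w ∈ p '' Set.Icc 0 i ∪ q '' Set.Iic m ∪ p '' Set.Icc j n)
    (hadj : G.Adj (p k) w) : (k = i ∨ k = j) ∨ w = p i ∨ w = p j := by
  rcases hw with (⟨l, hl, rfl⟩ | hw) | ⟨l, hl, rfl⟩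
  · grind [h.left.consecutive k (by omega) l (by grind) hadj]
  · rcases h.eq_of_adj_right (by omega) (by omega) hw hadj with hk | hk <;> omega
  · grind [h.left.consecutive k (by omega) l (by grind) hadj]

lemma isThreePathConfig (h : IsHolePair G n m p q) {v : α} (hvp : v ∉ p '' Set.Iic n)
    (hvq : v ∉ q '' Set.Iic m) (hvadj : ∀ w ∈ q '' Set.Iic m, ¬ G.Adj v w) (hi : 0 < i)
    (hij : i + 2 ≤ j) (hj : j < n) (honly : ∀ k ≤ n, G.Adj v (p k) → k = i ∨ k = j)
    (hv : IsInducedPathSet G (p i) (p j) {p i, v, p j}) :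
    IsThreePathConfig G (fun _ => p i) (fun _ => p j)
      ![p '' Set.Icc i j, {p i, v, p j},
        p '' Set.Icc 0 i ∪ q '' Set.Iic m ∪ p '' Set.Icc j n] := by
  refine ⟨fun k => ?_, pairwise_fin_three (by grind) ?_ ?_ ?_, pairwise_fin_three
    (fun a b hab u hu w hw huw => (hab w hw u hu huw.symm).imp .symm .symm) ?_ ?_ ?_⟩ <;>
    try simp only [isEndPair_self_iff]
  · fin_cases k
    exacts [h.left.isInducedPathSet_Icc (by omega) hj.le, hv, h.isInducedPathSet_arc hi hij hj]
  · rintro _ ⟨k, hk, rfl⟩ (hki | rfl | hkj)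
    exacts [Or.inl ⟨hki, hki⟩, absurd ⟨k, by grind, rfl⟩ hvp, Or.inr ⟨hkj, hkj⟩]
  · rintro _ ⟨k, hk, rfl⟩ hk'
    rcases h.eq_of_mem_arc hi hj hk.1 hk.2 hk' with rfl | rfl <;> simp
  · rintro w (rfl | rfl | rfl) hw
    · exact Or.inl ⟨rfl, rfl⟩
    · rcases hw with (⟨k, hk, hkw⟩ | hw) | ⟨k, hk, hkw⟩
      exacts [absurd ⟨k, by grind, hkw⟩ hvp, absurd hw hvq, absurd ⟨k, by grind, hkw⟩ hvp]
    · exact Or.inr ⟨rfl, rfl⟩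
  · rintro _ ⟨k, hk, rfl⟩ w (rfl | rfl | rfl) hadj
    · simp
    · rcases honly k (by grind) hadj.symm with rfl | rfl <;> simp
    · simp
  · rintro _ ⟨k, hk, rfl⟩ w hw hadj
    rcases h.eq_of_adj_arc hi hj hk.1 hk.2 hw hadj with (rfl | rfl) | rfl | rfl <;> simp
  · rintro u (rfl | rfl | rfl) w hw hadj
    · simp
    · rcases hw with (⟨k, hk, rfl⟩ | hw) | ⟨k, hk, rfl⟩
      · rcases honly k (by grind) hadj with rfl | rfl <;> simp
      · exact absurd hadj (hvadj w hw)
      · rcases honly k (by grind) hadj with rfl | rfl <;> simp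
    · simp

lemma containsTheta (h : IsHolePair G n m p q) {v : α} (hvp : v ∉ p '' Set.Iic n)
    (hvq : v ∉ q '' Set.Iic m) (hvadj : ∀ w ∈ q '' Set.Iic m, ¬ G.Adj v w) (hi : 0 < i)
    (hij : i + 2 ≤ j) (hj : j < n) (hvi : G.Adj v (p i)) (hvj : G.Adj v (p j))
    (honly : ∀ k ≤ n, G.Adj v (p k) → k = i ∨ k = j) : ContainsTheta G := by
  have hne : p i ≠ p j := fun hij' => by have := h.left.inj i (by omega) j (by omega) hij'; omega
  have hnadj : ¬ G.Adj (p i) (p j) := fun hadj => by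
    have := h.left.consecutive i (by omega) j (by omega) hadj; omega
  have hv : IsInducedPathSet G (p i) (p j) {p i, v, p j} :=
    (IsInducedPathSet.pair hvj).cons hvi.symm (by grind) (by grind)
  exact (h.isThreePathConfig hvp hvq hvadj hi hij hj honly hv).containsTheta hne hnadj

end IsHolePair

/-! ### Minimal connected full sets are paths -/

/-- `S` is an induced path in `A` whose ends are distinct non-cut vertices of `A`. -/
def IsNonCutPath (G : SimpleGraph α) (A S : Set α) : Prop :=
  S ⊆ A ∧ ∃ u v, IsNonCut G A u ∧ IsNonCut G A v ∧ u ≠ v ∧ IsInducedPathSet G u v S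

/-- An induced path `p 0, …, p n` with ends in `C` and at least two interior vertices, all of them
in `A`, such that the neighbors of the ends on the path are their only neighbors in `A`. -/
structure IsPrivatePath (G : SimpleGraph α) (C A : Set α) (n : ℕ) (p : ℕ → α) : Prop
    extends IsInteriorPath G A n p where
  three_le : 3 ≤ n
  left_mem : p 0 ∈ C
  right_mem : p n ∈ C
  left_private : IsPrivateNbr G A (p 0) (p 1)
  right_private : IsPrivateNbr G A (p n) (p (n - 1))

/-- A private path whose interior is a maximal path between non-cut vertices. -/
structure IsMaxPrivatePath (G : SimpleGraph α) (C A : Set α) (n : ℕ) (p : ℕ → α) : Prop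
    extends IsPrivatePath G C A n p where
  left_nonCut : IsNonCut G A (p 1)
  right_nonCut : IsNonCut G A (p (n - 1))
  maximal : Maximal (IsNonCutPath G A) (p '' Set.Ioo 0 n)

lemma exists_forall_hasTripod_vec_corner_eq {C A B : Set α} {x y z u v w : α} (hG : ThreePathFree G)
    (h : IndepSeparation G C A B) (hB : IsConnFull G C B) (hx : x ∈ C) (hy : y ∈ C) (hz : z ∈ C)
    (hxu : IsPrivateNbr G A x u) (hyv : IsPrivateNbr G A y v) (hzw : IsPrivateNbr G A z w)
    (huv : u ≠ v) (huw : u ≠ w) (hvw : v ≠ w) :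
    ∃ b, (b = u ∨ b = v ∨ b = w) ∧ ∀ a, HasTripod G A a ![x, y, z] → ∀ i, a i = b := by
  obtain ⟨k, hk⟩ := exists_forall_hasTripod_corner_eq (t := ![x, y, z]) (v := ![u, v, w]) hG h hB
    (by simp [Fin.forall_fin_succ, hx, hy, hz]) (by simp [Fin.forall_fin_succ, hxu, hyv, hzw])
    (by simp [Function.Injective, Fin.forall_fin_succ, huv, huv.symm, huw, huw.symm, hvw, hvw.symm])
  exact ⟨_, by fin_cases k <;> simp, hk⟩

section

variable {C A B S : Set α} {c d u v : α}

lemma IsInducedPathSet.exists_isPrivatePath (hS : IsInducedPathSet G u v S) (hSA : S ⊆ A)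
    (huv : u ≠ v) (h : IndepSeparation G C A B) (hc : c ∈ C) (hd : d ∈ C)
    (hcu : IsPrivateNbr G A c u) (hdv : IsPrivateNbr G A d v) :
    ∃ n p, IsPrivatePath G C A n p ∧ p 0 = c ∧ p 1 = u ∧ p (n - 1) = v ∧ p n = d ∧
      S = p '' Set.Ioo 0 n := by
  have hcd : c ≠ d := hcu.ne hdv huv
  have hcS : c ∉ S := fun hcS => h.left_not_mem c (hSA hcS) hc
  have hdS : d ∉ S := fun hdS => h.left_not_mem d (hSA hdS) hd
  have hcpath : IsInducedPathSet G v c (insert c S) :=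
    (hS.cons hcu.adj hcS fun w hw hne hadj => hne (hcu.eq w (hSA hw) hadj)).symm
  have hpath : IsInducedPathSet G c d (insert d (insert c S)) := by
    refine (hcpath.cons hdv.adj (by simp [hcd.symm, hdS]) ?_).symm
    rintro w (rfl | hw) hne hadj
    exacts [h.indep _ hd _ hc hadj, hne (hdv.eq w (hSA hw) hadj)]
  obtain ⟨n, p, hp, rfl, rfl, hnp⟩ := hpath.exists_isInteriorPath hcd (h.indep _ hc _ hd)
    (D := A) (by
      rintro w (rfl | rfl | hw)
      exacts [.inr (.inl rfl), .inl rfl, .inr (.inr (hSA hw))])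
  have hn := hp.two_le
  have h1 : p 1 = u := hcu.eq _ (hp.mem 1 one_pos hn) (hp.adj_succ 0 (by omega))
  have hn1 : p (n - 1) = v := hdv.eq _ (hp.mem _ (by omega) (by omega))
    (by simpa [Nat.sub_add_cancel (by omega : 1 ≤ n)] using (hp.adj_succ (n - 1) (by omega)).symm)
  refine ⟨n, p, ⟨hp, ?_, hc, hd, h1 ▸ hcu, hn1 ▸ hdv⟩, rfl, h1, hn1, rfl,
    Set.ext fun w => ⟨fun hw => ?_, ?_⟩⟩
  · by_contra hn3
    obtain rfl : n = 2 := by omega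
    exact huv (h1.symm.trans hn1)
  · obtain ⟨k, hk, rfl⟩ : w ∈ p '' Set.Iic n := hnp ▸ .inr (.inr hw)
    exact ⟨k, ⟨Nat.pos_of_ne_zero fun h0 => hcS (h0 ▸ hw),
      hk.lt_of_ne fun hkn => hdS (hkn ▸ hw)⟩, rfl⟩
  · rintro ⟨k, hk, rfl⟩
    have hkA := hp.mem k hk.1 hk.2
    rcases (hnp ▸ ⟨k, hk.2.le, rfl⟩ : p k ∈ insert (p n) (insert (p 0) S)) with hkn | hk0 | hkS
    exacts [absurd (hkn ▸ hd) (h.left_not_mem _ hkA), absurd (hk0 ▸ hc) (h.left_not_mem _ hkA), hkS]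

lemma not_maximal_isNonCutPath_of_attached {R : Set α} {q s : α} (hS : IsInducedPathSet G u v S)
    (hv : IsNonCut G A v) (hR : IsInducedPathSet G q s R) (hRA : R ⊆ A) (hq : IsNonCut G A q)
    (hRS : ∀ w ∈ R, w ∉ S) (hsu : G.Adj s u)
    (hadj : ∀ x ∈ R, ∀ y ∈ S, G.Adj x y → x = s ∧ y = u) : ¬ Maximal (IsNonCutPath G A) S := by
  intro hmax
  have hsS : IsInducedPathSet G s v (insert s S) :=
    hS.cons hsu (hRS s hR.right_mem) fun w hw hne hsw => hne (hadj s hR.right_mem w hw hsw).2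
  have hpath : IsInducedPathSet G q v (R ∪ insert s S) := by
    refine hR.append hsS ?_ ?_
    · rintro w hw (rfl | hwS)
      exacts [rfl, absurd hwS (hRS w hw)]
    · rintro x hx y (rfl | hy) hxs hys hxy
      exacts [hys rfl, hxs (hadj x hx y hy hxy).1]
  have hlonger : IsNonCutPath G A (R ∪ insert s S) := by
    refine ⟨Set.union_subset hRA (Set.insert_subset (hRA hR.right_mem) hmax.prop.1), q, v, hq, hv,
      ?_, hpath⟩
    rintro rfl
    exact hRS q hR.left_mem hS.right_mem
  exact hRS q hR.left_mem (hmax.le_of_ge hlonger (by grind) (.inl hR.left_mem))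

end

namespace IsInteriorPath

variable {A : Set α} {n : ℕ} {p : ℕ → α} {q c : α} {i j g : ℕ}

lemma exists_connected_bypass (hp : IsInteriorPath G A n p) (hqA : q ∈ A)
    (hqp : q ∉ p '' Set.Ioo 0 n) (hi : 0 < i) (hig : i < g) (hgj : g < j) (hj : j < n)
    (hqi : G.Adj q (p i)) (hqj : G.Adj q (p j)) :
    ∃ K ⊆ A \ {p g}, (G.induce K).Connected ∧ p '' Set.Ioo 0 n ⊆ insert (p g) K := by
  have hleft : (G.induce (p '' Set.Icc 1 (g - 1))).Connected :=
    (hp.isInducedPathSet_Icc (by omega) (by omega)).connected_induce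
  have hright : (G.induce (p '' Set.Icc (g + 1) (n - 1))).Connected :=
    (hp.isInducedPathSet_Icc (by omega) (by omega)).connected_induce
  have hmem : ∀ k, 0 < k → k < n → k ≠ g → p k ∈ A \ {p g} := fun k hk hkn hkg =>
    ⟨hp.mem k hk hkn, fun heq => hkg (hp.inj k hkn.le g (by omega) heq)⟩
  refine ⟨insert q (p '' Set.Icc 1 (g - 1)) ∪ p '' Set.Icc (g + 1) (n - 1), ?_,
    connected_induce_union (connected_induce_insert hleft ⟨i, by grind, rfl⟩ hqi).preconnected
      hright.preconnected (Set.mem_insert q _) ⟨j, by grind, rfl⟩ hqj, ?_⟩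
  · rintro _ ((rfl | ⟨k, hk, rfl⟩) | ⟨k, hk, rfl⟩)
    · exact ⟨hqA, fun heq => hqp ⟨g, by grind, heq.symm⟩⟩
    all_goals exact hmem k (by grind) (by grind) (by grind)
  · rintro _ ⟨k, hk, rfl⟩
    rcases lt_trichotomy k g with hkg | rfl | hkg
    · exact .inr (.inl (.inr ⟨k, by grind, rfl⟩))
    · exact .inl rfl
    · exact .inr (.inr ⟨k, by grind, rfl⟩)

lemma isPendantPath_tail (hp : IsInteriorPath G A n p) {m k : ℕ} {r : ℕ → α} (hk : 0 < k)
    (hkn : k ≤ n) (hr : ∀ j, k ≤ j → j ≤ n → ∀ l ≤ m, p j ≠ r l ∧ (G.Adj (p j) (r l) → j = k)) :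
    IsPendantPath G A m r (p k) (p n) (p '' Set.Icc k n) := by
  refine ⟨hp.isInducedPathSet_Icc hkn le_rfl, ?_, ?_, ?_⟩ <;> rintro _ ⟨j, hj, rfl⟩
  · exact hj.2.lt_or_eq.imp (hp.mem j (hk.trans_le hj.1)) (congrArg p)
  · exact fun l hl => (hr j hj.1 hj.2 l hl).1
  · exact fun hjk l hl hadj => hjk (congrArg p ((hr j hj.1 hj.2 l hl).2 hadj))

lemma exists_truncate (hp : IsInteriorPath G A n p) (hi : 0 < i) (hin : i < n) (hc : c ∉ A)
    (hc0 : c ≠ p 0) (hci : G.Adj c (p i)) (hadj : ∀ k ≤ i, G.Adj c (p k) → k = i) :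
    ∃ r, IsInteriorPath G A (i + 1) r ∧ (∀ k ≤ i, r k = p k) ∧ r (i + 1) = c := by
  have hne : ∀ k ≤ i, c ≠ p k := fun k hk hck => by
    rcases Nat.eq_zero_or_pos k with rfl | hk0
    exacts [hc0 hck, hc (hck ▸ hp.mem k hk0 (by omega))]
  refine ⟨fun k => if k ≤ i then p k else c, ⟨⟨fun k hk l hl hkl => ?_, fun k hk l hl hkl => ?_,
    fun k hk => ?_⟩, by omega, fun k hk hki => ?_⟩, by grind, by grind⟩
  · have := hp.inj k
    grind
  · have := hp.consecutive k
    have := G.irrefl (v := c)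
    grind [G.adj_comm]
  · have := hp.adj_succ k
    have := hci.symm
    grind
  · have := hp.mem k hk
    grind

end IsInteriorPath

namespace IsPrivatePath

variable {C A B : Set α} {n : ℕ} {p : ℕ → α} {q : α}

lemma not_mem_of_not_mem_interior (hp : IsPrivatePath G C A n p) (h : IndepSeparation G C A B)
    (hqA : q ∈ A) (hq : q ∉ p '' Set.Ioo 0 n) : q ∉ p '' Set.Iic n := by
  rintro ⟨k, hk, rfl⟩
  rcases (by grind : k = 0 ∨ k = n ∨ (0 < k ∧ k < n)) with rfl | rfl | hk'
  exacts [h.left_not_mem _ hqA hp.left_mem, h.left_not_mem _ hqA hp.right_mem, hq ⟨k, hk', rfl⟩]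

lemma interior_of_adj (hp : IsPrivatePath G C A n p) (hqA : q ∈ A) (hq : q ∉ p '' Set.Ioo 0 n)
    {k : ℕ} (hk : k ≤ n) (hadj : G.Adj q (p k)) : 0 < k ∧ k < n := by
  have hn := hp.three_le
  refine ⟨Nat.pos_of_ne_zero ?_, hk.lt_of_ne ?_⟩ <;> rintro rfl
  · exact hq ⟨1, ⟨one_pos, by omega⟩, (hp.left_private.eq q hqA hadj.symm).symm⟩
  · exact hq ⟨k - 1, ⟨by omega, by omega⟩, (hp.right_private.eq q hqA hadj.symm).symm⟩

lemma foot_not_mem_and_not_adj (hp : IsPrivatePath G C A n p) (h : IndepSeparation G C A B)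
    (hq : q ∉ p '' Set.Ioo 0 n) {c : α} (hc : c ∈ C) (hcq : IsPrivateNbr G A c q) {k : ℕ}
    (hk : k ≤ n) : c ≠ p k ∧ ¬ G.Adj c (p k) := by
  have hn := hp.three_le
  rcases (by omega : k = 0 ∨ k = n ∨ (0 < k ∧ k < n)) with rfl | rfl | hk'
  · exact ⟨hcq.ne hp.left_private fun h1 => hq ⟨1, by grind, h1.symm⟩, h.indep _ hc _ hp.left_mem⟩
  · exact ⟨hcq.ne hp.right_private fun h1 => hq ⟨k - 1, by grind, h1.symm⟩,
      h.indep _ hc _ hp.right_mem⟩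
  · have hkA := hp.mem k hk'.1 hk'.2
    exact ⟨fun hck => h.left_not_mem _ hkA (hck ▸ hc), fun hadj => hq ⟨k, hk', hcq.eq _ hkA hadj⟩⟩

lemma exists_isPendantPath (hp : IsPrivatePath G C A n p) (h : IndepSeparation G C A B)
    (hA : (G.induce A).Connected) (hq : q ∉ p '' Set.Ioo 0 n) {c : α} (hc : c ∈ C)
    (hcq : IsPrivateNbr G A c q) :
    ∃ s R, R ⊆ A ∧ IsInducedPathSet G q s R ∧ IsPendantPath G A n p s c (insert c R) ∧
      ∃ i ≤ n, G.Adj s (p i) := by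
  have hn := hp.three_le
  obtain ⟨T, hTA, hT⟩ := exists_isInducedPathSet_subset hA hcq.mem hp.left_private.mem
  obtain ⟨s, R, hR, hRT, hRp, ⟨_, ⟨i, hi, rfl⟩, hsi⟩, hRadj⟩ :=
    hT.exists_prefix (hp.not_mem_of_not_mem_interior h hcq.mem hq) ⟨1, by grind, rfl⟩
  have hRA : R ⊆ A := hRT.trans hTA
  have hcR : c ∉ R := fun hcR => h.left_not_mem c (hRA hcR) hc
  refine ⟨s, R, hRA, hR, ⟨(hR.cons hcq.adj hcR fun w hw hne hadj =>
    hne (hcq.eq w (hRA hw) hadj)).symm, ?_, ?_, ?_⟩, i, hi, hsi⟩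
  · rintro v (rfl | hv)
    exacts [.inr rfl, .inl (hRA hv)]
  · rintro v (rfl | hv) k hk hvk
    exacts [(hp.foot_not_mem_and_not_adj h hq hc hcq hk).1 hvk, hRp v hv ⟨k, hk, hvk.symm⟩]
  · rintro v (rfl | hv) hvs k hk hadj
    exacts [(hp.foot_not_mem_and_not_adj h hq hc hcq hk).2 hadj, hRadj v hv hvs _ ⟨k, hk, rfl⟩ hadj]

lemma hasTripod_corner_eq (hp : IsPrivatePath G C A n p) (hG : ThreePathFree G)
    (h : IndepSeparation G C A B) (hB : IsConnFull G C B) (hq : q ∉ p '' Set.Ioo 0 n) {c : α}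
    (hc : c ∈ C) (hcq : IsPrivateNbr G A c q) {a : Fin 3 → α}
    (ha : HasTripod G A a ![p 0, p n, c]) :
    (∀ i j, a i = a j) ∧ (a 0 = p 1 ∨ a 0 = p (n - 1) ∨ a 0 = q) := by
  have hn := hp.three_le
  have hne : p 1 ≠ p (n - 1) := fun heq => by
    have := hp.inj 1 (by omega) (n - 1) (by omega) heq; omega
  have h1 : p 1 ≠ q := fun heq => hq ⟨1, by grind, heq⟩
  have h2 : p (n - 1) ≠ q := fun heq => hq ⟨n - 1, by grind, heq⟩
  obtain ⟨b, hb, hab⟩ := exists_forall_hasTripod_vec_corner_eq hG h hB hp.left_mem hp.right_mem hc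
    hp.left_private hp.right_private hcq hne h1 h2
  exact ⟨fun i j => (hab a ha i).trans (hab a ha j).symm, hab a ha 0 ▸ hb⟩

lemma exists_truncate (hp : IsPrivatePath G C A n p) (h : IndepSeparation G C A B) {c : α} {i : ℕ}
    (hi : 1 < i) (hin : i < n) (hc : c ∈ C) (hci : IsPrivateNbr G A c (p i)) :
    ∃ r, IsInteriorPath G A (i + 1) r ∧ (∀ k ≤ i, r k = p k) ∧ r (i + 1) = c := by
  refine hp.toIsInteriorPath.exists_truncate (by omega) hin (fun hcA => h.left_not_mem c hcA hc)
    (hci.ne hp.left_private fun heq => ?_) hci.adj fun k hk hck => ?_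
  · have := hp.inj i hin.le 1 (by omega) heq
    omega
  · rcases Nat.eq_zero_or_pos k with rfl | hk0
    exacts [absurd hck (h.indep _ hc _ hp.left_mem),
      hp.inj k (by omega) i hin.le (hci.eq _ (hp.mem k hk0 (by omega)) hck)]

lemma not_adj_succ (hp : IsPrivatePath G C A n p) (hG : ThreePathFree G)
    (h : IndepSeparation G C A B) (hB : IsConnFull G C B) (hq : q ∉ p '' Set.Ioo 0 n) {c d : α}
    (hc : c ∈ C) (hcq : IsPrivateNbr G A c q) {i : ℕ} (hi : 0 < i) (hin : i + 1 < n) (hd : d ∈ C)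
    (hdi : IsPrivateNbr G A d (p (i + 1))) (hqi : G.Adj q (p i))
    (hqk : ∀ k ≤ n, G.Adj q (p k) → i ≤ k) : ¬ G.Adj q (p (i + 1)) := by
  intro hqi'
  have h1i : p 1 ≠ p (i + 1) := fun heq => by
    have := hp.inj 1 (by omega) (i + 1) (by omega) heq; omega
  have hqne : ∀ k, 0 < k → k < n → p k ≠ q := fun k hk hkn heq => hq ⟨k, ⟨hk, hkn⟩, heq⟩
  have hcd : c ≠ d := hcq.ne hdi (hqne _ (by omega) hin).symm
  obtain ⟨r, hr, hrp, hrd⟩ := hp.exists_truncate h (by omega) hin hd hdi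
  have hqd : ¬ G.Adj q d := fun hqd =>
    hqne _ (by omega) hin (hdi.eq q hcq.mem hqd.symm).symm
  have hrk : ∀ k ≤ i + 2, r k = d ∨ (k ≤ i + 1 ∧ r k = p k) := fun k hk => by
    rcases hk.lt_or_eq with hk | rfl
    exacts [.inr ⟨by omega, hrp k (by omega)⟩, .inl hrd]
  have hpen : IsPendantPath G A (i + 2) r q c {q, c} := by
    refine ⟨.pair hcq.adj.symm, ?_, ?_, ?_⟩
    · rintro v (rfl | rfl)
      exacts [.inl hcq.mem, .inr rfl]
    · have hqp := hp.not_mem_of_not_mem_interior h hcq.mem hq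
      rintro v (rfl | rfl) k hk hvk <;> rcases hrk k hk with hk' | ⟨hk, hk'⟩ <;> rw [hk'] at hvk
      exacts [h.left_not_mem _ hcq.mem (hvk ▸ hd), hqp ⟨k, by grind, hvk.symm⟩, hcd hvk,
        (hp.foot_not_mem_and_not_adj h hq hc hcq (by omega)).1 hvk]
    · rintro v (rfl | rfl) hvs k hk hvk <;> rcases hrk k hk with hk' | ⟨hk, hk'⟩ <;> rw [hk'] at hvk
      exacts [hvs rfl, hvs rfl, h.indep _ hc _ hd hvk,
        (hp.foot_not_mem_and_not_adj h hq hc hcq (by omega)).2 hvk]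
  have htripod := hr.hasTripod_of_two_adj hpen (i := i) (by omega) (hrp i (by omega) ▸ hqi)
    (hrp (i + 1) le_rfl ▸ hqi') fun k hk hadj => by
      rcases hrk k hk with hk' | ⟨hk, hk'⟩ <;> rw [hk'] at hadj
      exacts [absurd hadj hqd, ⟨hqk k (by omega) hadj, hk⟩]
  rw [hrd, hrp 0 (by omega)] at htripod
  obtain ⟨b, -, hab⟩ := exists_forall_hasTripod_vec_corner_eq hG h hB hp.left_mem hd hc
    hp.left_private hdi hcq h1i (hqne 1 (by omega) (by omega)) (hqne _ (by omega) hin)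
  exact (hr.adj_succ i (by omega)).ne ((hab _ htripod 0).trans (hab _ htripod 1).symm)

lemma exists_tail_disjoint_truncate (hp : IsPrivatePath G C A n p) (h : IndepSeparation G C A B)
    {d : α} {i : ℕ} (hi : 0 < i) (hin : i + 2 < n) (hd : d ∈ C)
    (hdi : IsPrivateNbr G A d (p (i + 1))) :
    ∃ r, IsInteriorPath G A (i + 2) r ∧ (∀ k ≤ i + 1, r k = p k) ∧ r (i + 2) = d ∧
      ∀ k, i + 2 ≤ k → k ≤ n → ∀ l ≤ i + 2,
        p k ≠ r l ∧ (G.Adj (p k) (r l) → k = i + 2 ∧ l = i + 1) := by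
  have hne : ∀ k < n, k ≠ i + 1 → p (i + 1) ≠ p k := fun k hkn hki heq =>
    hki (hp.inj _ (by omega) k hkn.le heq).symm
  obtain ⟨r, hr, hrp, hrd⟩ := hp.exists_truncate h (by omega) (by omega) hd hdi
  refine ⟨r, hr, hrp, hrd, fun k hk hkn l hl => ?_⟩
  rcases hl.lt_or_eq with hl | rfl
  · rw [hrp l (by omega)]
    refine ⟨fun heq => ?_, fun hadj => ?_⟩
    · have := hp.inj k hkn l (by omega) heq
      omega
    · have := hp.consecutive k hkn l (by omega) hadj
      omega
  rw [hrd]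
  rcases hkn.lt_or_eq with hkn | rfl
  · have hkA := hp.mem k (by omega) hkn
    exact ⟨fun heq => h.left_not_mem _ hkA (heq ▸ hd), fun hadj =>
      absurd (hdi.eq _ hkA hadj.symm).symm (hne k hkn (by omega))⟩
  · exact ⟨(hdi.ne hp.right_private (hne _ (by omega) (by omega))).symm,
      fun hadj => absurd hadj (h.indep _ hp.right_mem _ hd)⟩

lemma eq_add_two_of_not_adj_succ (hp : IsPrivatePath G C A n p) (hG : ThreePathFree G)
    (h : IndepSeparation G C A B) (hB : IsConnFull G C B) (hqA : q ∈ A)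
    (hq : q ∉ p '' Set.Ioo 0 n) {d : α} {i j : ℕ} (hi : 0 < i) (hij : i + 2 ≤ j) (hjn : j < n)
    (hd : d ∈ C) (hdi : IsPrivateNbr G A d (p (i + 1))) (hqi : G.Adj q (p i)) (hqj : G.Adj q (p j))
    (honly : ∀ k ≤ n, G.Adj q (p k) → i ≤ k ∧ k ≤ j) (hqi' : ¬ G.Adj q (p (i + 1))) :
    j = i + 2 := by
  by_contra hne
  obtain ⟨r, hr, hrp, hrd, htail⟩ := hp.exists_tail_disjoint_truncate h hi (by omega) hd hdi
  have hqp := hp.not_mem_of_not_mem_interior h hqA hq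
  have hqr : ∀ l ≤ i + 2, q ≠ r l ∧ (G.Adj q (r l) → l = i) := fun l hl => by
    rcases hl.lt_or_eq with hl | rfl
    · rw [hrp l (by omega)]
      exact ⟨fun heq => hqp ⟨l, by grind, heq.symm⟩, fun hadj => by
        have := honly l (by omega) hadj; grind⟩
    · rw [hrd]
      exact ⟨fun heq => h.left_not_mem q hqA (heq ▸ hd), fun hadj =>
        absurd ⟨i + 1, by grind, (hdi.eq q hqA hadj.symm).symm⟩ hq⟩
  have hpen : IsPendantPath G A (i + 2) r (p (i + 2)) (p n) (p '' Set.Icc (i + 2) n) :=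
    hp.isPendantPath_tail (by omega) (by omega) fun k hk hkn l hl =>
      (htail k hk hkn l hl).imp_right fun hadj h => (hadj h).1
  have hpenq : IsPendantPath G A (i + 2) r q (p n) (insert q (p '' Set.Icc j n)) := by
    have hadj : ∀ k, j ≤ k → k ≤ n → ∀ l ≤ i + 2, ¬ G.Adj (p k) (r l) := fun k hk hkn l hl h => by
      have := (htail k (by omega) hkn l hl).2 h
      omega
    refine (hp.isPendantPath_tail (by omega) hjn.le fun k hk hkn l hl =>
      ⟨(htail k (by omega) hkn l hl).1, fun h => absurd h (hadj k hk hkn l hl)⟩).cons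
      hqj hqA (by grind) ?_ (fun l hl => (hqr l hl).1) (hadj j le_rfl hjn.le)
    rintro _ ⟨k, hk, rfl⟩ hkj hqk
    exact hkj (congrArg p ((honly k hk.2 hqk).2.antisymm hk.1))
  have htripod := hr.hasTripod_of_unique_adj hpen (i := i + 1) (by omega)
    (hrp (i + 1) le_rfl ▸ (hp.adj_succ (i + 1) (by omega)).symm) fun l hl hadj =>
      ((htail (i + 2) le_rfl (by omega) l hl).2 hadj).2
  have htripodq := hr.hasTripod_of_unique_adj hpenq (i := i) (by omega)
    (hrp i (by omega) ▸ hqi) fun l hl hadj => (hqr l hl).2 hadj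
  rw [hrd, hrp 0 (by omega)] at htripod htripodq
  have hpne : ∀ k l, k < l → l ≤ n → p k ≠ p l := fun k l hkl hl heq =>
    hkl.ne (hp.inj k (by omega) l hl heq)
  obtain ⟨b, -, hab⟩ := exists_forall_hasTripod_vec_corner_eq hG h hB hp.left_mem hd hp.right_mem
    hp.left_private hdi hp.right_private (hpne _ _ (by omega) (by omega))
    (hpne _ _ (by omega) (by omega)) (hpne _ _ (by omega) (by omega))
  exact (hr.adj_succ i (by omega)).ne ((hab _ htripodq 0).trans (hab _ htripod 0).symm)

lemma containsTheta_of_adj (hp : IsPrivatePath G C A n p) (h : IndepSeparation G C A B)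
    (hB : IsConnFull G C B) (hqA : q ∈ A) (hq : q ∉ p '' Set.Ioo 0 n) {i j : ℕ} (hi : 0 < i)
    (hij : i + 2 ≤ j) (hj : j < n) (hqi : G.Adj q (p i)) (hqj : G.Adj q (p j))
    (honly : ∀ k ≤ n, G.Adj q (p k) → k = i ∨ k = j) : ContainsTheta G := by
  have hends : p 0 ≠ p n := fun heq => by have := hp.inj 0 n.zero_le n le_rfl heq; omega
  obtain ⟨m, r, hr, hr0, hrm⟩ := exists_isInteriorPath hB.connected hends
    (h.indep _ hp.left_mem _ hp.right_mem) (hB.full _ hp.left_mem) (hB.full _ hp.right_mem)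
  have hr' : ∀ w ∈ r '' Set.Iic m, w = p 0 ∨ w = p n ∨ w ∈ B := by
    rintro _ ⟨k, hk, rfl⟩
    rcases (by grind : k = 0 ∨ k = m ∨ (0 < k ∧ k < m)) with rfl | rfl | hk'
    exacts [.inl hr0, .inr (.inl hrm), .inr (.inr (hr.mem k hk'.1 hk'.2))]
  refine (hp.isHolePair hr h hr0.symm hrm.symm).containsTheta
    (hp.not_mem_of_not_mem_interior h hqA hq) (fun hqr => ?_) (fun w hw hadj => ?_) hi hij hj hqi
    hqj honly
  · rcases hr' q hqr with rfl | rfl | hqB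
    exacts [h.left_not_mem _ hqA hp.left_mem, h.left_not_mem _ hqA hp.right_mem,
      h.disjoint _ hqA hqB]
  · rcases hr' w hw with rfl | rfl | hwB
    exacts [(hp.interior_of_adj hqA hq n.zero_le hadj).1.ne rfl,
      (hp.interior_of_adj hqA hq le_rfl hadj).2.ne rfl, h.not_adj _ hqA _ hwB hadj]

end IsPrivatePath

namespace IsMaxPrivatePath

variable {C A B : Set α} {n : ℕ} {p : ℕ → α} {q s c : α} {i j : ℕ}

lemma not_unique_adj (hp : IsMaxPrivatePath G C A n p) {R : Set α}
    (hq : IsNonCut G A q) (hR : IsInducedPathSet G q s R)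
    (hRA : R ⊆ A) (hpen : IsPendantPath G A n p s c (insert c R)) (hi : i = 1 ∨ i = n - 1)
    (hsi : G.Adj s (p i)) (hs : ∀ k ≤ n, G.Adj s (p k) → k = i) : False := by
  have hn := hp.three_le
  have hS : IsInducedPathSet G (p 1) (p (n - 1)) (p '' Set.Ioo 0 n) := by
    have hIoo : Set.Ioo 0 n = Set.Icc 1 (n - 1) := by
      ext k
      simp only [Set.mem_Ioo, Set.mem_Icc]
      omega
    rw [hIoo]
    exact hp.isInducedPathSet_Icc (by omega) (by omega)
  have hRS : ∀ w ∈ R, w ∉ p '' Set.Ioo 0 n := by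
    rintro w hw ⟨k, hk, hkw⟩
    exact hpen.ne w (.inr hw) k hk.2.le hkw.symm
  have hadj : ∀ x ∈ R, ∀ y ∈ p '' Set.Ioo 0 n, G.Adj x y → x = s ∧ y = p i := by
    rintro x hx _ ⟨k, hk, rfl⟩ hxk
    obtain rfl : x = s := hpen.eq_of_adj (.inr hx) hk.2.le hxk.symm
    exact ⟨rfl, congrArg p (hs k hk.2.le hxk)⟩
  rcases hi with rfl | rfl
  · exact not_maximal_isNonCutPath_of_attached hS hp.right_nonCut hR hRA hq hRS hsi hadj hp.maximal
  · exact not_maximal_isNonCutPath_of_attached hS.symm hp.left_nonCut hR hRA hq hRS hsi hadj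
      hp.maximal

lemma exists_distant_adj (hp : IsMaxPrivatePath G C A n p) (hG : ThreePathFree G)
    (h : IndepSeparation G C A B) (hA : (G.induce A).Connected) (hB : IsConnFull G C B)
    (hq : IsNonCut G A q) (hqp : q ∉ p '' Set.Ioo 0 n) (hc : c ∈ C) (hcq : IsPrivateNbr G A c q) :
    ∃ i j, 0 < i ∧ i + 2 ≤ j ∧ j < n ∧ G.Adj q (p i) ∧ G.Adj q (p j) ∧
      ∀ k ≤ n, G.Adj q (p k) → i ≤ k ∧ k ≤ j := by
  have hn := hp.three_le
  obtain ⟨s, R, hRA, hR, hpen, hadj⟩ := hp.exists_isPendantPath h hA hqp hc hcq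
  have hsp : s ∉ p '' Set.Ioo 0 n := fun ⟨k, hk, hks⟩ =>
    hpen.ne s (.inr hR.right_mem) k hk.2.le hks.symm
  obtain ⟨i, j, hij, hj, hsi, hsj, hs⟩ := exists_first_last hadj
  obtain ⟨hi0, hin⟩ := hp.interior_of_adj (hRA hR.right_mem) hsp (hij.trans hj) hsi
  obtain ⟨hj0, hjn⟩ := hp.interior_of_adj (hRA hR.right_mem) hsp hj hsj
  rcases (by omega : i = j ∨ j = i + 1 ∨ i + 2 ≤ j) with rfl | rfl | hij
  · have hs' : ∀ k ≤ n, G.Adj s (p k) → k = i := fun k hk hsk => by have := hs k hk hsk; omega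
    rcases (hp.hasTripod_corner_eq hG h hB hqp hc hcq
      (hp.hasTripod_of_unique_adj hpen hj hsi hs')).2 with h1 | hn1 | hiq
    · exact (hp.not_unique_adj hq hR hRA hpen
        (.inl (hp.inj i hj 1 (by omega) h1)) hsi hs').elim
    · exact (hp.not_unique_adj hq hR hRA hpen
        (.inr (hp.inj i hj (n - 1) (by omega) hn1)) hsi hs').elim
    · exact absurd ⟨i, ⟨hi0, hin⟩, hiq⟩ hqp
  · have hcorner := (hp.hasTripod_corner_eq hG h hB hqp hc hcq
      (hp.hasTripod_of_two_adj hpen hj hsi hsj hs)).1 0 1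
    exact absurd hcorner (hp.adj_succ i hj).ne
  · rcases (hp.hasTripod_corner_eq hG h hB hqp hc hcq
      (hp.hasTripod_of_distant_adj hpen hij hj hsi hsj hs)).2 with h1 | hn1 | rfl
    · exact absurd ⟨1, by grind, h1.symm⟩ hsp
    · exact absurd ⟨n - 1, by grind, hn1.symm⟩ hsp
    · exact ⟨i, j, hi0, hij, hjn, hsi, hsj, hs⟩

lemma isNonCut_of_between (hp : IsMaxPrivatePath G C A n p) (hG : ThreePathFree G)
    (h : IndepSeparation G C A B) (hfin : A.Finite) (hA : Minimal (IsConnFull G C) A)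
    (hB : IsConnFull G C B) (hqA : q ∈ A) (hqp : q ∉ p '' Set.Ioo 0 n) (hi : 0 < i) {g : ℕ}
    (hig : i < g) (hgj : g < j) (hj : j < n) (hqi : G.Adj q (p i)) (hqj : G.Adj q (p j)) :
    IsNonCut G A (p g) := by
  have hgA : p g ∈ A := hp.mem g (by omega) (by omega)
  refine ⟨hgA, by_contra fun hcut => ?_⟩
  obtain ⟨K, hKA, hK, hSK⟩ := hp.exists_connected_bypass hqA hqp hi hig hgj hj hqi hqj
  have hfinite : {W | W ⊆ A \ {p g} ∧ (G.induce W).Connected}.Finite :=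
    (hfin.subset Set.sdiff_subset).finite_subsets.subset fun W hW => hW.1
  obtain ⟨W, hKW, hW⟩ := hfinite.exists_le_maximal ⟨hKA, hK⟩
  obtain ⟨hWA, hWconn⟩ := hW.prop
  have hSW : ∀ k, 0 < k → k < n → k ≠ g → p k ∈ W := fun k hk hkn hkg =>
    hKW ((hSK ⟨k, ⟨hk, hkn⟩, rfl⟩).resolve_left fun hkg' =>
      hkg (hp.inj k hkn.le g (by omega) hkg'))
  have hinsert : (G.induce (insert (p g) W)).Connected :=
    connected_induce_insert hWconn (hSW (g + 1) (by omega) (by omega) (by omega))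
      (hp.adj_succ g (by omega))
  have hne : insert (p g) W ≠ A := fun heq =>
    hcut (by rwa [← heq, Set.insert_sdiff_self_of_notMem fun hg => (hWA hg).2 rfl])
  obtain ⟨q', hq', hnc⟩ := exists_isNonCut_of_connected_ssubset hfin hA.prop.connected hinsert
    ((Set.insert_subset hgA (hWA.trans Set.sdiff_subset)).ssubset_of_ne hne)
  obtain ⟨c', hc', hcq'⟩ := exists_isPrivateNbr_of_minimal hA hnc
  obtain ⟨i', j', hi', hij', hj', hqi', hqj', -⟩ :=
    hp.exists_distant_adj hG h hA.prop.connected hB hnc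
    (fun hmem => hq' (Set.insert_subset_insert hKW (hSK hmem))) hc' hcq'
  obtain ⟨k, hk, hqk⟩ : ∃ k, p k ∈ W ∧ G.Adj q' (p k) := by
    by_cases hig' : i' = g
    exacts [⟨j', hSW j' (by omega) (by omega) (by omega), hqj'⟩,
      ⟨i', hSW i' (by omega) (by omega) hig', hqi'⟩]
  exact hq' (.inr (hW.le_of_ge ⟨Set.insert_subset ⟨hnc.mem, fun heq => hq' (.inl heq)⟩ hWA,
    connected_induce_insert hWconn hk hqk⟩ (Set.subset_insert _ _) (Set.mem_insert _ _)))

lemma not_isNonCut (hp : IsMaxPrivatePath G C A n p) (hG : ThreePathFree G)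
    (h : IndepSeparation G C A B) (hfin : A.Finite) (hA : Minimal (IsConnFull G C) A)
    (hB : IsConnFull G C B) (hqp : q ∉ p '' Set.Ioo 0 n) : ¬ IsNonCut G A q := by
  intro hq
  obtain ⟨c, hc, hcq⟩ := exists_isPrivateNbr_of_minimal hA hq
  obtain ⟨i, j, hi, hij, hj, hqi, hqj, honly⟩ :=
    hp.exists_distant_adj hG h hA.prop.connected hB hq hqp hc hcq
  obtain ⟨d, hd, hdi⟩ := exists_isPrivateNbr_of_minimal hA
    (hp.isNonCut_of_between hG h hfin hA hB hq.mem hqp hi i.lt_succ_self hij hj hqi hqj)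
  have hqi' := hp.not_adj_succ hG h hB hqp hc hcq hi (by omega) hd hdi hqi fun k hk hqk =>
    (honly k hk hqk).1
  obtain rfl := hp.eq_add_two_of_not_adj_succ hG h hB hq.mem hqp hi hij hj hd hdi hqi hqj honly hqi'
  refine hG.theta (hp.containsTheta_of_adj h hB hq.mem hqp hi hij hj hqi hqj fun k hk hqk => ?_)
  have := honly k hk hqk
  grind

end IsMaxPrivatePath

lemma exists_eq_singleton_or_isPrivatePath {C A B : Set α} (hG : ThreePathFree G)
    (h : IndepSeparation G C A B) (hfin : A.Finite) (hA : Minimal (IsConnFull G C) A)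
    (hB : IsConnFull G C B) :
    (∃ v, A = {v}) ∨ ∃ n p, IsPrivatePath G C A n p ∧ A = p '' Set.Ioo 0 n := by
  obtain ⟨⟨x, hx⟩⟩ := hA.prop.connected.nonempty
  by_cases hsub : A.Subsingleton
  · exact .inl ⟨x, hsub.eq_singleton_of_mem hx⟩
  refine .inr ?_
  have hsingleton : ∀ y ∈ A, ∃ z ≠ y, IsNonCut G A z := fun y hy =>
    exists_isNonCut_of_connected_ssubset hfin hA.prop.connected
      (IsInducedPathSet.singleton y).connected_induce
      ((Set.singleton_subset_iff.2 hy).ssubset_of_ne fun heq =>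
        hsub (heq ▸ Set.subsingleton_singleton))
  obtain ⟨u, -, hu⟩ := hsingleton x hx
  obtain ⟨v, hvu, hv⟩ := hsingleton u hu.mem
  obtain ⟨T, hTA, hT⟩ := exists_isInducedPathSet_subset hA.prop.connected hu.mem hv.mem
  obtain ⟨S, -, hS⟩ := (hfin.finite_subsets.subset fun S (hS : IsNonCutPath G A S) =>
    hS.1).exists_le_maximal ⟨hTA, u, v, hu, hv, Ne.symm hvu, hT⟩
  obtain ⟨hSA, u, v, hu, hv, huv, hpath⟩ := hS.prop
  obtain ⟨c, hc, hcu⟩ := exists_isPrivateNbr_of_minimal hA hu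
  obtain ⟨d, hd, hdv⟩ := exists_isPrivateNbr_of_minimal hA hv
  obtain ⟨n, p, hp, rfl, rfl, rfl, rfl, rfl⟩ :=
    hpath.exists_isPrivatePath hSA huv h hc hd hcu hdv
  have hmax : IsMaxPrivatePath G C A n p := ⟨hp, hu, hv, hS⟩
  refine ⟨n, p, hp, by_contra fun hne => ?_⟩
  obtain ⟨q, hqp, hq⟩ := exists_isNonCut_of_connected_ssubset hfin hA.prop.connected
    hpath.connected_induce (hSA.ssubset_of_ne (Ne.symm hne))
  exact hmax.not_isNonCut hG h hfin hA hB hqp hq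

/-! ### Two-wheels over a pair of paths -/

/-- The closed walk that follows `p 0, …, p n` and returns along `q m, …, q 0`. -/
def holeSeq (n m : ℕ) (p q : ℕ → α) (i : ℕ) : α := if i ≤ n then p i else q (n + m - i)

/-- The closed walk `holeSeq` as a cyclic sequence. -/
def holeMap (n m : ℕ) (p q : ℕ → α) (z : ZMod (n + m)) : α := holeSeq n m p q z.val

/-- The part of membership in `𝒞` that concerns 2-wheels. -/
def TwoWheelsNestedOrCousin (G : SimpleGraph α) : Prop :=
  ∀ (n : ℕ) (f : ZMod n → α) (u v : α), Is2WheelCfg G n f u v → ¬ G.Adj u v →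
    NestedCfg G n f u v ∨ CousinCfg G n f u v

/-- Apart from `f 0`, the neighbors of `u` on the cyclic sequence `f` lie in a stretch of
`f 1, …, f (N - 1)` whose interior avoids the neighbors of `v`. -/
def IsNestedAlong (G : SimpleGraph α) (N : ℕ) (f : ZMod N → α) (u v : α) : Prop :=
  ∃ a b : ℕ, (∀ i : ℕ, 0 < i → i < N → G.Adj u (f i) → a ≤ i ∧ i ≤ b) ∧
    ∀ i : ℕ, 0 < i → i < N → G.Adj v (f i) → i ≤ a ∨ b ≤ i

lemma exists_natCast_eq {N : ℕ} (hN : 0 < N) (z : ZMod N) : ∃ a < N, (a : ZMod N) = z := by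
  have : NeZero N := ⟨hN.ne'⟩
  exact ⟨z.val, z.val_lt, ZMod.natCast_zmod_val z⟩

lemma eq_or_eq_add_of_natCast_eq {N a k : ℕ} (ha : a < N) (hk : k < 2 * N)
    (h : (a : ZMod N) = (k : ZMod N)) : k = a ∨ k = a + N := by
  rw [ZMod.natCast_eq_natCast_iff', Nat.mod_eq_of_lt ha] at h
  rcases lt_or_ge k N with hkN | hkN
  · exact .inl (h.trans (Nat.mod_eq_of_lt hkN)).symm
  · rw [Nat.mod_eq_sub_mod hkN, Nat.mod_eq_of_lt (by omega)] at h
    omega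

lemma isHoleEmb_of_seq {N : ℕ} {f : ZMod N → α} {s : ℕ → α} (hN : 4 ≤ N)
    (hf : ∀ i ≤ N, f i = s i) (hinj : ∀ i j, i < j → j < N → s i ≠ s j)
    (hstep : ∀ i < N, G.Adj (s i) (s (i + 1)))
    (hadj : ∀ i j, i < j → j < N → G.Adj (s i) (s j) → j = i + 1 ∨ (i = 0 ∧ j + 1 = N)) :
    IsHoleEmb G N f := by
  have hsucc : ∀ z : ZMod N, G.Adj (f z) (f (z + 1)) := fun z => by
    obtain ⟨a, ha, rfl⟩ := exists_natCast_eq (by omega) z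
    have := hstep a ha
    rwa [← hf a ha.le, ← hf (a + 1) ha, Nat.cast_add, Nat.cast_one] at this
  have hadj' : ∀ i j : ℕ, i < j → j < N → G.Adj (s i) (s j) →
      (j : ZMod N) = i + 1 ∨ (i : ZMod N) = j + 1 := fun i j hij hj hsij => by
    rcases hadj i j hij hj hsij with rfl | ⟨rfl, hjN⟩
    · exact .inl (by push_cast; rfl)
    · have hz : ((j + 1 : ℕ) : ZMod N) = 0 := by rw [hjN, ZMod.natCast_self]
      exact .inr (by rw [Nat.cast_zero, ← hz, Nat.cast_add, Nat.cast_one])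
  refine ⟨hN, fun z w hzw => ?_, fun z w => ⟨fun hzw => ?_, ?_⟩⟩
  · obtain ⟨a, ha, rfl⟩ := exists_natCast_eq (by omega) z
    obtain ⟨b, hb, rfl⟩ := exists_natCast_eq (by omega) w
    rw [hf a ha.le, hf b hb.le] at hzw
    rcases lt_trichotomy a b with hab | rfl | hab
    exacts [absurd hzw (hinj a b hab hb), rfl, absurd hzw.symm (hinj b a hab ha)]
  · obtain ⟨a, ha, rfl⟩ := exists_natCast_eq (by omega) z
    obtain ⟨b, hb, rfl⟩ := exists_natCast_eq (by omega) w
    rw [hf a ha.le, hf b hb.le] at hzw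
    rcases lt_trichotomy a b with hab | rfl | hab
    exacts [hadj' a b hab hb hzw, absurd hzw G.irrefl, (hadj' b a hab ha hzw.symm).symm]
  · rintro (rfl | rfl)
    exacts [hsucc z, (hsucc w).symm]

lemma three_le_ncard_of_natCast {N i j k : ℕ} {S : Set (ZMod N)} (hij : i < j) (hjk : j < k)
    (hk : k < N) (hi : (i : ZMod N) ∈ S) (hj : (j : ZMod N) ∈ S) (hkS : (k : ZMod N) ∈ S) :
    3 ≤ S.ncard := by
  have : NeZero N := ⟨by omega⟩
  have hne : ∀ a b : ℕ, a < b → b < N → (a : ZMod N) ≠ b := fun a b hab hb h => by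
    have := eq_or_eq_add_of_natCast_eq (hab.trans hb) (by omega) h
    omega
  exact (Set.two_lt_ncard_iff S.toFinite).2 ⟨i, j, k, hi, hj, hkS, hne _ _ hij (by omega),
    hne _ _ (by omega) hk, hne _ _ hjk hk⟩

lemma NestedCfg.isNestedAlong_or {N : ℕ} {f : ZMod N → α} {u v : α} (h : NestedCfg G N f u v) :
    IsNestedAlong G N f u v ∨ IsNestedAlong G N f v u := by
  obtain ⟨z, d, hd, hdN, hu, hv⟩ := h
  obtain ⟨a, ha, rfl⟩ := exists_natCast_eq (by omega) z
  have hu' : ∀ i : ℕ, i < N → G.Adj u (f i) → ∃ e ≤ d, a + e = i ∨ a + e = i + N :=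
    fun i hi hadj => by
      obtain ⟨e, he, hie⟩ := hu _ hadj
      exact ⟨e, he, eq_or_eq_add_of_natCast_eq hi (by omega) (by rw [hie]; push_cast; rfl)⟩
  have hv' : ∀ i : ℕ, i < N → G.Adj v (f i) → ∃ e ≤ N - d, a + d + e = i ∨ a + d + e = i + N :=
    fun i hi hadj => by
      obtain ⟨e, he, hie⟩ := hv _ hadj
      exact ⟨e, he, eq_or_eq_add_of_natCast_eq hi (by omega) (by rw [hie]; push_cast; rfl)⟩
  rcases lt_or_ge (a + d) N with had | had
  · refine .inl ⟨a, a + d, fun i _ hi hadj => ?_, fun i _ hi hadj => ?_⟩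
    · obtain ⟨e, he, hie⟩ := hu' i hi hadj
      omega
    · obtain ⟨e, he, hie⟩ := hv' i hi hadj
      omega
  · refine .inr ⟨a + d - N, a, fun i _ hi hadj => ?_, fun i _ hi hadj => ?_⟩
    · obtain ⟨e, he, hie⟩ := hv' i hi hadj
      omega
    · obtain ⟨e, he, hie⟩ := hu' i hi hadj
      omega

lemma mem_zero_or_mem_of_consecutive {N n i j : ℕ} {S : Set (ZMod N)} {z : ZMod N}
    (hS : S = {z, z + 1, z + 2}) (hi : 0 < i) (hin : i < n) (hnj : n < j) (hj : j < N)
    (hiS : (i : ZMod N) ∈ S) (hjS : (j : ZMod N) ∈ S) : 0 ∈ S ∨ (n : ZMod N) ∈ S := by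
  obtain ⟨a, ha, rfl⟩ := exists_natCast_eq (by omega) z
  have hmem : ∀ w, w ∈ S ↔ ∃ e ≤ 2, w = ((a + e : ℕ) : ZMod N) := fun w => by
    simp only [hS, Set.mem_insert_iff, Set.mem_singleton_iff, Nat.cast_add]
    refine ⟨?_, ?_⟩
    · rintro (rfl | rfl | rfl)
      exacts [⟨0, by omega, by simp⟩, ⟨1, by omega, by simp⟩, ⟨2, le_rfl, by simp⟩]
    · rintro ⟨e, he, rfl⟩
      interval_cases e <;> simp
  obtain ⟨e, he, hie⟩ := (hmem _).1 hiS
  obtain ⟨e', he', hje⟩ := (hmem _).1 hjS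
  have hie := eq_or_eq_add_of_natCast_eq (hin.trans (hnj.trans hj)) (by omega) hie
  have hje := eq_or_eq_add_of_natCast_eq hj (by omega) hje
  by_cases hN : ∃ e ≤ 2, a + e = N
  · obtain ⟨e, he, hN⟩ := hN
    exact .inl ((hmem 0).2 ⟨e, he, by rw [hN, ZMod.natCast_self]⟩)
  · have hN0 : a + 0 ≠ N := fun h => hN ⟨0, by omega, h⟩
    have hN1 : a + 1 ≠ N := fun h => hN ⟨1, by omega, h⟩
    have hN2 : a + 2 ≠ N := fun h => hN ⟨2, by omega, h⟩
    exact .inr ((hmem n).2 ⟨1, by omega, congrArg _ (by omega)⟩)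

/-- A vertex that together with the rim `holeMap n m p q` forms a wheel. -/
structure IsWheelCenter (G : SimpleGraph α) (n m : ℕ) (p q : ℕ → α) (u : α) : Prop where
  not_mem : u ∉ Set.range (holeMap n m p q)
  three_le : 3 ≤ {z | G.Adj u (holeMap n m p q z)}.ncard

/-- A wheel center with neighbors in the interiors of both paths, but not adjacent to their ends. -/
structure IsSpanCenter (G : SimpleGraph α) (n m : ℕ) (p q : ℕ → α) (u : α) : Prop
    extends IsWheelCenter G n m p q u where
  not_adj_zero : ¬ G.Adj u (p 0)
  not_adj_last : ¬ G.Adj u (p n)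
  left : ∃ i, 0 < i ∧ i < n ∧ G.Adj u (p i)
  right : ∃ i, 0 < i ∧ i < m ∧ G.Adj u (q i)

/-- Along both paths, no neighbor of `u` comes after a neighbor of `v`. -/
def Precedes (G : SimpleGraph α) (n m : ℕ) (p q : ℕ → α) (u v : α) : Prop :=
  (∀ i j, i ≤ n → j ≤ n → G.Adj u (p i) → G.Adj v (p j) → i ≤ j) ∧
    ∀ i j, i ≤ m → j ≤ m → G.Adj u (q i) → G.Adj v (q j) → i ≤ j

section IsHolePair
variable {n m : ℕ} {p q : ℕ → α} {u v w : α}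

lemma holeSeq_of_le {i : ℕ} (hi : i ≤ n) : holeSeq n m p q i = p i := if_pos hi

lemma IsHolePair.holeSeq_of_ge (h : IsHolePair G n m p q) {i : ℕ} (hi : n ≤ i) :
    holeSeq n m p q i = q (n + m - i) := by
  rcases hi.eq_or_lt with rfl | hi
  · rw [holeSeq_of_le le_rfl, h.last, Nat.add_sub_cancel_left]
  · exact if_neg hi.not_ge

lemma IsHolePair.holeMap_natCast (h : IsHolePair G n m p q) {i : ℕ} (hi : i ≤ n + m) :
    holeMap n m p q i = holeSeq n m p q i := by
  rcases hi.lt_or_eq with hi | rfl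
  · simp only [holeMap, ZMod.val_natCast, Nat.mod_eq_of_lt hi]
  · rw [h.holeSeq_of_ge (by omega), Nat.sub_self, ← h.zero, ZMod.natCast_self]
    have := h.two_le_left
    exact (congrArg _ (ZMod.val_zero (n := n + m))).trans (holeSeq_of_le n.zero_le)

lemma IsHolePair.holeMap_left (h : IsHolePair G n m p q) {i : ℕ} (hi : i ≤ n) :
    holeMap n m p q i = p i := by
  rw [h.holeMap_natCast (by omega), holeSeq_of_le hi]

lemma IsHolePair.holeMap_right (h : IsHolePair G n m p q) {i : ℕ} (hi : i ≤ m) :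
    holeMap n m p q (n + m - i : ℕ) = q i := by
  rw [h.holeMap_natCast (by omega), h.holeSeq_of_ge (by omega)]
  congr 1
  omega

lemma IsHolePair.range_holeMap (h : IsHolePair G n m p q) :
    Set.range (holeMap n m p q) = p '' Set.Iic n ∪ q '' Set.Iic m := by
  have := h.two_le_left
  refine Set.Subset.antisymm ?_ (Set.union_subset ?_ ?_)
  · rintro _ ⟨z, rfl⟩
    obtain ⟨a, ha, rfl⟩ := exists_natCast_eq (by omega) z
    rw [h.holeMap_natCast ha.le]
    rcases le_total a n with han | han
    · exact .inl ⟨a, han, (holeSeq_of_le han).symm⟩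
    · exact .inr ⟨n + m - a, Set.mem_Iic.2 (by omega), (h.holeSeq_of_ge han).symm⟩
  · rintro _ ⟨i, hi, rfl⟩
    exact ⟨i, h.holeMap_left hi⟩
  · rintro _ ⟨i, hi, rfl⟩
    exact ⟨(n + m - i : ℕ), h.holeMap_right hi⟩

lemma IsHolePair.holeSeq_ne (h : IsHolePair G n m p q) {i j : ℕ} (hij : i < j) (hj : j < n + m) :
    holeSeq n m p q i ≠ holeSeq n m p q j := by
  intro heq
  rcases le_or_gt j n with hjn | hjn
  · rw [holeSeq_of_le (by omega), holeSeq_of_le hjn] at heq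
    exact hij.ne (h.left.inj i (by omega) j hjn heq)
  rw [h.holeSeq_of_ge hjn.le] at heq
  rcases le_or_gt i n with hin | hin
  · rw [holeSeq_of_le hin] at heq
    exact h.symm.left_not_mem (k := n + m - j) (by omega) (by omega) ⟨i, hin, heq⟩
  · rw [h.holeSeq_of_ge hin.le] at heq
    have := h.right.inj _ (by omega) _ (by omega) heq
    omega

lemma IsHolePair.adj_holeSeq_succ (h : IsHolePair G n m p q) {i : ℕ} (hi : i < n + m) :
    G.Adj (holeSeq n m p q i) (holeSeq n m p q (i + 1)) := by
  rcases lt_or_ge i n with hin | hin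
  · rw [holeSeq_of_le hin.le, holeSeq_of_le hin]
    exact h.left.adj_succ i hin
  · rw [h.holeSeq_of_ge hin, h.holeSeq_of_ge (by omega),
      show n + m - i = n + m - (i + 1) + 1 by omega]
    exact (h.right.adj_succ _ (by omega)).symm

lemma IsHolePair.eq_of_adj_holeSeq (h : IsHolePair G n m p q) {i j : ℕ} (hij : i < j)
    (hj : j < n + m) (hadj : G.Adj (holeSeq n m p q i) (holeSeq n m p q j)) :
    j = i + 1 ∨ (i = 0 ∧ j + 1 = n + m) := by
  rcases le_or_gt j n with hjn | hjn
  · rw [holeSeq_of_le (by omega), holeSeq_of_le hjn] at hadj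
    have := h.left.consecutive i (by omega) j hjn hadj
    omega
  rw [h.holeSeq_of_ge hjn.le] at hadj
  rcases le_or_gt i n with hin | hin
  · rw [holeSeq_of_le hin] at hadj
    rcases h.symm.eq_of_adj_right (by omega) (by omega) ⟨i, hin, rfl⟩ hadj.symm
      with ⟨hj, hi⟩ | ⟨hj, hi⟩
    · have := h.left.inj i hin 0 n.zero_le (hi.trans h.zero.symm)
      omega
    · have := h.left.inj i hin n le_rfl (hi.trans h.last.symm)
      omega
  · rw [h.holeSeq_of_ge hin.le] at hadj
    have := h.right.consecutive _ (by omega) _ (by omega) hadj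
    omega

lemma IsHolePair.isHoleEmb (h : IsHolePair G n m p q) :
    IsHoleEmb G (n + m) (holeMap n m p q) :=
  isHoleEmb_of_seq (by have := h.two_le_left; have := h.two_le_right; omega)
    (fun _ => h.holeMap_natCast) (fun _ _ => h.holeSeq_ne) (fun _ => h.adj_holeSeq_succ)
    fun _ _ => h.eq_of_adj_holeSeq

lemma IsSpanCenter.pos_and_lt_of_adj_left (hu : IsSpanCenter G n m p q u) {i : ℕ} (hi : i ≤ n)
    (hadj : G.Adj u (p i)) : 0 < i ∧ i < n :=
  ⟨Nat.pos_of_ne_zero fun h => hu.not_adj_zero (h ▸ hadj),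
    hi.lt_of_ne fun h => hu.not_adj_last (h ▸ hadj)⟩

lemma IsSpanCenter.pos_and_lt_of_adj_right (hu : IsSpanCenter G n m p q u)
    (h : IsHolePair G n m p q) {i : ℕ} (hi : i ≤ m) (hadj : G.Adj u (q i)) : 0 < i ∧ i < m :=
  ⟨Nat.pos_of_ne_zero fun h0 => hu.not_adj_zero (h.zero ▸ h0 ▸ hadj),
    hi.lt_of_ne fun hm => hu.not_adj_last (h.last ▸ hm ▸ hadj)⟩

lemma IsSpanCenter.ne_consecutive (hu : IsSpanCenter G n m p q u) (h : IsHolePair G n m p q)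
    (z : ZMod (n + m)) : {w | G.Adj u (holeMap n m p q w)} ≠ {z, z + 1, z + 2} := by
  intro hz
  obtain ⟨i, hi, hin, hui⟩ := hu.left
  obtain ⟨j, hj, hjm, huj⟩ := hu.right
  rw [← h.holeMap_left hin.le] at hui
  rw [← h.holeMap_right hjm.le] at huj
  rcases mem_zero_or_mem_of_consecutive hz hi hin (by omega) (by omega) hui huj with h0 | hn
  · exact hu.not_adj_zero (by simpa [← h.holeMap_left n.zero_le] using h0)
  · exact hu.not_adj_last (by simpa [h.holeMap_left le_rfl] using hn)

lemma IsSpanCenter.isNestedAlong_or (hu : IsSpanCenter G n m p q u) (h : IsHolePair G n m p q)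
    (hW : TwoWheelsNestedOrCousin G) (hv : IsWheelCenter G n m p q v) (huv : u ≠ v)
    (hadj : ¬ G.Adj u v) : IsNestedAlong G (n + m) (holeMap n m p q) u v ∨
      IsNestedAlong G (n + m) (holeMap n m p q) v u := by
  rcases hW _ _ u v ⟨h.isHoleEmb, huv, hu.not_mem, hv.not_mem, hu.three_le, hv.three_le⟩ hadj with
    hnested | ⟨z, hz, -⟩ | ⟨z, -, hz⟩
  · exact hnested.isNestedAlong_or
  · exact absurd (Set.ext hz) (hu.ne_consecutive h z)
  · refine absurd (Set.ext fun w => (hz w).trans ?_) (hu.ne_consecutive h (z + 1))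
    simp only [Set.mem_insert_iff, Set.mem_singleton_iff, add_assoc]
    norm_num

lemma IsNestedAlong.precedes (hN : IsNestedAlong G (n + m) (holeMap n m p q) u v)
    (h : IsHolePair G n m p q) (hu : IsSpanCenter G n m p q u) (hv : IsSpanCenter G n m p q v) :
    Precedes G n m p q v u := by
  obtain ⟨a, b, hau, hav⟩ := hN
  obtain ⟨i, hi, hin, hui⟩ := hu.left
  obtain ⟨j, hj, hjm, huj⟩ := hu.right
  have hai := hau i hi (by omega) (by rwa [h.holeMap_left hin.le])
  have haj := hau (n + m - j) (by omega) (by omega) (by rwa [h.holeMap_right hjm.le])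
  refine ⟨fun k l hk hl hvk hul => ?_, fun k l hk hl hvk hul => ?_⟩
  · have hk' := hv.pos_and_lt_of_adj_left hk hvk
    have hl' := hu.pos_and_lt_of_adj_left hl hul
    have := hav k hk'.1 (by omega) (by rwa [h.holeMap_left hk])
    have := hau l hl'.1 (by omega) (by rwa [h.holeMap_left hl])
    omega
  · have hk' := hv.pos_and_lt_of_adj_right h hk hvk
    have hl' := hu.pos_and_lt_of_adj_right h hl hul
    have := hav (n + m - k) (by omega) (by omega) (by rwa [h.holeMap_right hk])
    have := hau (n + m - l) (by omega) (by omega) (by rwa [h.holeMap_right hl])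
    omega

lemma IsSpanCenter.precedes_or_precedes (hu : IsSpanCenter G n m p q u)
    (hv : IsSpanCenter G n m p q v) (h : IsHolePair G n m p q) (hW : TwoWheelsNestedOrCousin G)
    (huv : u ≠ v) (hadj : ¬ G.Adj u v) :
    Precedes G n m p q u v ∨ Precedes G n m p q v u :=
  (hu.isNestedAlong_or h hW hv.toIsWheelCenter huv hadj).symm.imp (fun hN => hN.precedes h hv hu)
    fun hN => hN.precedes h hu hv

lemma IsSpanCenter.not_adj_of_between (hu : IsSpanCenter G n m p q u)
    (hv : IsWheelCenter G n m p q v) (h : IsHolePair G n m p q) (hW : TwoWheelsNestedOrCousin G)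
    (huv : u ≠ v) (hadj : ¬ G.Adj u v) {i j k : ℕ} (hi : 0 < i) (hij : i < j) (hjk : j < k)
    (hk : k < n) (hvi : G.Adj v (p i)) (hvk : G.Adj v (p k)) : ¬ G.Adj u (p j) := by
  intro huj
  obtain ⟨l, hl, hlm, hul⟩ := hu.right
  rw [← h.holeMap_left (by omega)] at hvi hvk huj
  rw [← h.holeMap_right hlm.le] at hul
  rcases hu.isNestedAlong_or h hW hv huv hadj with ⟨a, b, hau, hav⟩ | ⟨a, b, hav, hau⟩
  · have := hau j (by omega) (by omega) huj
    have := hau _ (by omega) (by omega) hul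
    have := hav i hi (by omega) hvi
    have := hav k (by omega) (by omega) hvk
    omega
  · have := hav i hi (by omega) hvi
    have := hav k (by omega) (by omega) hvk
    have := hau j (by omega) (by omega) huj
    omega

lemma Precedes.trans (huv : Precedes G n m p q u v) (hvw : Precedes G n m p q v w)
    (hv : IsSpanCenter G n m p q v) : Precedes G n m p q u w := by
  obtain ⟨k, -, hk, hvk⟩ := hv.left
  obtain ⟨l, -, hl, hvl⟩ := hv.right
  exact ⟨fun i j hi hj hui hwj =>
      (huv.1 i k hi hk.le hui hvk).trans (hvw.1 k j hk.le hj hvk hwj),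
    fun i j hi hj hui hwj => (huv.2 i l hi hl.le hui hvl).trans (hvw.2 l j hl.le hj hvl hwj)⟩

lemma Precedes.not_precedes (huv : Precedes G n m p q u v) (h : IsHolePair G n m p q)
    (hu : IsSpanCenter G n m p q u) (hv : IsSpanCenter G n m p q v) :
    ¬ Precedes G n m p q v u := by
  intro hvu
  have huu := huv.trans hvu hv
  obtain ⟨i, -, hi, hui⟩ := hu.left
  obtain ⟨j, -, hj, huj⟩ := hu.right
  have hsub : {z | G.Adj u (holeMap n m p q z)} ⊆
      {(i : ZMod (n + m)), ((n + m - j : ℕ) : ZMod _)} := by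
    intro z hz
    obtain ⟨a, ha, rfl⟩ := exists_natCast_eq (by omega) z
    rw [Set.mem_ofPred_eq, h.holeMap_natCast ha.le] at hz
    rcases le_total a n with han | han
    · rw [holeSeq_of_le han] at hz
      exact .inl (congrArg _ ((huu.1 a i han hi.le hz hui).antisymm (huu.1 i a hi.le han hui hz)))
    · rw [h.holeSeq_of_ge han] at hz
      have haj := (huu.2 _ j (by omega) hj.le hz huj).antisymm
        (huu.2 j _ hj.le (by omega) huj hz)
      exact .inr (congrArg _ (by omega))
  have hcard := (Set.ncard_le_ncard hsub (Set.toFinite _)).trans (Set.ncard_insert_le _ _)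
  rw [Set.ncard_singleton] at hcard
  have := hu.three_le
  omega

end IsHolePair

/-! ### Common ends for the two sides -/

/-- Some induced path from `x` to `y` has interior exactly `A`. -/
def IsSpannedByPath (G : SimpleGraph α) (A : Set α) (x y : α) : Prop :=
  ∃ n p, IsInteriorPath G A n p ∧ p 0 = x ∧ p n = y ∧ A = p '' Set.Ioo 0 n

/-- `A` is an induced path from `u` to `v`, where `u ≠ v` are the only neighbors in `A` of the
vertices `x` and `y` of `C`. -/
structure IsPrivateSpan (G : SimpleGraph α) (C A : Set α) (x u v y : α) : Prop where
  left_mem : x ∈ C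
  right_mem : y ∈ C
  left_private : IsPrivateNbr G A x u
  right_private : IsPrivateNbr G A y v
  ne : u ≠ v
  path : IsInducedPathSet G u v A

/-- The first and the last neighbor of `z` on the path `p 0, …, p n` are the interior vertices
`p i` and `p j`, and these are at distance at least two. -/
structure IsSpread (G : SimpleGraph α) (n : ℕ) (p : ℕ → α) (z : α) (i j : ℕ) : Prop where
  pos : 0 < i
  add_two_le : i + 2 ≤ j
  lt : j < n
  adj_left : G.Adj z (p i)
  adj_right : G.Adj z (p j)
  between : ∀ k ≤ n, G.Adj z (p k) → i ≤ k ∧ k ≤ j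

section CommonEnds

variable {C A B : Set α} {n m : ℕ} {p q : ℕ → α}

lemma IsInteriorPath.isPendantPath_singleton (hp : IsInteriorPath G A n p) {z : α} (hz : z ∉ A)
    (hz0 : z ≠ p 0) (hzn : z ≠ p n) : IsPendantPath G A n p z z {z} where
  path := .singleton z
  subset _ hv := .inr hv
  ne := by
    rintro _ rfl i hi rfl
    rcases (by omega : i = 0 ∨ i = n ∨ 0 < i ∧ i < n) with rfl | rfl | hi
    exacts [hz0 rfl, hzn rfl, hz (hp.mem i hi.1 hi.2)]
  not_adj _ hv hne := absurd hv hne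

namespace IsPrivatePath

variable {z : α}

lemma exists_hasTripod_foot (hp : IsPrivatePath G C A n p) (h : IndepSeparation G C A B)
    (hA : A ⊆ p '' Set.Ioo 0 n) (hz : z ∈ C) (hz0 : z ≠ p 0) (hzn : z ≠ p n)
    (hzA : ∃ a ∈ A, G.Adj z a) :
    ∃ a, HasTripod G A a ![p 0, p n, z] ∧ (∀ i, a i ∈ A ∨ a i = z) ∧
      ((∀ i j, a i = a j) →
        IsPrivateNbr G A z (a 0) ∨ a 0 = z ∧ ∃ i j, IsSpread G n p z i j) := by
  have hR := hp.isPendantPath_singleton (fun hzA => h.left_not_mem z hzA hz) hz0 hzn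
  have hint : ∀ i ≤ n, G.Adj z (p i) → 0 < i ∧ i < n := fun i hi hzi => by
    refine ⟨Nat.pos_of_ne_zero ?_, hi.lt_of_ne ?_⟩ <;> rintro rfl
    exacts [h.indep _ hz _ hp.left_mem hzi, h.indep _ hz _ hp.right_mem hzi]
  obtain ⟨_, ha, hza⟩ := hzA
  obtain ⟨l, hl, rfl⟩ := hA ha
  obtain ⟨i, j, hij, hj, hzi, hzj, honly⟩ := exists_first_last
    (P := fun k => G.Adj z (p k)) ⟨l, hl.2.le, hza⟩
  have hi := hint i (by omega) hzi
  have hj' := hint j hj hzj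
  have hiA := hp.mem i hi.1 hi.2
  rcases (by omega : i = j ∨ j = i + 1 ∨ i + 2 ≤ j) with rfl | rfl | hij
  · have huniq : ∀ k ≤ n, G.Adj z (p k) → k = i := fun k hk hzk =>
      (honly k hk hzk).2.antisymm (honly k hk hzk).1
    refine ⟨_, hp.hasTripod_of_unique_adj hR hj hzi huniq, fun _ => .inl hiA,
      fun _ => .inl ⟨hiA, hzi, fun b hb hzb => ?_⟩⟩
    obtain ⟨k, hk, rfl⟩ := hA hb
    rw [huniq k hk.2.le hzb]
  · refine ⟨_, hp.hasTripod_of_two_adj hR hj hzi hzj honly, ?_, fun hconst =>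
      absurd (hconst 0 1) (hp.adj_succ i hi.2).ne⟩
    simp [Fin.forall_fin_succ, hiA, hp.mem _ hj'.1 hj'.2]
  · exact ⟨_, hp.hasTripod_of_distant_adj hR hij hj hzi hzj honly, fun _ => .inr rfl,
      fun _ => .inr ⟨rfl, i, j, hi.1, hij, hj'.2, hzi, hzj, honly⟩⟩

lemma left_ne_right (hp : IsPrivatePath G C A n p) : p 0 ≠ p n := fun heq => by
  have := hp.inj 0 (by omega) n le_rfl heq
  have := hp.two_le
  omega

lemma feet_mem (hp : IsPrivatePath G C A n p) (hz : z ∈ C) (i : Fin 3) :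
    ![p 0, p n, z] i ∈ C := by
  fin_cases i
  exacts [hp.left_mem, hp.right_mem, hz]

lemma feet_injective (hp : IsPrivatePath G C A n p) (hz0 : z ≠ p 0) (hzn : z ≠ p n) :
    (![p 0, p n, z]).Injective := by
  have h0n := hp.left_ne_right
  simp [Function.Injective, Fin.forall_fin_succ, h0n, h0n.symm, hz0, hz0.symm, hzn, hzn.symm]

lemma exists_hasTripod_right (hp : IsPrivatePath G C A n p) (h : IndepSeparation G C A B)
    (hB : IsConnFull G C B) (hz : z ∈ C) (hz0 : z ≠ p 0) (hzn : z ≠ p n) {u : α}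
    (hzu : IsPrivateNbr G B z u) :
    ∃ b, HasTripod G B b ![p 0, p n, z] ∧ ∀ i, b i ∈ B ∨ b i = p 0 ∨ b i = p n := by
  have ht := hp.feet_mem hz
  have hinj := hp.feet_injective hz0 hzn
  obtain ⟨b, leg, hleg⟩ := exists_hasTripod_of_isConnFull h hB ht hinj
  refine ⟨b, ⟨leg, hleg⟩, fun i => (hleg.corner i).imp_right ?_⟩
  rintro ⟨j, hij, hj⟩
  fin_cases j
  exacts [.inl hj, .inr hj, absurd (hij.symm.trans hj) (hleg.corner_ne_foot (j := 2) hinj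
    (fun i j => h.indep _ (ht i) _ (ht j)) hzu)]

lemma exists_isSpread_and_hasTripod (hp : IsPrivatePath G C A n p) (hG : ThreePathFree G)
    (h : IndepSeparation G C A B) (hA : A ⊆ p '' Set.Ioo 0 n) (hB : IsConnFull G C B) (hz : z ∈ C)
    (hz0 : z ≠ p 0) (hzn : z ≠ p n) (hzA : ∃ a ∈ A, G.Adj z a) {u : α} (hzu : IsPrivateNbr G B z u)
    (hz1 : ¬ IsPrivateNbr G A z (p 1)) (hzn1 : ¬ IsPrivateNbr G A z (p (n - 1))) :
    (∃ i j, IsSpread G n p z i j) ∧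
      ∃ b ∈ B, G.Adj z b ∧ HasTripod G B (fun _ => b) ![p 0, p n, z] := by
  obtain ⟨a, ha, haA, hconst⟩ := hp.exists_hasTripod_foot h hA hz hz0 hzn hzA
  obtain ⟨b, hb, hbB⟩ := hp.exists_hasTripod_right h hB hz hz0 hzn hzu
  have hab : ¬ ∃ i j, a i = b j := by
    rintro ⟨i, j, heq⟩
    have := h.left_not_mem
    have := h.right_not_mem
    have := h.disjoint
    have := hp.left_mem
    have := hp.right_mem
    grind
  obtain ⟨ha', hb', hadj⟩ := (ha.corner_eq_or_adj hG h (hp.feet_mem hz) hb).resolve_left hab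
  rcases hconst ha' with hpriv | ⟨ha0, hspread⟩
  · exfalso
    rcases hbB 0 with h0 | h0 | h0
    · exact h.not_adj _ hpriv.mem _ h0 hadj
    · exact hz1 (hp.left_private.eq _ hpriv.mem (h0 ▸ hadj.symm) ▸ hpriv)
    · exact hzn1 (hp.right_private.eq _ hpriv.mem (h0 ▸ hadj.symm) ▸ hpriv)
  · refine ⟨hspread, b 0, (hbB 0).resolve_right ?_, ha0 ▸ hadj, (funext (hb' · 0)) ▸ hb⟩
    rintro (h0 | h0) <;> rw [ha0, h0] at hadj
    exacts [h.indep _ hz _ hp.left_mem hadj, h.indep _ hz _ hp.right_mem hadj]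

lemma exists_isInteriorPath_through (hp : IsPrivatePath G C A n p) (h : IndepSeparation G C A B)
    {b : α} (hb : b ∈ B) (htripod : HasTripod G B (fun _ => b) ![p 0, p n, z]) :
    ∃ m q, IsInteriorPath G B m q ∧ p 0 = q 0 ∧ p n = q m ∧ ∃ k, 0 < k ∧ k < m ∧ q k = b := by
  obtain ⟨leg, hleg⟩ := htripod
  obtain ⟨T, hT, hbT, hTB⟩ := hleg.exists_isInducedPathSet (j := 0) (k := 1) (by decide) rfl
  obtain ⟨m, q, hq, hq0, hqm, rfl⟩ := IsInducedPathSet.exists_isInteriorPath (D := B) hT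
    hp.left_ne_right (h.indep _ hp.left_mem _ hp.right_mem) fun v hv => by
      rcases hTB v hv with rfl | hvB | hv0 | hvn
      exacts [.inr (.inr hb), .inr (.inr hvB), .inl hv0, .inr (.inl hvn)]
  obtain ⟨k, hk, hkb⟩ := hbT
  refine ⟨m, q, hq, hq0.symm, hqm.symm, k, Nat.pos_of_ne_zero ?_, hk.lt_of_ne ?_, hkb⟩ <;>
    rintro rfl
  · exact h.right_not_mem _ hb (hkb ▸ hq0 ▸ hp.left_mem)
  · exact h.right_not_mem _ hb (hkb ▸ hqm ▸ hp.right_mem)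

end IsPrivatePath

namespace IsSpread

variable {z w : α} {i j k l : ℕ}

lemma hasTripod (hz : IsSpread G n p z i j) (hp : IsInteriorPath G A n p) (hzA : z ∉ A)
    (hz0 : z ≠ p 0) (hzn : z ≠ p n) : HasTripod G A (fun _ => z) ![p 0, p n, z] :=
  hp.hasTripod_of_distant_adj (hp.isPendantPath_singleton hzA hz0 hzn) hz.add_two_le hz.lt.le
    hz.adj_left hz.adj_right hz.between

lemma hasTripod_of_le (hz : IsSpread G n p z i j) (hw : IsSpread G n p w k l) (hjk : j ≤ k)
    (hp : IsInteriorPath G A n p) (hzA : z ∉ A) (hwA : w ∉ A) (hz0 : z ≠ p 0) (hw0 : w ≠ p 0)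
    (hzw : z ≠ w) (hadj : ¬ G.Adj z w) : HasTripod G A (fun _ => z) ![p 0, w, z] := by
  have hij := hz.add_two_le
  have hkl := hw.add_two_le
  have hln := hw.lt
  obtain ⟨r, hr, hrp, rfl⟩ := hp.exists_truncate (by omega) (by omega) hwA hw0 hw.adj_left
    fun g hg hwg => hg.antisymm (hw.between g (by omega) hwg).1
  rw [← hrp 0 k.zero_le] at hz0 ⊢
  refine IsSpread.hasTripod ⟨hz.pos, hij, by omega, ?_, ?_, fun g hg hzg => ?_⟩ hr hzA hz0 hzw
  · exact hrp i (by omega) ▸ hz.adj_left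
  · exact hrp j hjk ▸ hz.adj_right
  · rcases hg.lt_or_eq with hg | rfl
    · rw [hrp g (by omega)] at hzg
      exact hz.between g (by omega) hzg
    · exact absurd hzg hadj

lemma isSpanCenter (hz : IsSpread G n p z i j) (h : IsHolePair G n m p q)
    (hzr : z ∉ Set.range (holeMap n m p q)) (hright : ∃ g, 0 < g ∧ g < m ∧ G.Adj z (q g)) :
    IsSpanCenter G n m p q z := by
  have hi := hz.pos
  have hij := hz.add_two_le
  have hjn := hz.lt
  obtain ⟨g, hg0, hgm, hzg⟩ := id hright
  refine ⟨⟨hzr, three_le_ncard_of_natCast (i := i) (j := j) (k := n + m - g) (by omega) (by omega)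
    (by omega) ?_ ?_ ?_⟩, fun hz0 => ?_, fun hzn => ?_, ⟨i, hi, by omega, hz.adj_left⟩, hright⟩
  · simpa [h.holeMap_left (by omega : i ≤ n)] using hz.adj_left
  · simpa [h.holeMap_left (by omega : j ≤ n)] using hz.adj_right
  · simpa only [Set.mem_ofPred_eq, h.holeMap_right hgm.le] using hzg
  · exact absurd (hz.between 0 n.zero_le hz0).1 (by omega)
  · exact absurd (hz.between n le_rfl hzn).2 (by omega)

-- Were `p k` and `p l` the only neighbors of `w` on the hole, they would be the ends of a theta.
lemma exists_adj_between (hz : IsSpread G n p z i j) (hw : IsSpread G n p w k l)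
    (hG : ¬ ContainsTheta G) (h : IsHolePair G n m p q) (hW : TwoWheelsNestedOrCousin G)
    (hzc : IsSpanCenter G n m p q z) (hwr : w ∉ Set.range (holeMap n m p q)) (hzw : z ≠ w)
    (hadj : ¬ G.Adj z w) (hkj : k < j) (hil : i < l) :
    ∃ e, k < e ∧ e < l ∧ G.Adj w (p e) := by
  have hz2 := hz.add_two_le
  have hw2 := hw.add_two_le
  have hjn := hz.lt
  have hln := hw.lt
  have hright : ¬ ∃ g, 0 < g ∧ g < m ∧ G.Adj w (q g) := fun hright => by
    rcases hzc.precedes_or_precedes (hw.isSpanCenter h hwr hright) h hW hzw hadj with hpre | hpre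
    · have := hpre.1 j k hjn.le (by omega) hz.adj_right hw.adj_left
      omega
    · have := hpre.1 l i hln.le (by omega) hw.adj_right hz.adj_left
      omega
  by_contra! hno
  rw [h.range_holeMap] at hwr
  refine hG (h.containsTheta (fun hmem => hwr (.inl hmem)) (fun hmem => hwr (.inr hmem)) ?_ hw.pos
    hw2 hln hw.adj_left hw.adj_right fun g hg hwg => ?_)
  · rintro _ ⟨g, hg, rfl⟩ hwg
    rcases (by grind : g = 0 ∨ g = m ∨ 0 < g ∧ g < m) with rfl | rfl | hg'
    · exact absurd (hw.between 0 n.zero_le (h.zero ▸ hwg)).1 (by have := hw.pos; omega)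
    · exact absurd (hw.between n le_rfl (h.last ▸ hwg)).2 (by omega)
    · exact hright ⟨g, hg'.1, hg'.2, hwg⟩
  · have := hw.between g hg hwg
    by_contra hne
    exact hno g (by omega) (by omega) hwg

lemma exists_adj_and_forall_not_adj_between (hz : IsSpread G n p z i j)
    (hw : IsSpread G n p w k l) (hG : ¬ ContainsTheta G) (h : IsHolePair G n m p q)
    (hW : TwoWheelsNestedOrCousin G) (hzr : z ∉ Set.range (holeMap n m p q))
    (hright : ∃ g, 0 < g ∧ g < m ∧ G.Adj z (q g)) (hwr : w ∉ Set.range (holeMap n m p q))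
    (hzw : z ≠ w) (hadj : ¬ G.Adj z w) (hkj : k < j) (hil : i < l) :
    (∃ e, k < e ∧ e < l ∧ G.Adj w (p e)) ∧ ∀ g, k < g → g < l → ¬ G.Adj z (p g) := by
  have hzc := hz.isSpanCenter h hzr hright
  have hln := hw.lt
  obtain ⟨e, hke, hel, hwe⟩ := hz.exists_adj_between hw hG h hW hzc hwr hzw hadj hkj hil
  have hwc : IsWheelCenter G n m p q w := by
    refine ⟨hwr, three_le_ncard_of_natCast (i := k) (j := e) (k := l) hke hel (by omega) ?_ ?_ ?_⟩
    · simpa [h.holeMap_left (by omega : k ≤ n)] using hw.adj_left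
    · simpa [h.holeMap_left (by omega : e ≤ n)] using hwe
    · simpa [h.holeMap_left (by omega : l ≤ n)] using hw.adj_right
  exact ⟨⟨e, hke, hel, hwe⟩, fun g hkg hgl =>
    hzc.not_adj_of_between hwc h hW hzw hadj hw.pos hkg hgl hln hw.adj_left hw.adj_right⟩

-- If `z` attached before `w` along the path in `A`, it would be the corner of a tripod in `A` with
-- feet `p 0, w, z`, which is incompatible with the tripod of corner `p 0` in `B`.
lemma lt_of_hasTripod (hz : IsSpread G n p z i j) (hw : IsSpread G n p w k l)
    (hp : IsInteriorPath G A n p) (hG : ThreePathFree G) (h : IndepSeparation G C A B)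
    (h0 : p 0 ∈ C) (hzC : z ∈ C) (hwC : w ∈ C) (hz0 : z ≠ p 0) (hw0 : w ≠ p 0) (hzw : z ≠ w)
    (hB : HasTripod G B (fun _ => p 0) ![p 0, w, z]) : k < j := by
  by_contra! hjk
  have hA := hz.hasTripod_of_le hw hjk hp (fun hzA => h.left_not_mem z hzA hzC)
    (fun hwA => h.left_not_mem w hwA hwC) hz0 hw0 hzw (h.indep _ hzC _ hwC)
  rcases hA.corner_eq_or_adj hG h (by simp [Fin.forall_fin_succ, h0, hzC, hwC]) hB with
    ⟨-, -, heq⟩ | ⟨-, -, hadj⟩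
  exacts [hz0 heq, h.indep _ hzC _ h0 hadj]

end IsSpread

lemma IsInteriorPath.not_mem_range_holeMap (hp : IsInteriorPath G A n p)
    (hq : IsInteriorPath G B m q) (h : IndepSeparation G C A B) (h0 : p 0 = q 0)
    (hnm : p n = q m) {z : α} (hz : z ∈ C) (hz0 : z ≠ p 0) (hzn : z ≠ p n) :
    z ∉ Set.range (holeMap n m p q) := by
  rw [(hp.isHolePair hq h h0 hnm).range_holeMap]
  have hzp := (hp.isPendantPath_singleton (fun hzA => h.left_not_mem z hzA hz) hz0 hzn).ne z rfl
  have hzq := (hq.isPendantPath_singleton (fun hzB => h.right_not_mem z hzB hz) (h0 ▸ hz0)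
    (hnm ▸ hzn)).ne z rfl
  rintro (⟨i, hi, rfl⟩ | ⟨i, hi, rfl⟩)
  exacts [hzp i hi rfl, hzq i hi rfl]

lemma HasTripod.perm {D : Set α} {a t t' : Fin 3 → α} (h : HasTripod G D a t)
    (σ : Equiv.Perm (Fin 3)) (ht : t' = t ∘ σ) : HasTripod G D (a ∘ σ) t' :=
  let ⟨_, hleg⟩ := h
  ht ▸ ⟨_, hleg.perm σ⟩

namespace IsPrivatePath

variable {z w : α} {i j k l : ℕ}

lemma exists_adj_and_forall_not_adj_between (hp : IsPrivatePath G C A n p) (hG : ThreePathFree G)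
    (hW : TwoWheelsNestedOrCousin G) (h : IndepSeparation G C A B) (hzC : z ∈ C) (hwC : w ∈ C)
    (hz0 : z ≠ p 0) (hzn : z ≠ p n) (hw0 : w ≠ p 0) (hwn : w ≠ p n) (hzw : z ≠ w)
    (hz : IsSpread G n p z i j) (hw : IsSpread G n p w k l) (hkj : k < j) (hil : i < l)
    (htz : ∃ b ∈ B, G.Adj z b ∧ HasTripod G B (fun _ => b) ![p 0, p n, z]) :
    (∃ e, k < e ∧ e < l ∧ G.Adj w (p e)) ∧ ∀ g, k < g → g < l → ¬ G.Adj z (p g) := by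
  obtain ⟨b, hb, hzb, ht⟩ := htz
  obtain ⟨m, q, hq, h0, hnm, g, hg, hgm, rfl⟩ := hp.exists_isInteriorPath_through h hb ht
  have hp' := hp.toIsInteriorPath
  exact hz.exists_adj_and_forall_not_adj_between hw hG.theta (hp'.isHolePair hq h h0 hnm) hW
    (hp'.not_mem_range_holeMap hq h h0 hnm hzC hz0 hzn) ⟨g, hg, hgm, hzb⟩
    (hp'.not_mem_range_holeMap hq h h0 hnm hwC hw0 hwn) hzw (h.indep _ hzC _ hwC) hkj hil

lemma not_hasTripod_of_isSpread (hp : IsPrivatePath G C A n p) (hG : ThreePathFree G)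
    (hW : TwoWheelsNestedOrCousin G) (h : IndepSeparation G C A B) (hzC : z ∈ C) (hwC : w ∈ C)
    (hz0 : z ≠ p 0) (hzn : z ≠ p n) (hw0 : w ≠ p 0) (hwn : w ≠ p n) (hzw : z ≠ w)
    (hz : ∃ i j, IsSpread G n p z i j) (hw : ∃ k l, IsSpread G n p w k l)
    (htz : ∃ b ∈ B, G.Adj z b ∧ HasTripod G B (fun _ => b) ![p 0, p n, z])
    (htw : ∃ b ∈ B, G.Adj w b ∧ HasTripod G B (fun _ => b) ![p 0, p n, w]) :
    ¬ HasTripod G B (fun _ => p 0) ![z, w, p 0] := by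
  intro hB
  obtain ⟨i, j, hz⟩ := hz
  obtain ⟨k, l, hw⟩ := hw
  have hkj : k < j := hz.lt_of_hasTripod hw hp.toIsInteriorPath hG h hp.left_mem hzC hwC hz0 hw0 hzw
    (hB.perm (Equiv.swap 0 2) (by ext i; fin_cases i <;> rfl))
  have hil : i < l := hw.lt_of_hasTripod hz hp.toIsInteriorPath hG h hp.left_mem hwC hzC hw0 hz0
    hzw.symm (hB.perm (finRotate 3).symm (by ext i; fin_cases i <;> rfl))
  obtain ⟨⟨e, hke, hel, hwe⟩, hz_not⟩ := hp.exists_adj_and_forall_not_adj_between hG hW h hzC hwC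
    hz0 hzn hw0 hwn hzw hz hw hkj hil htz
  obtain ⟨-, hw_not⟩ := hp.exists_adj_and_forall_not_adj_between hG hW h hwC hzC
    hw0 hwn hz0 hzn hzw.symm hw hz hil hkj htw
  have hik : i ≤ k := not_lt.1 fun hki => hz_not i hki hil hz.adj_left
  have hlj : l ≤ j := not_lt.1 fun hjl => hz_not j hkj hjl hz.adj_right
  exact hw_not e (by omega) (by omega) hwe

end IsPrivatePath

namespace IsPrivateSpan

variable {x y z w u v u' v' : α}

lemma symm (hA : IsPrivateSpan G C A x u v y) : IsPrivateSpan G C A y v u x where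
  left_mem := hA.right_mem
  right_mem := hA.left_mem
  left_private := hA.right_private
  right_private := hA.left_private
  ne := hA.ne.symm
  path := hA.path.symm

lemma exists_isPrivatePath (hA : IsPrivateSpan G C A x u v y) (h : IndepSeparation G C A B) :
    ∃ n p, IsPrivatePath G C A n p ∧ p 0 = x ∧ p 1 = u ∧ p (n - 1) = v ∧ p n = y ∧
      A = p '' Set.Ioo 0 n :=
  hA.path.exists_isPrivatePath subset_rfl hA.ne h hA.left_mem hA.right_mem hA.left_private
    hA.right_private

lemma isSpannedByPath (hA : IsPrivateSpan G C A x u v y) (h : IndepSeparation G C A B) :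
    IsSpannedByPath G A x y :=
  let ⟨n, p, hp, h0, _, _, hn, hAp⟩ := hA.exists_isPrivatePath h
  ⟨n, p, hp.toIsInteriorPath, h0, hn, hAp⟩

lemma left_ne_right (hA : IsPrivateSpan G C A x u v y) : x ≠ y :=
  hA.left_private.ne hA.right_private hA.ne

lemma exists_hasTripod_foot (hA : IsPrivateSpan G C A x u v y) (h : IndepSeparation G C A B)
    (hz : z ∈ C) (hzx : z ≠ x) (hzy : z ≠ y) (hzA : ∃ a ∈ A, G.Adj z a) :
    ∃ a, HasTripod G A a ![x, y, z] ∧ (∀ i, a i ∈ A ∨ a i = z) ∧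
      ((∀ i j, a i = a j) → IsPrivateNbr G A z (a 0) ∨ a 0 = z) := by
  obtain ⟨n, p, hp, rfl, -, -, rfl, hAp⟩ := hA.exists_isPrivatePath h
  obtain ⟨a, ha, haA, hconst⟩ := hp.exists_hasTripod_foot h hAp.subset hz hzx hzy hzA
  exact ⟨a, ha, haA, fun h => (hconst h).imp_right And.left⟩

lemma isPrivateNbr_right_or_left (hA : IsPrivateSpan G C A x u v y)
    (hB : IsPrivateSpan G C B x u' v' w) (hG : ThreePathFree G) (h : IndepSeparation G C A B)
    (hyB : ∃ a ∈ B, G.Adj y a) (hwA : ∃ a ∈ A, G.Adj w a) :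
    IsPrivateNbr G B y v' ∨ IsPrivateNbr G A w v := by
  by_contra! ⟨hyv', hwv⟩
  have hwy : w ≠ y := fun heq => hyv' (heq ▸ hB.right_private)
  obtain ⟨a, ha, haA, haconst⟩ := hA.exists_hasTripod_foot h hB.right_mem hB.left_ne_right.symm hwy
    hwA
  obtain ⟨b, hb, hbB, hbconst⟩ := hB.exists_hasTripod_foot h.symm hA.right_mem
    hA.left_ne_right.symm hwy.symm hyB
  have ht : ∀ i, ![x, y, w] i ∈ C := by
    simp [Fin.forall_fin_succ, hA.left_mem, hA.right_mem, hB.right_mem]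
  rcases ha.corner_eq_or_adj hG h ht (hb.perm (Equiv.swap 1 2) (by ext i; fin_cases i <;> rfl))
    with ⟨i, j, heq⟩ | ⟨ha', hb', hadj⟩
  · have := haA i
    have := hbB (Equiv.swap 1 2 j)
    have := h.left_not_mem
    have := h.right_not_mem
    have := h.disjoint
    have := hA.right_mem
    have := hB.right_mem
    grind
  have hbb : ∀ i j, b i = b j := fun i j => by
    simpa using hb' (Equiv.swap 1 2 i) (Equiv.swap 1 2 j)
  have hadj : G.Adj (a 0) (b 0) := hadj
  rcases haconst ha' with ha0 | ha0 <;> rcases hbconst hbb with hb0 | hb0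
  · exact h.not_adj _ ha0.mem _ hb0.mem hadj
  · exact hwv (hA.right_private.eq _ ha0.mem (hb0 ▸ hadj.symm) ▸ ha0)
  · exact hyv' (hB.right_private.eq _ hb0.mem (ha0 ▸ hadj) ▸ hb0)
  · exact h.indep _ hB.right_mem _ hA.right_mem (ha0 ▸ hb0 ▸ hadj)

lemma exists_common_ends (hA : IsPrivateSpan G C A x u v y) (hB : IsPrivateSpan G C B x u' v' w)
    (hG : ThreePathFree G) (h : IndepSeparation G C A B) (hyB : ∃ a ∈ B, G.Adj y a)
    (hwA : ∃ a ∈ A, G.Adj w a) :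
    ∃ x ∈ C, ∃ y ∈ C, x ≠ y ∧ IsSpannedByPath G A x y ∧ IsSpannedByPath G B x y := by
  rcases hA.isPrivateNbr_right_or_left hB hG h hyB hwA with hyv' | hwv
  · have hB' : IsPrivateSpan G C B x u' v' y :=
      { hB with right_mem := hA.right_mem, right_private := hyv' }
    exact ⟨x, hA.left_mem, y, hA.right_mem, hA.left_ne_right, hA.isSpannedByPath h,
      hB'.isSpannedByPath h.symm⟩
  · have hA' : IsPrivateSpan G C A x u v w :=
      { hA with right_mem := hB.right_mem, right_private := hwv }
    exact ⟨x, hA.left_mem, w, hB.right_mem, hB.left_ne_right, hA'.isSpannedByPath h,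
      hB.isSpannedByPath h.symm⟩

lemma exists_shared_end (hA : IsPrivateSpan G C A x u v y) (hB : IsPrivateSpan G C B z u' v' w)
    (hG : ThreePathFree G) (hW : TwoWheelsNestedOrCousin G) (h : IndepSeparation G C A B)
    (hAC : IsConnFull G C A) (hBC : IsConnFull G C B) :
    ∃ x u v y u' v' w, IsPrivateSpan G C A x u v y ∧ IsPrivateSpan G C B x u' v' w := by
  by_contra! hno
  have hxz : x ≠ z := by rintro rfl; exact hno _ _ _ _ _ _ _ hA hB
  have hxw : x ≠ w := by rintro rfl; exact hno _ _ _ _ _ _ _ hA hB.symm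
  have hyz : y ≠ z := by rintro rfl; exact hno _ _ _ _ _ _ _ hA.symm hB
  have hyw : y ≠ w := by rintro rfl; exact hno _ _ _ _ _ _ _ hA.symm hB.symm
  have hxu' : ¬ IsPrivateNbr G B x u' := fun hx =>
    hno _ _ _ _ _ _ _ hA { hB with left_mem := hA.left_mem, left_private := hx }
  have hxv' : ¬ IsPrivateNbr G B x v' := fun hx =>
    hno _ _ _ _ _ _ _ hA { hB.symm with left_mem := hA.left_mem, left_private := hx }
  have hzu : ¬ IsPrivateNbr G A z u := fun hz =>
    hno _ _ _ _ _ _ _ { hA with left_mem := hB.left_mem, left_private := hz } hB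
  have hzv : ¬ IsPrivateNbr G A z v := fun hz =>
    hno _ _ _ _ _ _ _ { hA.symm with left_mem := hB.left_mem, left_private := hz } hB
  have hwu : ¬ IsPrivateNbr G A w u := fun hw =>
    hno _ _ _ _ _ _ _ { hA with left_mem := hB.right_mem, left_private := hw } hB.symm
  have hwv : ¬ IsPrivateNbr G A w v := fun hw =>
    hno _ _ _ _ _ _ _ { hA.symm with left_mem := hB.right_mem, left_private := hw } hB.symm
  obtain ⟨n, p, hp, rfl, rfl, rfl, rfl, hAp⟩ := hA.exists_isPrivatePath h
  obtain ⟨m, q, hq, rfl, rfl, rfl, rfl, hBq⟩ := hB.exists_isPrivatePath h.symm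
  obtain ⟨⟨k, l, hx⟩, -⟩ := hq.exists_isSpread_and_hasTripod hG h.symm hBq.subset hAC hA.left_mem
    hxz hxw (hBC.full _ hA.left_mem) hA.left_private hxu' hxv'
  obtain ⟨hz, htz⟩ := hp.exists_isSpread_and_hasTripod hG h hAp.subset hBC hB.left_mem
    hxz.symm hyz.symm (hAC.full _ hB.left_mem) hB.left_private hzu hzv
  obtain ⟨hw, htw⟩ := hp.exists_isSpread_and_hasTripod hG h hAp.subset hBC hB.right_mem
    hxw.symm hyw.symm (hAC.full _ hB.right_mem) hB.right_private hwu hwv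
  exact hp.not_hasTripod_of_isSpread hG hW h hB.left_mem hB.right_mem hxz.symm hyz.symm hxw.symm
    hyw.symm hB.left_ne_right hz hw htz htw
    (hx.hasTripod hq.toIsInteriorPath (fun hxB => h.right_not_mem _ hxB hA.left_mem) hxz hxw)

end IsPrivateSpan

lemma isSpannedByPath_singleton {a x y : α} (hxy : x ≠ y) (hadj : ¬ G.Adj x y) (hx : G.Adj x a)
    (hy : G.Adj y a) : IsSpannedByPath G {a} x y := by
  have hpath : IsInducedPathSet G x y {x, a, y} :=
    (IsInducedPathSet.pair hy.symm).cons hx (by simp [hx.ne, hxy]) (by simp [hadj])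
  obtain ⟨n, p, hp, h0, hn, hS⟩ := hpath.exists_isInteriorPath (D := {a}) hxy hadj (by simp)
  refine ⟨n, p, hp, h0, hn, Set.Subset.antisymm ?_ ?_⟩
  · obtain ⟨i, hi, hia⟩ := hS ▸ (by simp : a ∈ ({x, a, y} : Set α))
    have hi0 : i ≠ 0 := by rintro rfl; exact hx.ne (h0.symm.trans hia)
    have hin : i ≠ n := by rintro rfl; exact hy.ne (hn.symm.trans hia)
    exact Set.singleton_subset_iff.2 ⟨i, ⟨by omega, lt_of_le_of_ne hi hin⟩, hia⟩
  · rintro _ ⟨i, hi, rfl⟩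
    exact hp.mem i hi.1 hi.2

lemma IsConnFull.isSpannedByPath {a x y : α} (hA : IsConnFull G C {a})
    (hind : ∀ x ∈ C, ∀ y ∈ C, ¬ G.Adj x y) (hx : x ∈ C) (hy : y ∈ C) (hxy : x ≠ y) :
    IsSpannedByPath G {a} x y := by
  obtain ⟨_, rfl, hxa⟩ := hA.full x hx
  obtain ⟨_, rfl, hya⟩ := hA.full y hy
  exact isSpannedByPath_singleton hxy (hind x hx y hy) hxa hya

lemma IsPrivatePath.isPrivateSpan (hp : IsPrivatePath G C A n p) (hA : A = p '' Set.Ioo 0 n) :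
    IsPrivateSpan G C A (p 0) (p 1) (p (n - 1)) (p n) where
  left_mem := hp.left_mem
  right_mem := hp.right_mem
  left_private := hp.left_private
  right_private := hp.right_private
  ne heq := by
    have hn := hp.three_le
    have := hp.inj 1 (by omega) (n - 1) (by omega) heq
    omega
  path := by
    have hn := hp.three_le
    have hIoo : Set.Ioo 0 n = Set.Icc 1 (n - 1) := by ext; simp; omega
    rw [hA, hIoo]
    exact hp.isInducedPathSet_Icc (by omega) (by omega)

lemma exists_common_ends_of_minimal (hG : ThreePathFree G) (hW : TwoWheelsNestedOrCousin G)
    (h : IndepSeparation G C A B) (hAfin : A.Finite) (hBfin : B.Finite)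
    (hA : Minimal (IsConnFull G C) A) (hB : Minimal (IsConnFull G C) B) (hC : C.Nontrivial) :
    ∃ x ∈ C, ∃ y ∈ C, x ≠ y ∧ IsSpannedByPath G A x y ∧ IsSpannedByPath G B x y := by
  have hAC := hA.prop
  have hBC := hB.prop
  rcases exists_eq_singleton_or_isPrivatePath hG h hAfin hA hBC with ⟨a, rfl⟩ | ⟨n, p, hp, hAp⟩ <;>
  rcases exists_eq_singleton_or_isPrivatePath hG h.symm hBfin hB hAC with ⟨b, rfl⟩ | ⟨m, q, hq, hBq⟩
  · obtain ⟨x, hx, y, hy, hxy⟩ := hC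
    exact ⟨x, hx, y, hy, hxy, hAC.isSpannedByPath h.indep hx hy hxy,
      hBC.isSpannedByPath h.indep hx hy hxy⟩
  · exact ⟨_, hq.left_mem, _, hq.right_mem, hq.left_ne_right,
      hAC.isSpannedByPath h.indep hq.left_mem hq.right_mem hq.left_ne_right,
      (hq.isPrivateSpan hBq).isSpannedByPath h.symm⟩
  · exact ⟨_, hp.left_mem, _, hp.right_mem, hp.left_ne_right,
      (hp.isPrivateSpan hAp).isSpannedByPath h,
      hBC.isSpannedByPath h.indep hp.left_mem hp.right_mem hp.left_ne_right⟩
  · obtain ⟨x, u, v, y, u', v', w, hA', hB'⟩ :=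
      (hp.isPrivateSpan hAp).exists_shared_end (hq.isPrivateSpan hBq) hG hW h hAC hBC
    exact hA'.exists_common_ends hB' hG h (hBC.full _ hA'.right_mem) (hAC.full _ hB'.right_mem)

end CommonEnds

/-! ### Assembling the span-wheel -/

section SpanWheel

variable {C A B : Set α} {n m : ℕ} {p q : ℕ → α} {z : α}

lemma IsInteriorPath.exists_lt_adj_or_hasTripod (hp : IsInteriorPath G A n p) (hzA : z ∉ A)
    (hz0 : z ≠ p 0) (hzn : z ≠ p n) (hz : ∃ i ≤ n, G.Adj z (p i)) :
    (∃ i j, i < j ∧ j ≤ n ∧ G.Adj z (p i) ∧ G.Adj z (p j)) ∨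
      ∃ i ≤ n, G.Adj z (p i) ∧ HasTripod G A (fun _ => p i) ![p 0, p n, z] := by
  obtain ⟨i, j, hij, hj, hzi, hzj, honly⟩ := exists_first_last hz
  rcases hij.lt_or_eq with hij | rfl
  · exact .inl ⟨i, j, hij, hj, hzi, hzj⟩
  · exact .inr ⟨i, hj, hzi, hp.hasTripod_of_unique_adj
      (hp.isPendantPath_singleton hzA hz0 hzn) hj hzi fun k hk hzk =>
        (honly k hk hzk).2.antisymm (honly k hk hzk).1⟩

-- If `z` has only one neighbor on each side, these are the corners of tripods with the same feet,
-- but they are neither equal nor adjacent.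
lemma IsInteriorPath.exists_lt_adj (hp : IsInteriorPath G A n p) (hq : IsInteriorPath G B m q)
    (hG : ThreePathFree G) (h : IndepSeparation G C A B) (h0 : p 0 = q 0) (hnm : p n = q m)
    (h0C : p 0 ∈ C) (hnC : p n ∈ C) (hzC : z ∈ C) (hz0 : z ≠ p 0) (hzn : z ≠ p n)
    (hzp : ∃ i ≤ n, G.Adj z (p i)) (hzq : ∃ i ≤ m, G.Adj z (q i)) :
    (∃ i j, i < j ∧ j ≤ n ∧ G.Adj z (p i) ∧ G.Adj z (p j)) ∨
      ∃ i j, i < j ∧ j ≤ m ∧ G.Adj z (q i) ∧ G.Adj z (q j) := by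
  rcases hp.exists_lt_adj_or_hasTripod (fun hzA => h.left_not_mem z hzA hzC) hz0 hzn hzp with
    hp2 | ⟨i, hi, hzi, hA⟩
  · exact .inl hp2
  rcases hq.exists_lt_adj_or_hasTripod (fun hzB => h.right_not_mem z hzB hzC) (h0 ▸ hz0) (hnm ▸ hzn)
    hzq with hq2 | ⟨j, hj, hzj, hB⟩
  · exact .inr hq2
  exfalso
  have hiA : p i ∈ A := hp.mem i (Nat.pos_of_ne_zero fun hi0 => h.indep z hzC _ h0C (hi0 ▸ hzi))
    (hi.lt_of_ne fun hin => h.indep z hzC _ hnC (hin ▸ hzi))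
  have hjB : q j ∈ B :=
    hq.mem j (Nat.pos_of_ne_zero fun hj0 => h.indep z hzC _ h0C (h0 ▸ hj0 ▸ hzj))
      (hj.lt_of_ne fun hjm => h.indep z hzC _ hnC (hnm ▸ hjm ▸ hzj))
  rw [← h0, ← hnm] at hB
  rcases hA.corner_eq_or_adj hG h (by simp [Fin.forall_fin_succ, h0C, hnC, hzC]) hB with
    ⟨-, -, heq⟩ | ⟨-, -, hadj⟩
  exacts [h.disjoint _ hiA (heq ▸ hjB), h.not_adj _ hiA _ hjB hadj]

lemma IsHolePair.three_le_ncard (h : IsHolePair G n m p q) (hz0 : ¬ G.Adj z (p 0))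
    (hzn : ¬ G.Adj z (p n)) (hzp : ∃ i ≤ n, G.Adj z (p i)) (hzq : ∃ i ≤ m, G.Adj z (q i))
    (h2 : (∃ i j, i < j ∧ j ≤ n ∧ G.Adj z (p i) ∧ G.Adj z (p j)) ∨
      ∃ i j, i < j ∧ j ≤ m ∧ G.Adj z (q i) ∧ G.Adj z (q j)) :
    3 ≤ {w | G.Adj z (holeMap n m p q w)}.ncard := by
  have hleft : ∀ i ≤ n, G.Adj z (p i) → i < n ∧
      (i : ZMod (n + m)) ∈ {w | G.Adj z (holeMap n m p q w)} :=
    fun i hi hzi => ⟨hi.lt_of_ne fun hin => hzn (hin ▸ hzi), by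
      simpa [h.holeMap_left hi] using hzi⟩
  have hright : ∀ i ≤ m, G.Adj z (q i) → (0 < i ∧ i < m) ∧
      ((n + m - i : ℕ) : ZMod (n + m)) ∈ {w | G.Adj z (holeMap n m p q w)} := fun i hi hzi =>
    ⟨⟨Nat.pos_of_ne_zero fun hi0 => hz0 (h.zero ▸ hi0 ▸ hzi),
      hi.lt_of_ne fun him => hzn (h.last ▸ him ▸ hzi)⟩, by
        rw [Set.mem_ofPred_eq, h.holeMap_right hi]; exact hzi⟩
  rcases h2 with ⟨i, j, hij, hj, hzi, hzj⟩ | ⟨i, j, hij, hj, hzi, hzj⟩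
  · obtain ⟨k, hk, hzk⟩ := hzq
    have hk' := (hright k hk hzk).1
    have hj' := (hleft j hj hzj).1
    exact three_le_ncard_of_natCast hij (by omega) (by omega) (hleft i (by omega) hzi).2
      (hleft j hj hzj).2 (hright k hk hzk).2
  · obtain ⟨k, hk, hzk⟩ := hzp
    have hi' := (hright i (by omega) hzi).1
    have hk' := (hleft k hk hzk).1
    exact three_le_ncard_of_natCast (by omega) (by omega) (by omega) (hleft k hk hzk).2
      (hright j hj hzj).2 (hright i (by omega) hzi).2

lemma IsInteriorPath.isSpanCenter (hp : IsInteriorPath G A n p) (hq : IsInteriorPath G B m q)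
    (hG : ThreePathFree G) (h : IndepSeparation G C A B) (h0 : p 0 = q 0) (hnm : p n = q m)
    (h0C : p 0 ∈ C) (hnC : p n ∈ C) (hzC : z ∈ C) (hz0 : z ≠ p 0) (hzn : z ≠ p n)
    (hzp : ∃ i, 0 < i ∧ i < n ∧ G.Adj z (p i)) (hzq : ∃ i, 0 < i ∧ i < m ∧ G.Adj z (q i)) :
    IsSpanCenter G n m p q z := by
  have hzp' : ∃ i ≤ n, G.Adj z (p i) := let ⟨i, _, hi, hzi⟩ := hzp; ⟨i, hi.le, hzi⟩
  have hzq' : ∃ i ≤ m, G.Adj z (q i) := let ⟨i, _, hi, hzi⟩ := hzq; ⟨i, hi.le, hzi⟩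
  have hadj0 := h.indep z hzC _ h0C
  have hadjn := h.indep z hzC _ hnC
  exact {
    not_mem := hp.not_mem_range_holeMap hq h h0 hnm hzC hz0 hzn
    three_le := (hp.isHolePair hq h h0 hnm).three_le_ncard hadj0 hadjn hzp' hzq'
      (hp.exists_lt_adj hq hG h h0 hnm h0C hnC hzC hz0 hzn hzp' hzq')
    not_adj_zero := hadj0
    not_adj_last := hadjn
    left := hzp
    right := hzq }

lemma exists_bijective_fin_of_isStrictTotalOrder {β : Type*} [Finite β] (r : β → β → Prop)
    [IsStrictTotalOrder β r] :
    ∃ c : Fin (Nat.card β) → β, c.Bijective ∧ ∀ i j, i < j → r (c i) (c j) := by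
  classical
  let := linearOrderOfSTO r
  let := Fintype.ofFinite β
  let e := Fintype.orderIsoFinOfCardEq β Nat.card_eq_fintype_card.symm
  exact ⟨e, e.bijective, fun i j hij => e.strictMono hij⟩

lemma IsHolePair.exists_enumeration_precedes (h : IsHolePair G n m p q)
    (hW : TwoWheelsNestedOrCousin G) {S : Set α} (hS : S.Finite)
    (hc : ∀ c ∈ S, IsSpanCenter G n m p q c) (hind : ∀ x ∈ S, ∀ y ∈ S, ¬ G.Adj x y) :
    ∃ c : Fin S.ncard → α, c.Injective ∧ Set.range c = S ∧
      ∀ i j, i < j → Precedes G n m p q (c i) (c j) := by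
  have : Finite S := hS
  let r : S → S → Prop := fun u v => Precedes G n m p q u v
  have : IsStrictTotalOrder S r :=
    { irrefl := fun u hu => hu.not_precedes h (hc u u.2) (hc u u.2) hu
      trans := fun u v w huv hvw => huv.trans hvw (hc v v.2)
      trichotomous := fun u v huv hvu => by
        by_contra hne
        exact ((hc u u.2).precedes_or_precedes (hc v v.2) h hW (Subtype.coe_ne_coe.2 hne)
          (hind u u.2 v v.2)).elim huv hvu }
  obtain ⟨c, hbij, hmono⟩ := exists_bijective_fin_of_isStrictTotalOrder r
  exact ⟨fun i => c i, Subtype.val_injective.comp hbij.1,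
    (hbij.2.range_comp _).trans Subtype.range_val, hmono⟩

lemma IsHolePair.isSpanWheel (h : IsHolePair G n m p q) {k : ℕ} {c : Fin k → α}
    (hinj : c.Injective) (hc : ∀ i, IsSpanCenter G n m p q (c i))
    (hind : ∀ i j, i ≠ j → ¬ G.Adj (c i) (c j))
    (hmono : ∀ i j, i < j → Precedes G n m p q (c i) (c j)) :
    IsSpanWheel G k (n + m) n (holeMap n m p q) c := by
  have hn := h.two_le_left
  have hm := h.two_le_right
  have hzero : holeMap n m p q 0 = p 0 := by simpa using h.holeMap_left n.zero_le
  have hlast : holeMap n m p q n = p n := h.holeMap_left le_rfl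
  have hright : ∀ b, n ≤ b → b ≤ n + m → holeMap n m p q b = q (n + m - b) := fun b hnb hb => by
    rw [← h.holeMap_right (by omega), Nat.sub_sub_self hb]
  refine ⟨h.isHoleEmb, hn, by omega, ?_, hinj, fun i => (hc i).not_mem, hind,
    fun i => hzero ▸ (hc i).not_adj_zero, fun i => hlast ▸ (hc i).not_adj_last,
    fun i => (hc i).three_le, fun i => ?_, fun i => ?_, ?_, ?_⟩
  · rw [hzero, hlast]
    intro hadj
    have := h.left.consecutive 0 n.zero_le n le_rfl hadj
    omega
  · obtain ⟨a, ha, han, hca⟩ := (hc i).left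
    exact ⟨a, ha, han, by rwa [h.holeMap_left han.le]⟩
  · obtain ⟨b, hb, hbm, hcb⟩ := (hc i).right
    exact ⟨n + m - b, by omega, by omega, by rwa [h.holeMap_right hbm.le]⟩
  · intro i j hij a₁ a₂ ha₁ ha₂ hi hj
    rw [h.holeMap_left ha₁] at hi
    rw [h.holeMap_left ha₂] at hj
    exact (hmono i j hij).1 a₁ a₂ ha₁ ha₂ hi hj
  · intro i j hij b₁ b₂ hb₁ hb₁' hb₂ hb₂' hi hj
    rw [hright b₁ hb₁ hb₁'] at hi
    rw [hright b₂ hb₂ hb₂'] at hj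
    have := (hmono i j hij).2 _ _ (by omega) (by omega) hi hj
    omega

lemma exists_isSpanWheel (hp : IsInteriorPath G A n p) (hq : IsInteriorPath G B m q)
    (hG : ThreePathFree G) (hW : TwoWheelsNestedOrCousin G) (h : IndepSeparation G C A B)
    (hC : C.Finite) (h0 : p 0 = q 0) (hnm : p n = q m) (h0C : p 0 ∈ C) (hnC : p n ∈ C)
    (hne : p 0 ≠ p n) (hAp : A = p '' Set.Ioo 0 n) (hBq : B = q '' Set.Ioo 0 m)
    (hA : ∀ c ∈ C, ∃ a ∈ A, G.Adj c a) (hB : ∀ c ∈ C, ∃ b ∈ B, G.Adj c b) :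
    ∃ c : Fin (C.ncard - 2) → α,
      IsSpanWheel G (C.ncard - 2) (n + m) n (holeMap n m p q) c ∧ Set.range c = C \ {p 0, p n} := by
  have hpair := hp.isHolePair hq h h0 hnm
  have hcenter : ∀ c ∈ C \ {p 0, p n}, IsSpanCenter G n m p q c := by
    rintro c ⟨hcC, hc⟩
    obtain ⟨hc0, hcn⟩ : c ≠ p 0 ∧ c ≠ p n := by simpa using hc
    obtain ⟨_, ha, hca⟩ := hA c hcC
    obtain ⟨_, hb, hcb⟩ := hB c hcC
    obtain ⟨i, ⟨hi, hin⟩, rfl⟩ := hAp ▸ ha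
    obtain ⟨j, ⟨hj, hjm⟩, rfl⟩ := hBq ▸ hb
    exact hp.isSpanCenter hq hG h h0 hnm h0C hnC hcC hc0 hcn ⟨i, hi, hin, hca⟩ ⟨j, hj, hjm, hcb⟩
  have hcard : (C \ {p 0, p n}).ncard = C.ncard - 2 := by
    rw [Set.ncard_sdiff (Set.pair_subset h0C hnC) (Set.toFinite _), Set.ncard_pair hne]
  rw [← hcard]
  obtain ⟨c, hinj, hrange, hmono⟩ := hpair.exists_enumeration_precedes hW hC.sdiff hcenter
    fun x hx y hy => h.indep x hx.1 y hy.1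
  have hc : ∀ i, c i ∈ C \ {p 0, p n} := fun i => hrange ▸ Set.mem_range_self i
  exact ⟨c, hpair.isSpanWheel hinj (fun i => hcenter _ (hc i))
    (fun i j _ => h.indep _ (hc i).1 _ (hc j).1) hmono, hrange⟩

lemma IsInteriorPath.exists_isInducedPathW (hp : IsInteriorPath G A n p)
    (hA : A = p '' Set.Ioo 0 n) {x y : α} (hx : p 0 = x) (hy : p n = y) :
    ∃ w : G.Walk x y, IsInducedPathW G w ∧ (∀ v, v ∈ w.support ↔ v ∈ p '' Set.Iic n) ∧
      ∀ v, v ∈ A ↔ v ∈ w.support ∧ v ≠ x ∧ v ≠ y := by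
  subst hx hy
  obtain ⟨w, hw, hsupp⟩ := hp.toIsInducedPathSeq.exists_isInducedPathW
  refine ⟨w, hw, hsupp, fun v => ?_⟩
  rw [hsupp]
  constructor
  · intro hv
    obtain ⟨i, ⟨hi, hin⟩, rfl⟩ := hA ▸ hv
    exact ⟨⟨i, hin.le, rfl⟩, fun heq => hi.ne' (hp.inj i hin.le 0 n.zero_le heq),
      fun heq => hin.ne (hp.inj i hin.le n le_rfl heq)⟩
  · rintro ⟨⟨i, hi, rfl⟩, hi0, hin⟩
    exact hp.mem i (Nat.pos_of_ne_zero fun h => hi0 (h ▸ rfl))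
      (lt_of_le_of_ne hi fun h => hin (h ▸ rfl))

end SpanWheel

section FullComponent

variable {C A B : Set α}

lemma IsFullComponent.subset_of_mem (hA : IsFullComponent G C A) (hB : IsFullComponent G C B)
    {v : α} (hvA : v ∈ A) (hvB : v ∈ B) : A ⊆ B := by
  by_contra hAB
  obtain ⟨u, huB, w, hwA, hwB, huw⟩ := exists_adj_of_connected hA.2.2.1 ⟨v, hvB, hvA⟩ hAB
  exact (hB.2.2.2.1 u huB w huw).elim hwB (Set.disjoint_left.1 hA.2.1 hwA)

lemma IsFullComponent.indepSeparation (hA : IsFullComponent G C A) (hB : IsFullComponent G C B)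
    (hAB : A ≠ B) (hind : ∀ x ∈ C, ∀ y ∈ C, ¬ G.Adj x y) : IndepSeparation G C A B := by
  have hdisj : ∀ v ∈ A, v ∉ B := fun v hvA hvB =>
    hAB ((hA.subset_of_mem hB hvA hvB).antisymm (hB.subset_of_mem hA hvB hvA))
  have hBC : ∀ v ∈ B, v ∉ C := fun v hv => Set.disjoint_left.1 hB.2.1 hv
  exact ⟨hind, fun v hv => Set.disjoint_left.1 hA.2.1 hv, hBC, hdisj, fun u hu v hv huv =>
    (hA.2.2.2.1 u hu v huv).elim (hdisj v · hv) (hBC v hv)⟩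

lemma IsFullComponent.isConnFull (hA : IsFullComponent G C A) : IsConnFull G C A :=
  ⟨hA.2.2.1, hA.2.2.2.2⟩

lemma IsConnFull.exists_finite_subset (hA : IsConnFull G C A) (hC : C.Finite) :
    ∃ D ⊆ A, D.Finite ∧ IsConnFull G C D := by
  classical
  have := hC.fintype
  obtain ⟨a⟩ := hA.connected.nonempty
  have hfull : ∀ c : C, ∃ a : A, G.Adj c a := fun c =>
    let ⟨a, ha, hca⟩ := hA.full c c.2
    ⟨⟨a, ha⟩, hca⟩
  choose f hf using hfull
  obtain ⟨t, hft, ht⟩ := extend_finset_to_connected hA.connected.preconnected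
    (t := insert a (Finset.univ.image f)) (Finset.insert_nonempty _ _)
  refine ⟨Subtype.val '' (t : Set A), by simp, t.finite_toSet.image _, ?_, fun c hc => ?_⟩
  · exact ht.map (H := G.induce (Subtype.val '' (t : Set A)))
      ⟨fun v => ⟨v.1.1, v.1, v.2, rfl⟩, id⟩ (by rintro ⟨_, v, hv, rfl⟩; exact ⟨⟨v, hv⟩, rfl⟩)
  · exact ⟨f ⟨c, hc⟩, ⟨f ⟨c, hc⟩, hft (by simp), rfl⟩, hf ⟨c, hc⟩⟩

lemma IsConnFull.exists_minimal_subset (hA : IsConnFull G C A) (hC : C.Finite) :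
    ∃ D ⊆ A, D.Finite ∧ Minimal (IsConnFull G C) D := by
  obtain ⟨E, hEA, hE, hEC⟩ := hA.exists_finite_subset hC
  obtain ⟨D, hDE, hD⟩ := (hE.finite_subsets.subset Set.inter_subset_left).exists_le_minimal
    (s := {D | D ⊆ E} ∩ {D | IsConnFull G C D}) ⟨Set.Subset.rfl, hEC⟩
  exact ⟨D, hDE.trans hEA, hE.subset hDE, hD.prop.2, fun F hF hFD =>
    hD.le_of_le ⟨hFD.trans hDE, hF⟩ hFD⟩

end FullComponent

theorem statement10_general {V : Type} (G : SimpleGraph V) (hG : ThreePathFree G)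
    (hW : TwoWheelsNestedOrCousin G) (C : Set V) (hcard : 2 ≤ C.ncard)
    (hind : ∀ x ∈ C, ∀ y ∈ C, ¬G.Adj x y)
    (A B : Set V) (hA : IsFullComponent G C A) (hB : IsFullComponent G C B) (hAB : A ≠ B) :
    ∃ x ∈ C, ∃ y ∈ C, x ≠ y ∧ ∃ (pA pB : G.Walk x y),
      IsInducedPathW G pA ∧ IsInducedPathW G pB ∧
      (∀ w ∈ pA.support, w ≠ x → w ≠ y → w ∈ A) ∧
      (∀ w ∈ pB.support, w ≠ x → w ≠ y → w ∈ B) ∧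
      (∀ c ∈ C, c ≠ x → c ≠ y →
        (∃ w ∈ pA.support, w ≠ x ∧ w ≠ y ∧ G.Adj c w) ∧
        (∃ w ∈ pB.support, w ≠ x ∧ w ≠ y ∧ G.Adj c w)) ∧
      (∃ (m q : ℕ) (g : ZMod m → V) (c : Fin (C.ncard - 2) → V),
        IsSpanWheel G (C.ncard - 2) m q g c ∧
        Set.range g = {w : V | w ∈ pA.support ∨ w ∈ pB.support} ∧
        g 0 = x ∧ g (q : ZMod m) = y ∧
        Set.range c = C \ {x, y}) := by
  have hC : C.Finite := Set.finite_of_ncard_pos (by omega)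
  obtain ⟨A', hA', hAfin, hAmin⟩ := hA.isConnFull.exists_minimal_subset hC
  obtain ⟨B', hB', hBfin, hBmin⟩ := hB.isConnFull.exists_minimal_subset hC
  have h := (hA.indepSeparation hB hAB hind).mono hA' hB'
  obtain ⟨x, hx, y, hy, hxy, ⟨n, p, hp, rfl, rfl, hAp⟩, m, q, hq, h0, hm, hBq⟩ :=
    exists_common_ends_of_minimal hG hW h hAfin hBfin hAmin hBmin
      ((Set.one_lt_ncard_iff_nontrivial_and_finite.1 hcard).1)
  obtain ⟨pA, hpA, hsuppA, hintA⟩ := hp.exists_isInducedPathW hAp rfl rfl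
  obtain ⟨pB, hpB, hsuppB, hintB⟩ := hq.exists_isInducedPathW hBq h0 hm
  obtain ⟨c, hwheel, hrange⟩ := exists_isSpanWheel hp hq hG hW h hC h0.symm hm.symm hx hy hxy hAp
    hBq hAmin.prop.full hBmin.prop.full
  have hpair := hp.isHolePair hq h h0.symm hm.symm
  refine ⟨p 0, hx, p n, hy, hxy, pA, pB, hpA, hpB,
    fun w hw hwx hwy => hA' ((hintA w).2 ⟨hw, hwx, hwy⟩),
    fun w hw hwx hwy => hB' ((hintB w).2 ⟨hw, hwx, hwy⟩), fun z hz _ _ => ⟨?_, ?_⟩,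
    n + m, n, holeMap n m p q, c, hwheel, ?_, ?_, hpair.holeMap_left le_rfl, hrange⟩
  · obtain ⟨a, ha, hza⟩ := hAmin.prop.full z hz
    exact ⟨a, ((hintA a).1 ha).1, ((hintA a).1 ha).2.1, ((hintA a).1 ha).2.2, hza⟩
  · obtain ⟨b, hb, hzb⟩ := hBmin.prop.full z hz
    exact ⟨b, ((hintB b).1 hb).1, ((hintB b).1 hb).2.1, ((hintB b).1 hb).2.2, hzb⟩
  · ext w
    rw [hpair.range_holeMap, Set.mem_ofPred_eq, hsuppA, hsuppB, Set.mem_union]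
  · simpa using hpair.holeMap_left n.zero_le

/-- Let `G ∈ 𝒞`, let `C` be a minimal separator of size at least 2 that is
an independent set and let `A, B` be distinct components of `G ∖ C` full to `C`. Then there
are `x, y ∈ C` and chordless paths `P_A`, `P_B` as in Statement 9 such that moreover
`V(P_A) ∪ V(P_B)` induces a hole `H` and `(H, C ∖ {x,y})` is a `(|C|-2)`-span-wheel. -/
theorem statement10 (G : SimpleGraph V) (hG : InClassC G)
    (C : Set V) (hmin : MinSeparator G C) (hcard : 2 ≤ C.ncard)
    (hind : ∀ x ∈ C, ∀ y ∈ C, ¬G.Adj x y)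
    (A B : Set V) (hA : IsFullComponent G C A) (hB : IsFullComponent G C B) (hAB : A ≠ B) :
    ∃ x ∈ C, ∃ y ∈ C, x ≠ y ∧ ∃ (pA pB : G.Walk x y),
      IsInducedPathW G pA ∧ IsInducedPathW G pB ∧
      (∀ w ∈ pA.support, w ≠ x → w ≠ y → w ∈ A) ∧
      (∀ w ∈ pB.support, w ≠ x → w ≠ y → w ∈ B) ∧
      (∀ c ∈ C, c ≠ x → c ≠ y →
        (∃ w ∈ pA.support, w ≠ x ∧ w ≠ y ∧ G.Adj c w) ∧
        (∃ w ∈ pB.support, w ≠ x ∧ w ≠ y ∧ G.Adj c w)) ∧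
      (∃ (m q : ℕ) (g : ZMod m → V) (c : Fin (C.ncard - 2) → V),
        IsSpanWheel G (C.ncard - 2) m q g c ∧
        Set.range g = {w : V | w ∈ pA.support ∨ w ∈ pB.support} ∧
        g 0 = x ∧ g (q : ZMod m) = y ∧
        Set.range c = C \ {x, y}) :=
  statement10_general G ⟨hG.1, hG.2.1, hG.2.2.1⟩ hG.2.2.2.2 C hcard hind A B hA hB hAB
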